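/- Every 5-regular graph G is independent in the generic 3-dimensional rigidity matroid if and only if G is 3-sparse, i.e., every set X of at least 3 vertices induces at most 3|X| - 6 edges. In particular, the rank of the rigidity matrix R_3(G,p) at a generic configuration p equals the number of edges of G whenever G is 5-regular and 3-sparse. -/

import Mathlib

open Finset

variable {V : Type*} [Fintype V] [DecidableEq V]

/-- `i(X)`: the number of edges of `G` with both endpoints in `X`. -/
def edgesWithin (G : SimpleGraph V) [DecidableRel G.Adj] (X : Finset V) : ℕ :=
  ((X ×ˢ X).filter fun p => G.Adj p.1 p.2).card / 2

/-- `d(X,Y)`: the number of edges of `G` with one endpoint in `X \ Y` and the other in `Y \ X`. -/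
def edgesBetween (G : SimpleGraph V) [DecidableRel G.Adj] (X Y : Finset V) : ℕ :=
  (((X \ Y) ×ˢ (Y \ X)).filter fun p => G.Adj p.1 p.2).card

/-- `G` is 3-sparse: `i(X) ≤ 3|X| - 6` for all `X` with `|X| ≥ 3`. -/
def Sparse3 (G : SimpleGraph V) [DecidableRel G.Adj] : Prop :=
  ∀ X : Finset V, 3 ≤ X.card → edgesWithin G X + 6 ≤ 3 * X.card

/-- The set of common neighbours of `u` and `v`. -/
def commonNbrs (G : SimpleGraph V) [DecidableRel G.Adj] (u v : V) : Finset V :=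
  Finset.univ.filter fun t => G.Adj u t ∧ G.Adj v t

/-- The row of the rigidity matrix R_3(G,p) corresponding to an edge e = uv,
viewed as a vector in the space of maps V → ℝ³: its value at u is p u - p v,
its value at v is p v - p u, and it is zero elsewhere. -/
noncomputable def rigidityRow (p : V → Fin 3 → ℝ) (e : Sym2 V) : V → Fin 3 → ℝ :=
  fun w i => if h : w ∈ e then p w i - p (Sym2.Mem.other h) i else 0

/-!
A generically independent graph satisfies Maxwell's count, which is 3-sparsity. Conversely, suppose
that a sparse graph of maximum degree at most five is dependent; then it contains a circuit `C`, all
of whose nonzero degrees turn out to be five. The five neighbours of a vertex `v` of `C` carry a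
unique affine dependence `α`. Since moving `v` to an arbitrary point keeps `C` dependent, any two
infinitesimal motions `q` of `C - v` satisfy bilinear identities between their strains on the
neighbours `a` of `v` and their moments `∑ i, α i * ((p i - p a) ⬝ᵥ q i)`. Together with sparsity
these force all the moments to vanish, and hence every equilibrium stress of `C` has zero row sums.

Having no nonzero stress with zero row sums is a Zariski-open condition, so a contradiction arises
from a single special configuration without such stresses: place one neighbour of `v` at the
centroid of three others. Each row of a stress with zero row sums is an affine dependence of the
neighbours, so one vanishing entry kills the whole row, and vanishing propagates along edges. It can
only be stopped at `v` and one further vertex, but two vertices do not separate `C`.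
-/

section Counting

open SimpleGraph

variable {W : Type*}

open Classical in
/-- The ordered pairs of adjacent vertices of `X`: every edge inside `X` is counted twice. -/
noncomputable def arcsIn (F : SimpleGraph W) (X : Finset W) : Finset (W × W) :=
  {e ∈ X ×ˢ X | F.Adj e.1 e.2}

open Classical in
/-- The number of neighbours of `i` in `X`, as an integer. -/
noncomputable def degIn (F : SimpleGraph W) (X : Finset W) (i : W) : ℤ :=
  #{j ∈ X | F.Adj i j}

/-- Twice the quantity `3|X| - i(X)`; arcs are counted instead of edges to avoid halving. -/
noncomputable def dof (F : SimpleGraph W) (X : Finset W) : ℤ := 6 * #X - #(arcsIn F X)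

/-- 3-sparsity, `i(X) ≤ 3|X| - 6`, in terms of `dof`. -/
def IsSparse (F : SimpleGraph W) : Prop := ∀ X : Finset W, 3 ≤ #X → 12 ≤ dof F X

theorem mem_arcsIn {F : SimpleGraph W} {X : Finset W} {e : W × W} :
    e ∈ arcsIn F X ↔ (e.1 ∈ X ∧ e.2 ∈ X) ∧ F.Adj e.1 e.2 := by
  simp [arcsIn]

theorem degIn_nonneg (F : SimpleGraph W) (X : Finset W) (i : W) : 0 ≤ degIn F X i :=
  Int.natCast_nonneg _

theorem degIn_eq_zero {F : SimpleGraph W} {X : Finset W} {i : W} (h : ∀ j ∈ X, ¬ F.Adj i j) :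
    degIn F X i = 0 := by
  simpa [degIn, filter_eq_empty_iff] using h

theorem degIn_le_card (F : SimpleGraph W) (X : Finset W) (i : W) : degIn F X i ≤ #X := by
  classical exact Nat.cast_le.2 (card_filter_le _ _)

theorem degIn_mono_right (F : SimpleGraph W) {X Y : Finset W} (h : X ⊆ Y) (i : W) :
    degIn F X i ≤ degIn F Y i := by
  classical exact Nat.cast_le.2 (card_le_card (filter_subset_filter _ h))

theorem card_le_degIn {F : SimpleGraph W} {X T : Finset W} {z : W} (hT : ∀ y ∈ T, F.Adj z y)
    (hTX : T ⊆ X) : #T ≤ degIn F X z := by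
  classical exact Nat.cast_le.2 (card_le_card fun y hy => mem_filter.2 ⟨hTX hy, hT y hy⟩)

theorem degIn_lt_card (F : SimpleGraph W) {X : Finset W} {z : W} (hz : z ∈ X) :
    degIn F X z < #X := by
  classical exact Nat.cast_lt.2 (card_lt_card
    ((filter_subset _ _).ssubset_of_not_subset fun h => F.irrefl (mem_filter.1 (h hz)).2))

theorem sum_degIn (F : SimpleGraph W) (X : Finset W) : ∑ i ∈ X, degIn F X i = #(arcsIn F X) := by
  simp only [arcsIn, degIn, card_filter, sum_product]
  push_cast
  rfl

theorem arcsIn_subset_arcsIn {F F' : SimpleGraph W} (h : F ≤ F') (X : Finset W) :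
    arcsIn F X ⊆ arcsIn F' X := fun _ he =>
  mem_arcsIn.2 ((mem_arcsIn.1 he).imp_right fun hadj => h hadj)

theorem dof_anti {F F' : SimpleGraph W} (h : F ≤ F') (X : Finset W) : dof F' X ≤ dof F X := by
  have := card_le_card (arcsIn_subset_arcsIn h X)
  unfold dof
  omega

theorem dof_congr {F F' : SimpleGraph W} {X : Finset W}
    (h : ∀ i ∈ X, ∀ j ∈ X, (F.Adj i j ↔ F'.Adj i j)) : dof F X = dof F' X := by
  have : arcsIn F X = arcsIn F' X := by
    ext ⟨i, j⟩
    simp only [mem_arcsIn]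
    exact and_congr_right fun hij => h i hij.1 j hij.2
  rw [dof, dof, this]

theorem IsSparse.mono {F F' : SimpleGraph W} (hs : IsSparse F') (h : F ≤ F') : IsSparse F :=
  fun X hX => (hs X hX).trans (dof_anti h X)

theorem card_offDiag_eq (X : Finset W) : (#X.offDiag : ℤ) = #X * (#X - 1) := by
  classical
  rw [offDiag_card, Nat.cast_sub (Nat.le_mul_self _)]
  push_cast
  ring

theorem arcsIn_subset_offDiag (F : SimpleGraph W) (X : Finset W) :
    arcsIn F X ⊆ X.offDiag := fun _ he => by
  have := mem_arcsIn.1 he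
  exact mem_offDiag.2 ⟨this.1.1, this.1.2, this.2.ne⟩

theorem card_mul_sub_le_dof (F : SimpleGraph W) (X : Finset W) :
    6 * (#X : ℤ) - #X * (#X - 1) ≤ dof F X := by
  classical
  rw [← card_offDiag_eq]
  exact sub_le_sub_left (Nat.cast_le.2 (card_le_card (arcsIn_subset_offDiag F X))) _

theorem dof_of_isClique {F : SimpleGraph W} {X : Finset W} (h : F.IsClique X) :
    dof F X = 6 * #X - #X * (#X - 1) := by
  classical
  have : arcsIn F X = X.offDiag := (arcsIn_subset_offDiag F X).antisymm fun e he => by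
    have := mem_offDiag.1 he
    exact mem_arcsIn.2 ⟨⟨this.1, this.2.1⟩, h this.1 this.2.1 this.2.2⟩
  rw [dof, this, card_offDiag_eq]

theorem twelve_le_dof_of_card_eq_three (F : SimpleGraph W) {X : Finset W} (h : #X = 3) :
    12 ≤ dof F X := by
  simpa [h] using card_mul_sub_le_dof F X

section DecidableEq

variable [DecidableEq W]

theorem degIn_insert_of_adj {F : SimpleGraph W} {X : Finset W} {i t : W} (ht : t ∉ X)
    (h : F.Adj i t) : degIn F (insert t X) i = degIn F X i + 1 := by
  simp [degIn, filter_insert, h, ht]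

theorem degIn_insert_of_not_adj {F : SimpleGraph W} {X : Finset W} {i t : W}
    (h : ¬ F.Adj i t) : degIn F (insert t X) i = degIn F X i := by
  simp [degIn, filter_insert, h]

theorem degIn_union_add_inter (F : SimpleGraph W) (X Y : Finset W) (i : W) :
    degIn F (X ∪ Y) i + degIn F (X ∩ Y) i = degIn F X i + degIn F Y i := by
  classical
  have := card_union_add_card_inter {j ∈ X | F.Adj i j} {j ∈ Y | F.Adj i j}
  rw [← filter_union, ← filter_inter_distrib] at this
  unfold degIn
  convert congrArg (Nat.cast : ℕ → ℤ) this using 1 <;> push_cast <;> rfl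

theorem dof_insert (F : SimpleGraph W) {X : Finset W} {t : W} (h : t ∉ X) :
    dof F (insert t X) = dof F X + 6 - 2 * degIn F X t := by
  classical
  have hsum : ∑ x ∈ X, degIn F (insert t X) x = ∑ x ∈ X, degIn F X x + degIn F X t := by
    have hx : ∀ x ∈ X, degIn F (insert t X) x = degIn F X x + if F.Adj t x then 1 else 0 := by
      intro x _
      by_cases hxt : F.Adj x t
      · rw [degIn_insert_of_adj h hxt, if_pos hxt.symm]
      · rw [degIn_insert_of_not_adj hxt, if_neg fun h' => hxt h'.symm, add_zero]
    rw [sum_congr rfl hx, sum_add_distrib, sum_boole, degIn]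
  rw [dof, dof, ← sum_degIn, ← sum_degIn, sum_insert h, hsum, card_insert_of_notMem h,
    degIn_insert_of_not_adj (F.irrefl)]
  push_cast
  ring

theorem dof_erase (F : SimpleGraph W) {X : Finset W} {t : W} (h : t ∈ X) :
    dof F X = dof F (X.erase t) + 6 - 2 * degIn F X t := by
  have hdof := dof_insert F (notMem_erase t X)
  have hdeg := degIn_insert_of_not_adj (X := X.erase t) (F.irrefl (v := t))
  rw [insert_erase h] at hdof hdeg
  rw [hdof, hdeg]

theorem dof_union_add_inter_le (F : SimpleGraph W) (X Y : Finset W) :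
    dof F (X ∪ Y) + dof F (X ∩ Y) ≤ dof F X + dof F Y := by
  have hcard := card_union_add_card_inter X Y
  have hinter : arcsIn F (X ∩ Y) = arcsIn F X ∩ arcsIn F Y := by
    ext e
    simp only [mem_arcsIn, mem_inter]
    tauto
  have hunion : arcsIn F X ∪ arcsIn F Y ⊆ arcsIn F (X ∪ Y) := fun e he => by
    simp only [mem_arcsIn, mem_union] at he ⊢
    tauto
  have harcs := card_union_add_card_inter (arcsIn F X) (arcsIn F Y)
  have := card_le_card hunion
  rw [← hinter] at harcs
  unfold dof
  omega

theorem IsSparse.dof_union_and_inter {F : SimpleGraph W} (hs : IsSparse F) {X Y : Finset W}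
    (hX : dof F X = 12) (hY : dof F Y = 12) (h : 3 ≤ #(X ∩ Y)) :
    dof F (X ∪ Y) = 12 ∧ dof F (X ∩ Y) = 12 := by
  have h₁ := dof_union_add_inter_le F X Y
  have h₂ := hs _ h
  have h₃ := hs (X ∪ Y) (h.trans (card_le_card (inter_subset_left.trans subset_union_left)))
  omega

end DecidableEq

theorem even_dof (F : SimpleGraph W) (X : Finset W) : Even (dof F X) := by
  classical
  induction X using Finset.induction_on with
  | empty => simp [dof, arcsIn]
  | insert t X h ih =>
    rw [dof_insert F h]
    exact (ih.add (by decide)).sub (even_two_mul _)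

theorem isSparse_of_isolated {F : SimpleGraph W} {t : W} (ht : ∀ j, ¬ F.Adj t j)
    (h : ∀ X : Finset W, 3 ≤ #X → t ∉ X → 12 ≤ dof F X) : IsSparse F := by
  classical
  intro X hX
  by_cases htX : t ∈ X
  · have hdof := dof_erase F htX
    have hcard : #(X.erase t) = #X - 1 := card_erase_of_mem htX
    rw [degIn_eq_zero fun j _ => ht j] at hdof
    rcases (by omega : 3 ≤ #(X.erase t) ∨ #(X.erase t) = 2) with h₃ | h₂
    · have := h _ h₃ (notMem_erase t X)
      omega
    · have := card_mul_sub_le_dof F (X.erase t)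
      rw [h₂] at this
      omega
  · exact h X hX htX

theorem deleteIncidenceSet_lt {F : SimpleGraph W} {t j : W} (h : F.Adj t j) :
    F.deleteIncidenceSet t < F :=
  (F.deleteIncidenceSet_le t).lt_of_not_ge fun hle =>
    ((deleteIncidenceSet_adj ..).1 (hle h)).2.1 rfl

theorem sdiff_edge_lt {F : SimpleGraph W} {a b : W} (h : F.Adj a b) : F \ edge a b < F :=
  sdiff_le.lt_of_not_ge fun hle =>
    ((sdiff_adj ..).1 (hle h)).2 ((adj_edge ..).2 ⟨rfl, h.ne⟩)

theorem dof_deleteIncidenceSet (F : SimpleGraph W) {t : W} {X : Finset W} (h : t ∉ X) :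
    dof (F.deleteIncidenceSet t) X = dof F X := by
  refine dof_congr fun i hi j hj => ?_
  rw [deleteIncidenceSet_adj]
  exact ⟨And.left, fun hij => ⟨hij, fun e => h (e ▸ hi), fun e => h (e ▸ hj)⟩⟩

theorem dof_sup_edge_of_not_mem (F : SimpleGraph W) {a b : W} {X : Finset W}
    (h : ¬ (a ∈ X ∧ b ∈ X)) : dof (F ⊔ edge a b) X = dof F X := by
  refine dof_congr fun i hi j hj => ?_
  rw [sup_adj, edge_adj]
  refine ⟨?_, Or.inl⟩
  rintro (hij | ⟨⟨rfl, rfl⟩ | ⟨rfl, rfl⟩, -⟩)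
  exacts [hij, absurd ⟨hi, hj⟩ h, absurd ⟨hj, hi⟩ h]

theorem dof_sup_edge {F : SimpleGraph W} {a b : W} (hab : a ≠ b) (hn : ¬ F.Adj a b)
    {X : Finset W} (ha : a ∈ X) (hb : b ∈ X) : dof (F ⊔ edge a b) X = dof F X - 2 := by
  classical
  have hn' : ¬ F.Adj b a := fun h => hn h.symm
  have : arcsIn (F ⊔ edge a b) X = insert (a, b) (insert (b, a) (arcsIn F X)) := by
    ext ⟨i, j⟩
    simp only [mem_arcsIn, mem_insert, sup_adj, edge_adj, Prod.mk.injEq]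
    refine ⟨by tauto, ?_⟩
    rintro (⟨rfl, rfl⟩ | ⟨rfl, rfl⟩ | h)
    · simp [ha, hb, hab]
    · simp [ha, hb, hab.symm]
    · exact ⟨h.1, Or.inl h.2⟩
  rw [dof, this, card_insert_of_notMem (by simp [mem_arcsIn, hab, hn]),
    card_insert_of_notMem (by simp [mem_arcsIn, hn'])]
  unfold dof
  push_cast
  ring

theorem fourteen_le_dof_of_not_adj {F : SimpleGraph W} {X : Finset W} {a b : W} (h₃ : 3 ≤ #X)
    (h₄ : #X ≤ 4) (ha : a ∈ X) (hb : b ∈ X) (hab : a ≠ b) (hn : ¬ F.Adj a b) : 14 ≤ dof F X := by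
  have h := card_mul_sub_le_dof (F ⊔ edge a b) X
  rw [dof_sup_edge hab hn ha hb] at h
  rcases (by omega : #X = 3 ∨ #X = 4) with h' | h' <;> rw [h'] at h <;> omega

theorem dof_sub_two_le_dof_sup_edge (F : SimpleGraph W) (a b : W) (X : Finset W) :
    dof F X - 2 ≤ dof (F ⊔ edge a b) X := by
  by_cases hab : a = b
  · rw [hab, sup_edge_self]
    omega
  by_cases hn : F.Adj a b
  · rw [sup_edge_of_adj F hn]
    omega
  by_cases h : a ∈ X ∧ b ∈ X
  · rw [dof_sup_edge hab hn h.1 h.2]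
  · rw [dof_sup_edge_of_not_mem F h]
    omega

section Fintype

variable [Fintype W]

open Classical in
/-- The neighbour set of `t` as a finset, without decidability of the adjacency relation. -/
noncomputable def nbrs (F : SimpleGraph W) (t : W) : Finset W := {j | F.Adj t j}

open Classical in
/-- The support of `F`, i.e. its non-isolated vertices. -/
noncomputable def supp (F : SimpleGraph W) : Finset W := {i | ∃ j, F.Adj i j}

theorem mem_nbrs {F : SimpleGraph W} {i j : W} : j ∈ nbrs F i ↔ F.Adj i j := by simp [nbrs]

theorem mem_supp {F : SimpleGraph W} {i : W} : i ∈ supp F ↔ ∃ j, F.Adj i j := by simp [supp]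

theorem degIn_eq_card_inter [DecidableEq W] (F : SimpleGraph W) (X : Finset W) (i : W) :
    degIn F X i = #(X ∩ nbrs F i) := by
  rw [degIn, ← filter_mem_eq_inter]
  congr 2
  ext j
  simp [mem_nbrs]

theorem degIn_add_card_le {F : SimpleGraph W} {X T : Finset W} {z : W} (hT : ∀ y ∈ T, F.Adj z y)
    (hXT : ∀ y ∈ T, y ∉ X) : degIn F X z + #T ≤ #(nbrs F z) := by
  classical
  have hdisj : Disjoint (X ∩ nbrs F z) T :=
    disjoint_right.2 fun y hy h => hXT y hy (mem_inter.1 h).1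
  have hsub : X ∩ nbrs F z ∪ T ⊆ nbrs F z :=
    union_subset inter_subset_right fun y hy => mem_nbrs.2 (hT y hy)
  have := card_le_card hsub
  rw [card_union_of_disjoint hdisj] at this
  rw [degIn_eq_card_inter]
  exact_mod_cast this

theorem degIn_le_card_nbrs (F : SimpleGraph W) (X : Finset W) (i : W) :
    degIn F X i ≤ #(nbrs F i) :=
  degIn_mono_right F (subset_univ X) i

theorem nbrs_subset_nbrs {F F' : SimpleGraph W} (h : F ≤ F') (i : W) : nbrs F i ⊆ nbrs F' i :=
  fun _ hj => mem_nbrs.2 (h (mem_nbrs.1 hj))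

theorem adj_of_card_nbrs_le {F F' : SimpleGraph W} (h : F ≤ F') {i j : W}
    (hc : #(nbrs F' i) ≤ #(nbrs F i)) (hij : F'.Adj i j) : F.Adj i j := by
  rwa [← mem_nbrs, eq_of_subset_of_card_le (nbrs_subset_nbrs h i) hc, mem_nbrs]

theorem supp_subset_supp {F F' : SimpleGraph W} (h : F ≤ F') : supp F ⊆ supp F' := fun _ hi =>
  mem_supp.2 ((mem_supp.1 hi).imp fun _ hj => h hj)

end Fintype

end Counting

section GenericSpecialization

open MvPolynomial

-- Injectivity of `M` is the nonvanishing of the Gram determinant `det (Mᵀ M)`, a polynomial in the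
-- entries of `M`; this is where an ordered field is needed.
theorem mulVec_injective_of_algebraicIndependent {σ K E R 𝕜 : Type*} [Finite K] [Fintype E]
    [CommRing R] [Field 𝕜] [LinearOrder 𝕜] [IsStrictOrderedRing 𝕜] [Algebra R 𝕜]
    (M : Matrix K E (MvPolynomial σ R)) {x x₀ : σ → 𝕜} (hx₀ : AlgebraicIndependent R x₀)
    (hx : Function.Injective (M.map (aeval x)).mulVec) :
    Function.Injective (M.map (aeval x₀)).mulVec := by
  classical
  have := Fintype.ofFinite K
  have gram (y : σ → 𝕜) : aeval y (M.transpose * M).det =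
      ((M.map (aeval y)).transpose * M.map (aeval y)).det := by
    rw [AlgHom.map_det, AlgHom.mapMatrix_apply, Matrix.map_mul, Matrix.transpose_map]
  have hx_inj (v : E → 𝕜) (hv : (M.map (aeval x)).mulVec v = 0) : v = 0 :=
    hx (hv.trans (Matrix.mulVec_zero _).symm)
  have hdet : (M.transpose * M).det ≠ 0 := by
    intro h
    obtain ⟨v, hv, hMv⟩ := Matrix.exists_mulVec_eq_zero_iff.2 ((gram x).symm.trans (by simp [h]))
    refine hv (hx_inj v (dotProduct_self_eq_zero.1 ?_))
    rw [Matrix.dotProduct_mulVec, Matrix.vecMul_mulVec, ← Matrix.dotProduct_mulVec, hMv,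
      dotProduct_zero]
  refine (injective_iff_map_eq_zero (Matrix.mulVecLin _)).2 fun v hv => ?_
  by_contra hv0
  refine hdet ((injective_iff_map_eq_zero _).1 hx₀ _ ?_)
  rw [gram]
  refine Matrix.exists_mulVec_eq_zero_iff.1 ⟨v, hv0, ?_⟩
  rw [Matrix.mulVecLin_apply] at hv
  rw [← Matrix.mulVec_mulVec, hv, Matrix.mulVec_zero]

/-- The matrix whose columns are the homogeneous coordinates `(1, q i)` of the points `q i`. -/
def homogeneousMatrix {ι κ R : Type*} [One R] (q : ι → κ → R) : Matrix (Option κ) ι R :=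
  Matrix.of fun r i => r.elim 1 (q i)

theorem affineIndependent_iff_homogeneousMatrix {ι κ 𝕜 : Type*} [Fintype ι] [Field 𝕜]
    (q : ι → κ → 𝕜) :
    AffineIndependent 𝕜 q ↔ Function.Injective (homogeneousMatrix q).mulVec := by
  rw [← Matrix.coe_mulVecLin, injective_iff_map_eq_zero, affineIndependent_iff_of_fintype]
  have hzero (μ : ι → 𝕜) : (homogeneousMatrix q).mulVecLin μ = 0 ↔
      ∑ i, μ i = 0 ∧ ∑ i, μ i • q i = 0 := by
    simp [funext_iff, Option.forall, homogeneousMatrix, Matrix.mulVec, dotProduct, mul_comm,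
      Finset.sum_apply]
  refine forall_congr' fun μ => ?_
  rw [hzero, and_imp]
  refine forall_congr' fun hμ => ?_
  rw [univ.weightedVSub_eq_weightedVSubOfPoint_of_sum_eq_zero μ q hμ 0]
  simp only [weightedVSubOfPoint_apply, vsub_eq_sub, sub_zero, _root_.funext_iff, Pi.zero_apply]

theorem affineIndependent_of_algebraicIndependent {σ ι κ R 𝕜 : Type*} [Finite ι] [Finite κ]
    [CommRing R] [Field 𝕜] [LinearOrder 𝕜] [IsStrictOrderedRing 𝕜] [Algebra R 𝕜]
    (q : ι → κ → MvPolynomial σ R) {x x₀ : σ → 𝕜} (hx₀ : AlgebraicIndependent R x₀)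
    (hx : AffineIndependent 𝕜 fun i k => aeval x (q i k)) :
    AffineIndependent 𝕜 fun i k => aeval x₀ (q i k) := by
  have := Fintype.ofFinite ι
  have hmap (y : σ → 𝕜) : homogeneousMatrix (fun i k => aeval y (q i k)) =
      (homogeneousMatrix q).map (aeval y) := by
    ext (_ | k) i <;> simp [homogeneousMatrix]
  rw [affineIndependent_iff_homogeneousMatrix, hmap] at hx ⊢
  exact mulVec_injective_of_algebraicIndependent _ hx₀ hx

theorem exists_algebraicIndependent_rat_real (σ : Type*) [Countable σ] :
    ∃ x : σ → ℝ, AlgebraicIndependent ℚ x := by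
  obtain ⟨s, hs⟩ := exists_isTranscendenceBasis ℚ ℝ
  have : Nonempty s := hs.nonempty_iff_transcendental.2
    ⟨_, fun h => transcendental_liouvilleNumber (m := 2) le_rfl
      ((IsFractionRing.isAlgebraic_iff ℤ ℚ ℝ).2 h)⟩
  have : Infinite s := by
    by_contra hfin
    rw [not_infinite_iff_finite] at hfin
    have hcard : Cardinal.mk ℝ = Cardinal.aleph0 := by simpa using hs.lift_cardinalMk_eq_max_lift
    exact Cardinal.aleph0_lt_continuum.ne' (Cardinal.mk_real.symm.trans hcard)
  obtain ⟨f, hf⟩ := exists_injective_nat σ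
  exact ⟨fun i => (Infinite.natEmbedding s (f i) : ℝ),
    hs.1.comp _ ((Infinite.natEmbedding s).injective.comp hf)⟩

/-- The coordinates of the configuration `p` are algebraically independent over `ℚ`. -/
def Generic {W : Type*} (p : W → Fin 3 → ℝ) : Prop :=
  AlgebraicIndependent ℚ fun x : W × Fin 3 => p x.1 x.2

theorem exists_generic (W : Type*) [Countable W] : ∃ p : W → Fin 3 → ℝ, Generic p := by
  obtain ⟨x, hx⟩ := exists_algebraicIndependent_rat_real (W × Fin 3)
  exact ⟨fun i k => x (i, k), hx⟩

theorem Generic.affineIndependent {W : Type*} {p : W → Fin 3 → ℝ} (hp : Generic p) {S : Finset W}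
    (hS : #S ≤ 4) : AffineIndependent ℝ fun i : S => p i := by
  classical
  obtain ⟨b⟩ := AffineBasis.exists_affineBasis_of_finiteDimensional (ι := Fin 4) (k := ℝ)
    (P := Fin 3 → ℝ) (by simp)
  obtain ⟨f⟩ := Function.Embedding.nonempty_of_card_le (α := S) (β := Fin 4) (by simpa using hS)
  let x : W × Fin 3 → ℝ := fun y => if h : y.1 ∈ S then b (f ⟨y.1, h⟩) y.2 else 0
  have hx : AffineIndependent ℝ fun (i : S) k => aeval x (X ((i : W), k) : MvPolynomial _ ℚ) := by
    have hb : (fun (i : S) k => aeval x (X ((i : W), k) : MvPolynomial _ ℚ)) = b ∘ f := by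
      ext i k
      simp [x]
    rw [hb]
    exact b.ind.comp_embedding f
  simpa using affineIndependent_of_algebraicIndependent _ hp hx

theorem eq_zero_of_affineIndependent {W κ 𝕜 : Type*} [Fintype W] [Field 𝕜] {p : W → κ → 𝕜}
    {S : Finset W} (h : AffineIndependent 𝕜 fun i : S => p i) {μ : W → 𝕜}
    (hμ : ∀ i ∉ S, μ i = 0) (hsum : ∑ i, μ i = 0) (hbary : ∀ k, ∑ i, μ i * p i k = 0) :
    μ = 0 := by
  have hrestrict (f : W → 𝕜) : ∑ i : S, μ i * f i = ∑ i, μ i * f i := by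
    rw [S.sum_coe_sort fun i => μ i * f i]
    exact sum_subset (subset_univ S) fun i _ hi => by rw [hμ i hi, zero_mul]
  have key := (affineIndependent_iff.1 h) univ (fun i => μ i)
    (by simpa using (hrestrict 1).trans (by simpa using hsum))
    (by ext k; simpa using (hrestrict fun i => p i k).trans (hbary k))
  ext i
  by_cases hi : i ∈ S
  · exact key ⟨i, hi⟩ (mem_univ _)
  · exact hμ i hi

-- The displacements from `p t` vanish at `t`, so giving `t` the weight `-∑ c` turns the balance
-- condition into an affine dependence.
theorem Generic.eq_zero_of_star {W : Type*} [Fintype W] {p : W → Fin 3 → ℝ} (hp : Generic p)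
    {t : W} {T : Finset W} (ht : t ∉ T) (hT : #T ≤ 3) {c : W → ℝ} (hc : ∀ j ∉ T, c j = 0)
    (hbal : ∀ k, ∑ j, c j * (p t k - p j k) = 0) : c = 0 := by
  classical
  have hμ : c - Pi.single t (∑ i, c i) = 0 := by
    refine eq_zero_of_affineIndependent (S := insert t T)
      (hp.affineIndependent (by rw [card_insert_of_notMem ht]; omega)) (fun i hi => ?_) (by simp)
      fun k => ?_
    · rw [mem_insert, not_or] at hi
      simp [hi.1, hc i hi.2]
    · have := hbal k
      simp only [mul_sub, sum_sub_distrib, ← sum_mul] at this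
      simpa [sub_mul, Pi.single_apply, sum_sub_distrib, sub_eq_zero] using (sub_eq_zero.1 this).symm
  ext j
  by_cases hj : j = t
  · rw [hj, hc t ht, Pi.zero_apply]
  · simpa [hj] using congrFun hμ j

end GenericSpecialization

section Stress

open SimpleGraph

variable {W : Type*} [Fintype W]

/-- The `k`-th coordinate of the force exerted at the vertex `i` of the framework on `p` when every
pair `i, j` carries the stress `ω i j`. -/
def load (p : W → Fin 3 → ℝ) (ω : W → W → ℝ) (i : W) (k : Fin 3) : ℝ :=
  ∑ j, ω i j * (p i k - p j k)

/-- `ω` is an equilibrium stress of the framework `(F, p)`: a linear dependence between the rows of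
the rigidity matrix, encoded as a symmetric function which vanishes off the edges of `F`. -/
structure IsStress (p : W → Fin 3 → ℝ) (F : SimpleGraph W) (ω : W → W → ℝ) : Prop where
  symm : ∀ i j, ω i j = ω j i
  eq_zero_of_not_adj : ∀ i j, ¬ F.Adj i j → ω i j = 0
  load_eq_zero : load p ω = 0

/-- The framework `(F, p)` has no nonzero equilibrium stress, i.e. `F` is independent in the
rigidity matroid of `p`. -/
def StressFree (p : W → Fin 3 → ℝ) (F : SimpleGraph W) : Prop := ∀ ω, IsStress p F ω → ω = 0

theorem load_add (p : W → Fin 3 → ℝ) (ω ω' : W → W → ℝ) :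
    load p (ω + ω') = load p ω + load p ω' := by
  ext i k
  simp [load, add_mul, sum_add_distrib]

theorem load_smul (p : W → Fin 3 → ℝ) (c : ℝ) (ω : W → W → ℝ) :
    load p (c • ω) = c • load p ω := by
  ext i k
  simp [load, mul_assoc, mul_sum]

theorem load_sub (p : W → Fin 3 → ℝ) (ω ω' : W → W → ℝ) :
    load p (ω - ω') = load p ω - load p ω' := by
  ext i k
  simp [load, sub_mul, sum_sub_distrib]

namespace IsStress

variable {p : W → Fin 3 → ℝ} {F F' : SimpleGraph W} {ω ω' : W → W → ℝ}

theorem mono (h : F ≤ F') (hω : IsStress p F ω) : IsStress p F' ω :=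
  ⟨hω.symm, fun i j hij => hω.eq_zero_of_not_adj i j fun h' => hij (h h'), hω.load_eq_zero⟩

theorem sub (hω : IsStress p F ω) (hω' : IsStress p F ω') : IsStress p F (ω - ω') where
  symm i j := congrArg₂ (· - ·) (hω.symm i j) (hω'.symm i j)
  eq_zero_of_not_adj i j hij := by
    simp [hω.eq_zero_of_not_adj i j hij, hω'.eq_zero_of_not_adj i j hij]
  load_eq_zero := by rw [load_sub, hω.load_eq_zero, hω'.load_eq_zero, sub_zero]

theorem smul (c : ℝ) (hω : IsStress p F ω) : IsStress p F (c • ω) where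
  symm i j := congrArg (c * ·) (hω.symm i j)
  eq_zero_of_not_adj i j hij := by simp [hω.eq_zero_of_not_adj i j hij]
  load_eq_zero := by rw [load_smul, hω.load_eq_zero, smul_zero]

theorem sdiff_edge (hω : IsStress p F ω) {a b : W} (h : ω a b = 0) :
    IsStress p (F \ edge a b) ω := by
  refine ⟨hω.symm, fun i j hij => ?_, hω.load_eq_zero⟩
  rw [sdiff_adj, not_and_not_right] at hij
  by_cases hF : F.Adj i j
  · rcases ((edge_adj ..).1 (hij hF)).1 with ⟨rfl, rfl⟩ | ⟨rfl, rfl⟩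
    exacts [h, (hω.symm _ _).trans h]
  · exact hω.eq_zero_of_not_adj i j hF

end IsStress

section Circuits

/-- `C` is a circuit of the rigidity matroid of `p`. -/
abbrev IsCircuit (p : W → Fin 3 → ℝ) (C : SimpleGraph W) : Prop :=
  Minimal (fun F => ¬ StressFree p F) C

variable {p : W → Fin 3 → ℝ} {C : SimpleGraph W}

theorem exists_isCircuit_le {F : SimpleGraph W} (h : ¬ StressFree p F) : ∃ C ≤ F, IsCircuit p C :=
  exists_minimal_le_of_wellFoundedLT _ F h

namespace IsCircuit

theorem stressFree_of_lt (hC : IsCircuit p C) {F : SimpleGraph W} (h : F < C) : StressFree p F :=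
  not_not.1 (hC.not_prop_of_lt h)

theorem stress_eq_zero (hC : IsCircuit p C) {ω : W → W → ℝ} (hω : IsStress p C ω) {a b : W}
    (hab : C.Adj a b) (h : ω a b = 0) : ω = 0 :=
  hC.stressFree_of_lt (sdiff_edge_lt hab) ω (hω.sdiff_edge h)

theorem exists_stress_ne_zero (hC : IsCircuit p C) :
    ∃ ω, IsStress p C ω ∧ ∀ i j, C.Adj i j → ω i j ≠ 0 := by
  obtain ⟨ω, hω, hne⟩ : ∃ ω, IsStress p C ω ∧ ω ≠ 0 := by simpa [StressFree] using hC.prop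
  exact ⟨ω, hω, fun i j hij h => hne (hC.stress_eq_zero hω hij h)⟩

theorem exists_adj (hC : IsCircuit p C) : ∃ a b, C.Adj a b := by
  by_contra! h
  exact hC.prop fun ω hω => funext₂ fun i j => hω.eq_zero_of_not_adj i j (h i j)

end IsCircuit

end Circuits

section ZeroExtensions

variable {p : W → Fin 3 → ℝ}

theorem IsStress.deleteIncidenceSet {F : SimpleGraph W} {ω : W → W → ℝ} {t : W}
    (hω : IsStress p F ω) (h : ω t = 0) : IsStress p (F.deleteIncidenceSet t) ω := by
  refine ⟨hω.symm, fun i j hij => ?_, hω.load_eq_zero⟩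
  rw [deleteIncidenceSet_adj] at hij
  by_cases hi : i = t
  · rw [hi, h, Pi.zero_apply]
  by_cases hj : j = t
  · rw [hω.symm, hj, h, Pi.zero_apply]
  exact hω.eq_zero_of_not_adj i j fun hF => hij ⟨hF, hi, hj⟩

theorem stressFree_of_card_nbrs_le_three (hp : Generic p) {F : SimpleGraph W} {t : W}
    (ht : #(nbrs F t) ≤ 3) (hF : StressFree p (F.deleteIncidenceSet t)) : StressFree p F :=
  fun ω hω => hF ω <| hω.deleteIncidenceSet <|
    hp.eq_zero_of_star (T := nbrs F t) (by simp [mem_nbrs]) ht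
      (fun j hj => hω.eq_zero_of_not_adj t j (by rwa [mem_nbrs] at hj))
      fun k => congrFun₂ hω.load_eq_zero t k

theorem IsCircuit.four_le_card_nbrs (hp : Generic p) {C : SimpleGraph W} (hC : IsCircuit p C)
    {t : W} (ht : t ∈ supp C) : 4 ≤ #(nbrs C t) := by
  obtain ⟨j, hj⟩ := mem_supp.1 ht
  by_contra! h
  exact hC.prop (stressFree_of_card_nbrs_le_three hp (Nat.le_of_lt_succ h)
    (hC.stressFree_of_lt (deleteIncidenceSet_lt hj)))

end ZeroExtensions

end Stress

section EdgeWeights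

open SimpleGraph MvPolynomial

variable {W : Type*} {F : SimpleGraph W}

open Classical in
/-- The symmetric weight function on pairs of vertices which takes the value `c e` on each edge `e`
of `F` and vanishes off the edges. -/
noncomputable def extendWeights (c : F.edgeSet → ℝ) (i j : W) : ℝ :=
  if h : F.Adj i j then c ⟨s(i, j), h⟩ else 0

theorem extendWeights_comm (c : F.edgeSet → ℝ) (i j : W) :
    extendWeights c i j = extendWeights c j i := by
  by_cases h : F.Adj i j
  · simp only [extendWeights, dif_pos h, dif_pos h.symm, Sym2.eq_swap]
  · rw [extendWeights, extendWeights, dif_neg h, dif_neg (mt Adj.symm h)]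

theorem extendWeights_of_not_adj (c : F.edgeSet → ℝ) {i j : W} (h : ¬ F.Adj i j) :
    extendWeights c i j = 0 := dif_neg h

theorem extendWeights_eq_zero_iff {c : F.edgeSet → ℝ} : extendWeights c = 0 ↔ c = 0 := by
  refine ⟨fun h => ?_, fun h => by ext i j; simp [extendWeights, h]⟩
  ext ⟨e, he⟩
  induction e using Sym2.ind with
  | _ i j => simpa [extendWeights, show F.Adj i j from he] using congrFun₂ h i j

theorem exists_extendWeights_eq {ω : W → W → ℝ} (hsymm : ∀ i j, ω i j = ω j i)
    (hsupp : ∀ i j, ¬ F.Adj i j → ω i j = 0) : ∃ c : F.edgeSet → ℝ, extendWeights c = ω := by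
  refine ⟨fun e => Sym2.lift ⟨ω, hsymm⟩ e, funext₂ fun i j => ?_⟩
  by_cases h : F.Adj i j
  · simp [extendWeights, h]
  · rw [extendWeights_of_not_adj _ h, hsupp i j h]

variable [Fintype W]

theorem sum_mul_dite_other [DecidableEq W] [Fintype F.edgeSet] (c : F.edgeSet → ℝ) (i : W)
    (h : W → ℝ) : ∑ e, c e * (if hi : i ∈ e.1 then h (Sym2.Mem.other hi) else 0) =
      ∑ j, extendWeights c i j * h j := by
  have hother (e : Sym2 W) : (if hi : i ∈ e then h (Sym2.Mem.other hi) else 0) =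
      ∑ j, if e = s(i, j) then h j else 0 := by
    by_cases hi : i ∈ e
    · have (j : W) : e = s(i, j) ↔ j = Sym2.Mem.other hi := by
        rw [eq_comm (a := j), ← Sym2.congr_right (a := i), Sym2.other_spec hi]
      simp [hi, this]
    · rw [dif_neg hi, sum_eq_zero fun j _ => if_neg ?_]
      rintro rfl
      exact hi (Sym2.mem_mk_left i j)
  simp only [hother, mul_sum]
  rw [sum_comm]
  refine sum_congr rfl fun j _ => ?_
  by_cases hij : F.Adj i j
  · rw [sum_eq_single_of_mem ⟨s(i, j), hij⟩ (mem_univ _) fun e _ he => by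
      rw [if_neg (mt Subtype.ext he), mul_zero]]
    simp [extendWeights, hij]
  · rw [extendWeights_of_not_adj c hij, zero_mul]
    refine sum_eq_zero fun e _ => ?_
    rw [if_neg fun h' : e.1 = s(i, j) => hij (show s(i, j) ∈ F.edgeSet from h' ▸ e.2), mul_zero]

theorem sum_smul_rigidityRow [DecidableEq W] [Fintype F.edgeSet] (p : W → Fin 3 → ℝ)
    (c : F.edgeSet → ℝ) : ∑ e, c e • rigidityRow p e.1 = load p (extendWeights c) := by
  ext i k
  rw [load, ← sum_mul_dite_other c i fun j => p i k - p j k]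
  simp [Finset.sum_apply, rigidityRow]

theorem stressFree_iff_extendWeights {p : W → Fin 3 → ℝ} :
    StressFree p F ↔ ∀ c : F.edgeSet → ℝ, load p (extendWeights c) = 0 → c = 0 := by
  constructor
  · exact fun h c hc => extendWeights_eq_zero_iff.1
      (h _ ⟨extendWeights_comm c, fun _ _ => extendWeights_of_not_adj c, hc⟩)
  · intro h ω hω
    obtain ⟨c, rfl⟩ := exists_extendWeights_eq hω.symm hω.eq_zero_of_not_adj
    exact extendWeights_eq_zero_iff.2 (h c hω.load_eq_zero)

theorem stressFree_iff_linearIndependent [DecidableEq W] {p : W → Fin 3 → ℝ} :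
    StressFree p F ↔ LinearIndependent ℝ fun e : F.edgeSet => rigidityRow p e.1 := by
  have := Fintype.ofFinite F.edgeSet
  simp only [stressFree_iff_extendWeights, Fintype.linearIndependent_iff, sum_smul_rigidityRow,
    _root_.funext_iff (f := (_ : F.edgeSet → ℝ)), Pi.zero_apply]

theorem eq_zero_of_algebraicIndependent {σ κ : Type*} [Finite κ]
    (h : κ → W → W → MvPolynomial σ ℚ) {x x₀ : σ → ℝ} (hx₀ : AlgebraicIndependent ℚ x₀)
    (hx : ∀ c : F.edgeSet → ℝ, (∀ k i, ∑ j, extendWeights c i j * aeval x (h k i j) = 0) → c = 0)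
    {c : F.edgeSet → ℝ} (hc : ∀ k i, ∑ j, extendWeights c i j * aeval x₀ (h k i j) = 0) :
    c = 0 := by
  classical
  have := Fintype.ofFinite F.edgeSet
  let M : Matrix (κ × W) F.edgeSet (MvPolynomial σ ℚ) :=
    Matrix.of fun r e => if hi : r.2 ∈ e.1 then h r.1 r.2 (Sym2.Mem.other hi) else 0
  have hM (y : σ → ℝ) (c : F.edgeSet → ℝ) : (M.map (aeval y)).mulVec c = 0 ↔
      ∀ k i, ∑ j, extendWeights c i j * aeval y (h k i j) = 0 := by
    simp only [_root_.funext_iff, Prod.forall, Pi.zero_apply, ← sum_mul_dite_other, Matrix.mulVec,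
      dotProduct, Matrix.map_apply, M, Matrix.of_apply, apply_dite (aeval y), map_zero, mul_comm]
  have hinj : Function.Injective (M.map (aeval x)).mulVec :=
    (injective_iff_map_eq_zero (Matrix.mulVecLin _)).2 fun c hc => hx c ((hM x c).1 hc)
  exact mulVec_injective_of_algebraicIndependent M hx₀ hinj
    (((hM x₀ c).2 hc).trans (Matrix.mulVec_zero _).symm)

theorem Generic.stressFree {p p₀ : W → Fin 3 → ℝ} (hp₀ : Generic p₀) (h : StressFree p F) :
    StressFree p₀ F := by
  have hload (q : W → Fin 3 → ℝ) (c : F.edgeSet → ℝ) : load q (extendWeights c) = 0 ↔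
      ∀ k i, ∑ j, extendWeights c i j * aeval (fun x : W × Fin 3 => q x.1 x.2)
        (X (i, k) - X (j, k) : MvPolynomial _ ℚ) = 0 := by
    rw [forall_comm]
    simp [_root_.funext_iff, load]
  rw [stressFree_iff_extendWeights] at h ⊢
  simp only [hload] at h ⊢
  exact fun c => eq_zero_of_algebraicIndependent _ hp₀ h

theorem Generic.eq_zero_of_isStress_of_sum_eq_zero {p p₀ : W → Fin 3 → ℝ} (hp₀ : Generic p₀)
    (h : ∀ ω, IsStress p F ω → (∀ i, ∑ j, ω i j = 0) → ω = 0) {ω : W → W → ℝ}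
    (hω : IsStress p₀ F ω) (hsum : ∀ i, ∑ j, ω i j = 0) : ω = 0 := by
  let q : Option (Fin 3) → W → W → MvPolynomial (W × Fin 3) ℚ := fun r i j =>
    r.elim 1 fun k => X (i, k) - X (j, k)
  have hq (y : W → Fin 3 → ℝ) (c : F.edgeSet → ℝ) :
      (∀ r i, ∑ j, extendWeights c i j * aeval (fun x : W × Fin 3 => y x.1 x.2) (q r i j) = 0) ↔
      (∀ i, ∑ j, extendWeights c i j = 0) ∧ load y (extendWeights c) = 0 := by
    rw [Option.forall, forall_comm (α := Fin 3)]
    simp [q, _root_.funext_iff, load]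
  obtain ⟨c, rfl⟩ := exists_extendWeights_eq hω.symm hω.eq_zero_of_not_adj
  refine extendWeights_eq_zero_iff.2 (eq_zero_of_algebraicIndependent q (x := fun x => p x.1 x.2)
    hp₀ (fun c hc => ?_) ((hq p₀ c).2 ⟨hsum, hω.load_eq_zero⟩))
  obtain ⟨hsum, hload⟩ := (hq p c).1 hc
  exact extendWeights_eq_zero_iff.1
    (h _ ⟨extendWeights_comm c, fun _ _ => extendWeights_of_not_adj c, hload⟩ hsum)

end EdgeWeights

section Extensions

open SimpleGraph

variable {W : Type*}

open Classical in
/-- The weight function on pairs of vertices with value `τ` on the pair `a, b` and `0` elsewhere. -/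
noncomputable def edgeWeight (a b : W) (τ : ℝ) (i j : W) : ℝ := if s(i, j) = s(a, b) then τ else 0

theorem edgeWeight_comm (a b : W) (τ : ℝ) (i j : W) :
    edgeWeight a b τ i j = edgeWeight a b τ j i := by
  rw [edgeWeight, edgeWeight, Sym2.eq_swap]

theorem edgeWeight_self (a b : W) (τ : ℝ) : edgeWeight a b τ a b = τ := if_pos rfl

theorem edgeWeight_of_ne {a b i : W} (ha : i ≠ a) (hb : i ≠ b) (τ : ℝ) (j : W) :
    edgeWeight a b τ i j = 0 := by
  simp [edgeWeight, ha, hb]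

theorem edgeWeight_of_not_adj {F : SimpleGraph W} {a b i j : W} (hab : F.Adj a b)
    (hij : ¬ F.Adj i j) (τ : ℝ) : edgeWeight a b τ i j = 0 :=
  if_neg fun h : s(i, j) = s(a, b) => hij (show s(i, j) ∈ F.edgeSet from h ▸ hab)

open Classical in
/-- The part of the weight function `ω` carried by the pairs which meet `S`. -/
noncomputable def touchingPart (S : Finset W) (ω : W → W → ℝ) (i j : W) : ℝ :=
  if i ∈ S ∨ j ∈ S then ω i j else 0

theorem touchingPart_comm (S : Finset W) {ω : W → W → ℝ} (hω : ∀ i j, ω i j = ω j i) (i j : W) :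
    touchingPart S ω i j = touchingPart S ω j i := by
  classical
  rw [touchingPart, touchingPart, hω i j]
  exact if_congr or_comm rfl rfl

theorem touchingPart_eq_zero {S : Finset W} {ω : W → W → ℝ} {i j : W}
    (h : i ∈ S ∨ j ∈ S → ω i j = 0) : touchingPart S ω i j = 0 := by
  classical exact ite_eq_right_iff.2 h

variable [Fintype W] {p : W → Fin 3 → ℝ}

theorem load_edgeWeight [DecidableEq W] (p : W → Fin 3 → ℝ) (a b : W) (τ : ℝ) :
    load p (edgeWeight a b τ) =
      Pi.single a (τ • (p a - p b)) + Pi.single b (τ • (p b - p a)) := by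
  ext i k
  by_cases ha : i = a
  · subst ha
    by_cases hb : i = b
    · subst hb
      simp [load, edgeWeight]
    · simp [load, edgeWeight, hb]
  · by_cases hb : i = b
    · subst hb
      simp [load, edgeWeight, ha]
    · simp [load, edgeWeight_of_ne ha hb, ha, hb]

section OneExtension

theorem Generic.eq_smul_of_midpoint_star [DecidableEq W] (hp : Generic p) {a b : W} {T : Finset W}
    (hT : #T ≤ 4) (ha : a ∈ T) (hb : b ∈ T) {c : W → ℝ} (hc : ∀ j ∉ T, c j = 0)
    (hbal : ∀ k, ∑ j, c j * ((p a k + p b k) / 2 - p j k) = 0) :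
    ∃ s : ℝ, c = s • (Pi.single a 1 + Pi.single b 1) := by
  refine ⟨(∑ j, c j) / 2, sub_eq_zero.1 (eq_zero_of_affineIndependent (hp.affineIndependent hT)
    (fun i hi => ?_) ?_ fun k => ?_)⟩
  · simp [hc i hi, ne_of_mem_of_not_mem ha hi, ne_of_mem_of_not_mem hb hi]
  · simp [sum_sub_distrib, ← mul_sum, sum_add_distrib]
  · have := hbal k
    simp only [mul_sub, sum_sub_distrib, ← sum_mul] at this
    simp [sub_mul, add_mul, sum_sub_distrib, sum_add_distrib, Pi.single_apply]
    linarith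

theorem load_congr {p p' : W → Fin 3 → ℝ} {ω : W → W → ℝ} (hsymm : ∀ i j, ω i j = ω j i) {t : W}
    (ht : ω t = 0) (h : ∀ i, i ≠ t → p i = p' i) : load p ω = load p' ω := by
  ext i k
  refine sum_congr rfl fun j _ => ?_
  by_cases hi : i = t
  · simp [hi, ht]
  by_cases hj : j = t
  · simp [hj, hsymm i t, ht]
  rw [h i hi, h j hj]

theorem load_edgeWeight_midpoint {q : W → Fin 3 → ℝ} {t a b : W}
    (h : q t = (2⁻¹ : ℝ) • (q a + q b)) (s : ℝ) :
    load q (edgeWeight t a s + edgeWeight t b s) = load q (edgeWeight a b (s / 2)) := by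
  classical
  have ha : q a - q t = (2⁻¹ : ℝ) • (q a - q b) := by rw [h]; module
  have hb : q b - q t = (2⁻¹ : ℝ) • (q b - q a) := by rw [h]; module
  have hsum : q t - q a + (q t - q b) = 0 := by rw [h]; module
  rw [load_add, load_edgeWeight, load_edgeWeight, load_edgeWeight, ha, hb, smul_smul, smul_smul,
    ← div_eq_mul_inv, add_add_add_comm, ← Pi.single_add, ← smul_add, hsum, smul_zero,
    Pi.single_zero, zero_add]

theorem IsStress.exists_edge_split {q : W → Fin 3 → ℝ} {F : SimpleGraph W} {t a b : W}
    (ha : F.Adj t a) (hb : F.Adj t b) (hab : a ≠ b) (hn : ¬ F.Adj a b)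
    (hq : q t = (2⁻¹ : ℝ) • (q a + q b)) {ω : W → W → ℝ} (hω : IsStress q F ω) {s : ℝ}
    (hs : ∀ j, ω t j = edgeWeight t a s t j + edgeWeight t b s t j) :
    ∃ ω', IsStress q (F.deleteIncidenceSet t ⊔ edge a b) ω' ∧ ω' t = 0 ∧ (ω' = 0 → ω = 0) := by
  set star := edgeWeight t a s + edgeWeight t b s with hstar
  have hle : F ≤ F ⊔ edge a b := le_sup_left
  have hadj : (F ⊔ edge a b).Adj a b := Or.inr ((adj_edge ..).2 ⟨rfl, hab⟩)
  let ω' := ω - star + edgeWeight a b (s / 2)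
  have htω' : ω' t = 0 := by
    ext j
    simp [ω', hstar, hs, edgeWeight_of_ne ha.ne hb.ne]
  have hω' : IsStress q (F ⊔ edge a b) ω' := by
    refine ⟨fun i j => ?_, fun i j hij => ?_, ?_⟩
    · simp [ω', hstar, hω.symm i j, edgeWeight_comm _ _ _ i j]
    · simp [ω', hstar, hω.eq_zero_of_not_adj i j (mt (@hle i j) hij),
        edgeWeight_of_not_adj (hle ha) hij, edgeWeight_of_not_adj (hle hb) hij,
        edgeWeight_of_not_adj hadj hij]
    · rw [load_add, load_sub, hω.load_eq_zero, load_edgeWeight_midpoint hq, zero_sub,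
        neg_add_cancel]
  refine ⟨ω', (hω'.deleteIncidenceSet htω').mono fun i j => ?_, htω', fun h0 => ?_⟩
  · rw [deleteIncidenceSet_adj, sup_adj, sup_adj, deleteIncidenceSet_adj]
    tauto
  · have hs0 : s = 0 := by
      simpa [ω', hstar, hω.eq_zero_of_not_adj a b hn, edgeWeight_self, edgeWeight, ha.ne, ha.ne',
        hb.ne', hab] using congrFun₂ h0 a b
    ext i j
    simpa [ω', hstar, hs0, edgeWeight] using congrFun₂ h0 i j

-- Place `t` at the midpoint of `a` and `b`: there the stresses on `ta` and `tb` agree and may be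
-- replaced by a single stress on `ab`.
theorem stressFree_of_edge_split (hp : Generic p) {F : SimpleGraph W} {t a b : W}
    (ha : F.Adj t a) (hb : F.Adj t b) (hab : a ≠ b) (hn : ¬ F.Adj a b) (ht : #(nbrs F t) ≤ 4)
    (h : StressFree p (F.deleteIncidenceSet t ⊔ edge a b)) : StressFree p F := by
  classical
  let q : W → Fin 3 → ℝ := Function.update p t ((2⁻¹ : ℝ) • (p a + p b))
  have hq (i : W) (hi : i ≠ t) : q i = p i := Function.update_of_ne hi _ p
  have hqt : q t = (2⁻¹ : ℝ) • (p a + p b) := Function.update_self ..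
  refine hp.stressFree (p := q) fun ω hω => ?_
  have hsupp (j : W) (hj : j ∉ nbrs F t) : ω t j = 0 :=
    hω.eq_zero_of_not_adj t j (by rwa [mem_nbrs] at hj)
  obtain ⟨s, hs⟩ : ∃ s : ℝ, ω t = s • (Pi.single a 1 + Pi.single b 1) := by
    refine hp.eq_smul_of_midpoint_star ht (mem_nbrs.2 ha) (mem_nbrs.2 hb) hsupp fun k => ?_
    rw [← show load q ω t k = 0 from congrFun₂ hω.load_eq_zero t k]
    refine sum_congr rfl fun j _ => ?_
    by_cases hj : j = t
    · rw [hj, hω.eq_zero_of_not_adj t t F.irrefl, zero_mul, zero_mul]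
    · rw [hq j hj, hqt]
      simp [div_eq_inv_mul]
  obtain ⟨ω', hω', hω't, hω'0⟩ := hω.exists_edge_split ha hb hab hn
    (by rw [hqt, hq a ha.ne', hq b hb.ne']) (s := s) fun j => by
      simp [hs, edgeWeight, Pi.single_apply, ha.ne, hb.ne, mul_add]
  refine hω'0 (h ω' ⟨hω'.symm, hω'.eq_zero_of_not_adj, ?_⟩)
  rw [load_congr hω'.symm hω't fun i hi => (hq i hi).symm, hω'.load_eq_zero]

end OneExtension

section TwoSeparation

theorem sum_sum_eq_zero_of_antisymm {g : W → W → ℝ} (h : ∀ i j, g i j = -g j i) :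
    ∑ i, ∑ j, g i j = 0 := by
  have : ∑ i, ∑ j, g i j = -∑ i, ∑ j, g i j := by
    conv_lhs => rw [sum_comm]
    simp only [← sum_neg_distrib, ← h]
  linarith

theorem sum_load (p : W → Fin 3 → ℝ) {ω : W → W → ℝ} (h : ∀ i j, ω i j = ω j i) (k : Fin 3) :
    ∑ i, load p ω i k = 0 :=
  sum_sum_eq_zero_of_antisymm fun i j => by rw [h i j]; ring

theorem sum_load_torque (p : W → Fin 3 → ℝ) {ω : W → W → ℝ} (h : ∀ i j, ω i j = ω j i)
    (k l : Fin 3) : ∑ i, (p i k * load p ω i l - p i l * load p ω i k) = 0 := by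
  simp only [load, mul_sum, ← sum_sub_distrib]
  exact sum_sum_eq_zero_of_antisymm fun i j => by rw [h i j]; ring

theorem Generic.injective {W : Type*} {p : W → Fin 3 → ℝ} (hp : Generic p) :
    Function.Injective p := fun i j h => by
  have := AlgebraicIndependent.injective hp (a₁ := (i, 0)) (a₂ := (j, 0)) (congrFun h 0)
  simpa using this

theorem Generic.exists_load_eq_load_edgeWeight (hp : Generic p) {ω : W → W → ℝ}
    (h : ∀ i j, ω i j = ω j i) {u v : W} (huv : u ≠ v)
    (h0 : ∀ i, i ≠ u → i ≠ v → load p ω i = 0) :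
    ∃ τ : ℝ, load p ω = load p (edgeWeight u v τ) := by
  classical
  have hsum (g : W → ℝ) (hg : ∀ i, i ≠ u → i ≠ v → g i = 0) : ∑ i, g i = g u + g v :=
    Fintype.sum_eq_add u v huv fun i hi => hg i hi.1 hi.2
  have hforce (k : Fin 3) : load p ω v k = -load p ω u k := by
    have := sum_load p h k
    rw [hsum _ fun i hu hv => congrFun (h0 i hu hv) k] at this
    linarith
  have hparallel (k l : Fin 3) :
      (p u k - p v k) * load p ω u l = (p u l - p v l) * load p ω u k := by
    have := sum_load_torque p h k l
    rw [hsum _ fun i hu hv => by simp [h0 i hu hv], hforce, hforce] at this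
    linarith
  obtain ⟨m, hm⟩ : ∃ m, p u m ≠ p v m := Function.ne_iff.1 (hp.injective.ne huv)
  rw [← sub_ne_zero] at hm
  have hu (k : Fin 3) : load p ω u k = load p ω u m / (p u m - p v m) * (p u k - p v k) := by
    field_simp
    linarith [hparallel m k]
  refine ⟨load p ω u m / (p u m - p v m), ?_⟩
  ext i k
  rw [load_edgeWeight]
  by_cases hiu : i = u
  · subst hiu
    simpa [huv] using hu k
  by_cases hiv : i = v
  · subst hiv
    simp only [Pi.add_apply, Pi.single_eq_same, Pi.single_eq_of_ne hiu, hforce, hu k]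
    simp
    ring
  · simp [h0 i hiu hiv, hiu, hiv]

theorem Generic.three_le_card_of_star_balance (hp : Generic p) {u v : W} {T : Finset W}
    (huv : u ≠ v) (hu : u ∉ T) (hv : v ∉ T) {c : W → ℝ} (hc : ∀ j ∉ T, c j = 0) {τ : ℝ}
    (hτ : τ ≠ 0) (hbal : ∀ k, ∑ j, c j * (p u k - p j k) = τ * (p u k - p v k)) : 3 ≤ #T := by
  classical
  by_contra! hT
  have := hp.eq_zero_of_star (T := insert v T) (c := c - Pi.single v τ) (t := u)
    (by simp [huv, hu]) (by rw [card_insert_of_notMem hv]; omega)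
    (fun j hj => by rw [mem_insert, not_or] at hj; simp [hj.1, hc j hj.2])
    fun k => by simp [sub_mul, sum_sub_distrib, hbal, Pi.single_apply]
  exact hτ (by simpa [hc v hv] using congrFun this v)

theorem load_touchingPart_eq_zero {F : SimpleGraph W} {ω : W → W → ℝ} (hω : IsStress p F ω)
    {S B : Finset W} (hcl : ∀ i ∈ S, ∀ j, F.Adj i j → j ∈ S ∨ j ∈ B) {i : W} (hi : i ∉ B) :
    load p (touchingPart S ω) i = 0 := by
  ext k
  by_cases hiS : i ∈ S
  · rw [Pi.zero_apply, ← show load p ω i k = 0 from congrFun₂ hω.load_eq_zero i k]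
    simp [load, touchingPart, hiS]
  · refine sum_eq_zero fun j _ => mul_eq_zero_of_left ?_ _
    refine touchingPart_eq_zero fun hj => hω.eq_zero_of_not_adj i j fun hij => ?_
    rcases hcl j (hj.resolve_left hiS) i hij.symm with h | h
    exacts [hiS h, hi h]

theorem IsStress.sub_edgeWeight {F F' : SimpleGraph W} {ω : W → W → ℝ} (hω : IsStress p F ω)
    {S : Finset W} {u v : W} {τ : ℝ}
    (hτ : load p (touchingPart S ω) = load p (edgeWeight u v τ))
    (hF' : ∀ i j, F.Adj i j → i ∈ S ∨ j ∈ S → F'.Adj i j) (huv : τ ≠ 0 → F'.Adj u v) :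
    IsStress p F' (touchingPart S ω - edgeWeight u v τ) where
  symm i j := by simp [touchingPart_comm S hω.symm i j, edgeWeight_comm u v τ i j]
  eq_zero_of_not_adj i j hij := by
    have h₁ : touchingPart S ω i j = 0 :=
      touchingPart_eq_zero fun h => hω.eq_zero_of_not_adj i j fun h' => hij (hF' i j h' h)
    have h₂ : edgeWeight u v τ i j = 0 := by
      by_cases h0 : τ = 0
      · simp [edgeWeight, h0]
      · exact edgeWeight_of_not_adj (huv h0) hij τ
    rw [Pi.sub_apply, Pi.sub_apply, h₁, h₂, sub_zero]
  load_eq_zero := by rw [load_sub, hτ, sub_self]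

-- If `uv` is not an edge, then on either side of the separation at least three edges at `u` are
-- needed to balance the force transmitted along `uv`.
theorem IsStress.six_le_card_nbrs (hp : Generic p) {F : SimpleGraph W} {ω : W → W → ℝ}
    (hω : IsStress p F ω) {u v : W} (huv : u ≠ v) (hadj : ¬ F.Adj u v) {S : Finset W} (hu : u ∉ S)
    (hv : v ∉ S) {τ : ℝ} (hτ : τ ≠ 0)
    (hload : load p (touchingPart S ω) = load p (edgeWeight u v τ)) : 6 ≤ #(nbrs F u) := by
  classical
  have hin (k : Fin 3) :
      ∑ j, touchingPart S ω u j * (p u k - p j k) = τ * (p u k - p v k) := by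
    change load p (touchingPart S ω) u k = _
    simp [hload, load_edgeWeight, huv]
  have hinside : 3 ≤ #(nbrs F u ∩ S) := by
    refine hp.three_le_card_of_star_balance huv (by simp [hu]) (by simp [hv]) (fun j hj => ?_) hτ
      hin
    refine touchingPart_eq_zero fun h => hω.eq_zero_of_not_adj u j fun h' => hj ?_
    exact mem_inter.2 ⟨mem_nbrs.2 h', h.resolve_left hu⟩
  have houtside : 3 ≤ #(nbrs F u \ S) := by
    refine hp.three_le_card_of_star_balance (c := ω u - touchingPart S ω u) huv
      (by simp [mem_nbrs]) (by simp [mem_nbrs, hadj]) (fun j hj => ?_) (neg_ne_zero.2 hτ)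
      fun k => ?_
    · by_cases hjS : j ∈ S
      · simp [touchingPart, hjS]
      · have : ¬ F.Adj u j := fun h => hj (mem_sdiff.2 ⟨mem_nbrs.2 h, hjS⟩)
        simp [touchingPart, hjS, hu, hω.eq_zero_of_not_adj u j this]
    · simp only [Pi.sub_apply, sub_mul, sum_sub_distrib, hin]
      rw [show ∑ j, ω u j * (p u k - p j k) = 0 from congrFun₂ hω.load_eq_zero u k]
      ring
  have := card_inter_add_card_sdiff (nbrs F u) S
  omega

theorem IsCircuit.false_of_two_separation (hp : Generic p) {C : SimpleGraph W}
    (hC : IsCircuit p C) {u v : W} (huv : u ≠ v) (hdeg : #(nbrs C u) ≤ 5) {S : Finset W}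
    (hu : u ∉ S) (hv : v ∉ S) (hcl : ∀ i ∈ S, ∀ j, C.Adj i j → j ∈ S ∨ j = u ∨ j = v) {s : W}
    (hsS : s ∈ S) (hs : s ∈ supp C) {z : W} (hzS : z ∉ S) (hz : z ∈ supp C) (hzu : z ≠ u)
    (hzv : z ≠ v) : False := by
  classical
  obtain ⟨ω, hω, hne⟩ := hC.exists_stress_ne_zero
  obtain ⟨s', hs'⟩ := mem_supp.1 hs
  obtain ⟨z', hz'⟩ := mem_supp.1 hz
  have hz'S : z' ∉ S := fun h => by rcases hcl z' h z hz'.symm with h | h | h <;> contradiction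
  obtain ⟨τ, hτ⟩ := hp.exists_load_eq_load_edgeWeight (ω := touchingPart S ω)
    (touchingPart_comm S hω.symm) huv fun i hiu hiv =>
      load_touchingPart_eq_zero hω (B := {u, v}) (by simpa using hcl) (by simp [hiu, hiv])
  have hadj : τ ≠ 0 → C.Adj u v := fun h0 => by
    by_contra hn
    exact absurd (hω.six_le_card_nbrs hp huv hn hu hv h0 hτ) (by omega)
  have hstress : IsStress p (C \ edge z z') (touchingPart S ω - edgeWeight u v τ) := by
    refine hω.sub_edgeWeight hτ (fun i j hij hS => ?_) fun h0 => ?_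
    · rw [sdiff_adj, edge_adj]
      refine ⟨hij, ?_⟩
      rintro ⟨⟨rfl, rfl⟩ | ⟨rfl, rfl⟩, -⟩ <;> tauto
    · rw [sdiff_adj, edge_adj]
      refine ⟨hadj h0, ?_⟩
      rintro ⟨⟨rfl, rfl⟩ | ⟨rfl, rfl⟩, -⟩ <;> contradiction
  refine hne s s' hs' ?_
  have := congrFun₂ (hC.stressFree_of_lt (sdiff_edge_lt hz') _ hstress) s s'
  simpa [touchingPart, hsS, edgeWeight_of_ne (ne_of_mem_of_not_mem hsS hu)
    (ne_of_mem_of_not_mem hsS hv)] using this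

end TwoSeparation

end Extensions

section MaxwellCount

open SimpleGraph MvPolynomial

variable {W : Type*} {p : W → Fin 3 → ℝ}

theorem Generic.aeval_ne_zero (hp : Generic p) {D : MvPolynomial (W × Fin 3) ℚ} {x : W × Fin 3 → ℝ}
    (hx : aeval x D ≠ 0) : aeval (fun y : W × Fin 3 => p y.1 y.2) D ≠ 0 := fun h => by
  simp [(injective_iff_map_eq_zero _).1 hp D h] at hx

theorem Generic.det_ne_zero (hp : Generic p) {x₁ x₂ x₃ : W} (h₁₂ : x₁ ≠ x₂) (h₁₃ : x₁ ≠ x₃)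
    (h₂₃ : x₂ ≠ x₃) : (p x₁ 1 - p x₃ 1) * (p x₂ 0 - p x₃ 0) -
      (p x₁ 0 - p x₃ 0) * (p x₂ 1 - p x₃ 1) ≠ 0 := by
  classical
  have := hp.aeval_ne_zero (x := Pi.single (x₁, 1) 1 + Pi.single (x₂, 0) 1)
    (D := (X (x₁, 1) - X (x₃, 1)) * (X (x₂, 0) - X (x₃, 0)) -
      (X (x₁, 0) - X (x₃, 0)) * (X (x₂, 1) - X (x₃, 1)))
    (by simp [h₁₂, h₁₂.symm, h₁₃.symm, h₂₃.symm])
  simpa using this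

/-- Six coordinates of a load on the vertices `x₁, x₂, x₃`. Fixing the other three coordinates of
these vertices removes the six infinitesimal isometries. -/
def freeCoords [DecidableEq W] (x₁ x₂ x₃ : W) : Finset (W × Fin 3) :=
  {(x₁, 2), (x₂, 1), (x₂, 2), (x₃, 0), (x₃, 1), (x₃, 2)}

theorem Generic.eq_zero_of_triangle_load (hp : Generic p) {x₁ x₂ x₃ : W} (h₁₂ : x₁ ≠ x₂)
    (h₁₃ : x₁ ≠ x₃) (h₂₃ : x₂ ≠ x₃) {L₁ L₂ L₃ : Fin 3 → ℝ} (h10 : L₁ 0 = 0) (h11 : L₁ 1 = 0)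
    (h20 : L₂ 0 = 0) (hforce : ∀ k, L₁ k + (L₂ k + L₃ k) = 0)
    (htorque : ∀ k l, p x₁ k * L₁ l - p x₁ l * L₁ k +
      (p x₂ k * L₂ l - p x₂ l * L₂ k + (p x₃ k * L₃ l - p x₃ l * L₃ k)) = 0) :
    L₁ = 0 ∧ L₂ = 0 ∧ L₃ = 0 := by
  have h30 : L₃ 0 = 0 := by linarith [hforce 0]
  have h31 : L₃ 1 = -L₂ 1 := by linarith [hforce 1]
  have h32 : L₃ 2 = -L₁ 2 - L₂ 2 := by linarith [hforce 2]
  have hne : p x₂ 0 - p x₃ 0 ≠ 0 := sub_ne_zero.2 fun h => h₂₃ (by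
    simpa using AlgebraicIndependent.injective hp (a₁ := (x₂, 0)) (a₂ := (x₃, 0)) h)
  have h21 : L₂ 1 = 0 := by
    refine (mul_eq_zero.1 ?_).resolve_left hne
    linear_combination htorque 0 1 + p x₁ 1 * h10 - p x₁ 0 * h11 + p x₂ 1 * h20 - p x₃ 0 * h31 +
      p x₃ 1 * h30
  have hx : (p x₁ 0 - p x₃ 0) * L₁ 2 + (p x₂ 0 - p x₃ 0) * L₂ 2 = 0 := by
    linear_combination htorque 0 2 + p x₁ 2 * h10 + p x₂ 2 * h20 + p x₃ 2 * h30 - p x₃ 0 * h32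
  have hy : (p x₁ 1 - p x₃ 1) * L₁ 2 + (p x₂ 1 - p x₃ 1) * L₂ 2 = 0 := by
    linear_combination htorque 1 2 + p x₁ 2 * h11 + p x₂ 2 * h21 + p x₃ 2 * (h31 - h21) -
      p x₃ 1 * h32
  have h12 : L₁ 2 = 0 := by
    refine (mul_eq_zero.1 ?_).resolve_left (hp.det_ne_zero h₁₂ h₁₃ h₂₃)
    linear_combination (p x₂ 0 - p x₃ 0) * hy - (p x₂ 1 - p x₃ 1) * hx
  have h22 : L₂ 2 = 0 := by simpa [h12, hne] using hx
  rw [h21, neg_zero] at h31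
  rw [h12, h22, neg_zero, sub_zero] at h32
  refine ⟨?_, ?_, ?_⟩ <;> ext k <;> fin_cases k <;> assumption

theorem Generic.eq_zero_of_equilibrium_load [Fintype W] [DecidableEq W] (hp : Generic p)
    {x₁ x₂ x₃ : W} (h₁₂ : x₁ ≠ x₂) (h₁₃ : x₁ ≠ x₃) (h₂₃ : x₂ ≠ x₃) {L : W → Fin 3 → ℝ}
    (hL : ∀ i k, (i, k) ∉ freeCoords x₁ x₂ x₃ → L i k = 0) (hforce : ∀ k, ∑ i, L i k = 0)
    (htorque : ∀ k l, ∑ i, (p i k * L i l - p i l * L i k) = 0) : L = 0 := by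
  have hoff (i : W) (h₁ : i ≠ x₁) (h₂ : i ≠ x₂) (h₃ : i ≠ x₃) (k : Fin 3) : L i k = 0 :=
    hL i k (by simp [freeCoords, h₁, h₂, h₃])
  have hsum (g : W → ℝ) (hg : ∀ i, i ≠ x₁ → i ≠ x₂ → i ≠ x₃ → g i = 0) :
      ∑ i, g i = g x₁ + (g x₂ + g x₃) := by
    rw [← sum_subset (subset_univ {x₁, x₂, x₃}) fun i _ hi => by
      simp only [mem_insert, mem_singleton, not_or] at hi
      exact hg i hi.1 hi.2.1 hi.2.2, sum_insert (by simp [h₁₂, h₁₃]), sum_pair h₂₃]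
  obtain ⟨h₁, h₂, h₃⟩ := hp.eq_zero_of_triangle_load h₁₂ h₁₃ h₂₃
    (hL _ _ (by simp [freeCoords, h₁₂, h₁₃])) (hL _ _ (by simp [freeCoords, h₁₂, h₁₃]))
    (hL _ _ (by simp [freeCoords, h₂₃]))
    (fun k => (hsum (L · k) fun i h₁ h₂ h₃ => hoff i h₁ h₂ h₃ k).symm.trans (hforce k))
    (fun k l => (hsum (fun i => p i k * L i l - p i l * L i k) fun i h₁ h₂ h₃ => by
      simp [hoff i h₁ h₂ h₃]).symm.trans (htorque k l))
  ext i k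
  by_cases hi₁ : i = x₁
  · rw [hi₁, h₁]; rfl
  by_cases hi₂ : i = x₂
  · rw [hi₂, h₂]; rfl
  by_cases hi₃ : i = x₃
  · rw [hi₃, h₃]; rfl
  exact hoff i hi₁ hi₂ hi₃ k

variable [Fintype W] {F : SimpleGraph W}

theorem exists_load_eq_zero_on (p : W → Fin 3 → ℝ) {K : Finset (W × Fin 3)}
    (hK : #K < Nat.card F.edgeSet) :
    ∃ c : F.edgeSet → ℝ, c ≠ 0 ∧ ∀ r ∈ K, load p (extendWeights c) r.1 r.2 = 0 := by
  classical
  have := Fintype.ofFinite F.edgeSet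
  let f : (F.edgeSet → ℝ) →ₗ[ℝ] K → ℝ :=
    LinearMap.pi fun r => ∑ e, (rigidityRow p e.1 r.1.1 r.1.2) • LinearMap.proj e
  obtain ⟨c, hc, hc0⟩ := Submodule.exists_mem_ne_zero_of_ne_bot
    (LinearMap.ker_ne_bot_of_finrank_lt (f := f) (by simpa using hK))
  refine ⟨c, hc0, fun r hr => ?_⟩
  rw [← sum_smul_rigidityRow]
  simpa [f, Finset.sum_apply, mul_comm] using congrFun (LinearMap.mem_ker.1 hc) ⟨r, hr⟩

theorem StressFree.card_edgeSet_add_six_le (hp : Generic p) (hF : StressFree p F) {X : Finset W}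
    (hX : 3 ≤ #X) (hFX : ∀ i j, F.Adj i j → i ∈ X) : Nat.card F.edgeSet + 6 ≤ 3 * #X := by
  classical
  obtain ⟨x₁, hx₁, x₂, hx₂, x₃, hx₃, h₁₂, h₁₃, h₂₃⟩ := two_lt_card.1 hX
  have hfree : #(freeCoords x₁ x₂ x₃) = 6 := by
    simp [freeCoords, h₁₂, h₁₃, h₂₃]
  have hcard : #((X ×ˢ univ) \ freeCoords x₁ x₂ x₃) + 6 = #X * 3 := by
    rw [← hfree, card_sdiff_add_card_eq_card, card_product, card_univ, Fintype.card_fin]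
    simp [freeCoords, insert_subset_iff, hx₁, hx₂, hx₃]
  by_contra! hlt
  obtain ⟨c, hc0, hc⟩ := exists_load_eq_zero_on (F := F) p
    (K := (X ×ˢ univ) \ freeCoords x₁ x₂ x₃) (by omega)
  refine hc0 (stressFree_iff_extendWeights.1 hF c (hp.eq_zero_of_equilibrium_load h₁₂ h₁₃ h₂₃
    (fun i k hik => ?_) (sum_load p (extendWeights_comm c))
    (sum_load_torque p (extendWeights_comm c))))
  by_cases hi : i ∈ X
  · exact hc (i, k) (by simp [hi, hik])
  · exact sum_eq_zero fun j _ => by rw [extendWeights_of_not_adj c (mt (hFX i j) hi), zero_mul]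

theorem StressFree.isSparse (hp : Generic p) (hF : StressFree p F) : IsSparse F := by
  classical
  intro X hX
  let H : SimpleGraph W := ((⊤ : F.Subgraph).induce X).spanningCoe
  have hH {i j : W} : H.Adj i j ↔ i ∈ X ∧ j ∈ X ∧ F.Adj i j := by simp [H]
  have hle : H ≤ F := fun i j h => (hH.1 h).2.2
  have hfree : StressFree p H := fun ω hω => hF ω (hω.mono hle)
  have hcard := hfree.card_edgeSet_add_six_le hp hX fun i j h => (hH.1 h).1
  have harcs : 2 * Nat.card H.edgeSet = #(arcsIn F X) := by
    rw [Nat.card_eq_fintype_card, ← edgeFinset_card, two_mul_card_edgeFinset]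
    congr 1
    ext ⟨i, j⟩
    simp [hH, mem_arcsIn, and_assoc]
  simp only [dof]
  omega

end MaxwellCount

section DegreeFive

open SimpleGraph

variable {W : Type*} {C : SimpleGraph W} {t w : W} {X Y : Finset W}

/-- A tight set: one with at least four vertices that attains the bound of 3-sparsity. -/
structure IsTight (C : SimpleGraph W) (X : Finset W) : Prop where
  four_le_card : 4 ≤ #X
  dof_eq : dof C X = 12

/-- A tight set avoiding `t`: an edge added inside it to `C - t` would violate 3-sparsity. -/
structure IsBlocker (C : SimpleGraph W) (t : W) (X : Finset W) : Prop extends IsTight C X where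
  notMem : t ∉ X

/-- Every pair of nonadjacent neighbours of `t` lies in a blocker, so that no edge between
neighbours of `t` can be added to `C - t` sparsely. -/
def Blocked (C : SimpleGraph W) (t : W) : Prop :=
  ∀ a b, C.Adj t a → C.Adj t b → a ≠ b → ¬ C.Adj a b → ∃ X, IsBlocker C t X ∧ a ∈ X ∧ b ∈ X

theorem IsTight.three_le_degIn (hX : IsTight C X) (hs : IsSparse C) {z : W} (hz : z ∈ X) :
    3 ≤ degIn C X z := by
  classical
  have hdof := dof_erase C hz
  have := hX.four_le_card
  have := hs (X.erase z) (by rw [card_erase_of_mem hz]; omega)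
  have := hX.dof_eq
  omega

theorem IsBlocker.insert [DecidableEq W] (hX : IsBlocker C t X) (hs : IsSparse C) {y : W}
    (hyt : y ≠ t) (hyX : y ∉ X) (hy : 3 ≤ degIn C X y) : IsBlocker C t (insert y X) := by
  have hcard := card_insert_of_notMem hyX
  have h₄ := hX.four_le_card
  have hdof := dof_insert C hyX
  rw [hX.dof_eq] at hdof
  have := hs (Insert.insert y X) (by omega)
  exact ⟨⟨by omega, by omega⟩, by simp [hyt.symm, hX.notMem]⟩

variable {E F : SimpleGraph W} {p : W → Fin 3 → ℝ}

theorem not_adj_deleteIncidenceSet_sup (hE : ∀ i j, E.Adj i j → C.Adj t i) (j : W) :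
    ¬ (C.deleteIncidenceSet t ⊔ E).Adj t j := fun h => by
  rcases (sup_adj ..).1 h with h | h
  · exact ((deleteIncidenceSet_adj ..).1 h).2.1 rfl
  · exact (hE t j h).ne rfl

theorem adj_of_edge_adj {a b : W} (ha : C.Adj t a) (hb : C.Adj t b) {i j : W}
    (h : (edge a b).Adj i j) : C.Adj t i := by
  rcases (edge_adj ..).1 h with ⟨⟨rfl, rfl⟩ | ⟨rfl, rfl⟩, -⟩ <;> assumption

theorem IsSparse.deleteIncidenceSet_sup_edge {a b : W} (hs : IsSparse C) (ha : C.Adj t a)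
    (hb : C.Adj t b) (hX : ∀ X : Finset W, t ∉ X → 4 ≤ #X → a ∈ X → b ∈ X → 14 ≤ dof C X) :
    IsSparse (C.deleteIncidenceSet t ⊔ edge a b) := by
  refine isSparse_of_isolated (not_adj_deleteIncidenceSet_sup fun _ _ =>
    adj_of_edge_adj ha hb) fun X h₃ htX => ?_
  rcases h₃.eq_or_lt with h₃' | h₄
  · exact twelve_le_dof_of_card_eq_three _ h₃'.symm
  by_cases h : a ∈ X ∧ b ∈ X
  · have := dof_sub_two_le_dof_sup_edge (C.deleteIncidenceSet t) a b X
    rw [dof_deleteIncidenceSet C htX] at this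
    linarith [hX X htX h₄ h.1 h.2]
  · rw [dof_sup_edge_of_not_mem _ h, dof_deleteIncidenceSet C htX]
    exact hs X h₃

variable [Fintype W]

theorem IsBlocker.union [DecidableEq W] (hX : IsBlocker C t X) (hY : IsBlocker C t Y)
    (hs : IsSparse C) {z : W} (hzX : z ∈ X) (hzY : z ∈ Y) (htz : C.Adj t z)
    (hz : #(nbrs C z) ≤ 5) : IsBlocker C t (X ∪ Y) := by
  have hX₃ := hX.three_le_degIn hs hzX
  have hY₃ := hY.three_le_degIn hs hzY
  have hadd := degIn_union_add_inter C X Y z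
  have hunion := degIn_add_card_le (F := C) (X := X ∪ Y) (T := {t}) (z := z)
    (by simp [htz.symm]) (by simp [hX.notMem, hY.notMem])
  have hinter := degIn_lt_card C (mem_inter.2 ⟨hzX, hzY⟩)
  rw [card_singleton] at hunion
  exact ⟨⟨hX.four_le_card.trans (card_le_card subset_union_left),
    (hs.dof_union_and_inter hX.dof_eq hY.dof_eq (by omega)).1⟩, by simp [hX.notMem, hY.notMem]⟩

theorem IsBlocker.not_nbrs_subset (hX : IsBlocker C t X) (hs : IsSparse C)
    (ht : 4 ≤ #(nbrs C t)) : ¬ nbrs C t ⊆ X := fun h => by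
  classical
  have hdeg := card_le_degIn (fun y hy => mem_nbrs.1 hy) h
  have hdof := dof_insert C hX.notMem
  have hcard := card_insert_of_notMem hX.notMem
  have := hs (Insert.insert t X) (by have := hX.four_le_card; omega)
  have := hX.dof_eq
  omega

theorem Blocked.exists_maximal [DecidableEq W] (hb : Blocked C t) (hs : IsSparse C)
    (ht : #(nbrs C t) = 4) : ∃ X, Maximal (IsBlocker C t) X ∧ 2 ≤ #(X ∩ nbrs C t) := by
  obtain ⟨X, hX, hX₂⟩ : ∃ X, IsBlocker C t X ∧ 2 ≤ #(X ∩ nbrs C t) := by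
    by_cases hcl : C.IsClique (nbrs C t)
    · have hdof := dof_of_isClique hcl
      rw [ht] at hdof
      have hN : IsBlocker C t (nbrs C t) := ⟨⟨ht.ge, hdof⟩, by simp [mem_nbrs]⟩
      exact absurd subset_rfl (hN.not_nbrs_subset hs ht.ge)
    · simp only [isClique_iff, Set.Pairwise, not_forall, mem_coe, mem_nbrs] at hcl
      obtain ⟨a, ha, b, hb', hab, hn⟩ := hcl
      obtain ⟨X, hX, haX, hbX⟩ := hb a b ha hb' hab hn
      exact ⟨X, hX, one_lt_card.2 ⟨a, by simp [haX, mem_nbrs, ha], b, by simp [hbX, mem_nbrs, hb'],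
        hab⟩⟩
  obtain ⟨Z, hXZ, hZ⟩ := (Set.toFinite {X | IsBlocker C t X}).exists_le_maximal hX
  exact ⟨Z, hZ, hX₂.trans (card_le_card (inter_subset_inter_right hXZ))⟩

theorem Blocked.adj_of_maximal (hb : Blocked C t) (hs : IsSparse C)
    (hX : Maximal (IsBlocker C t) X) {z y : W} (hz : z ∈ X) (htz : C.Adj t z)
    (hdz : #(nbrs C z) ≤ 5) (hty : C.Adj t y) (hy : y ∉ X) : C.Adj z y := by
  classical
  by_contra hn
  obtain ⟨Y, hY, hzY, hyY⟩ := hb z y htz hty (fun h => hy (h ▸ hz)) hn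
  exact hy (hX.2 (hX.1.union hY hs hz hzY htz hdz) subset_union_left (mem_union_right _ hyY))

theorem Blocked.three_le_card_inter [DecidableEq W] (hb : Blocked C t) (hs : IsSparse C)
    (hd : ∀ i, i ≠ w → #(nbrs C i) ≤ 5) (ht : #(nbrs C t) = 4) (hX : Maximal (IsBlocker C t) X)
    (hX₂ : 2 ≤ #(X ∩ nbrs C t)) : 3 ≤ #(X ∩ nbrs C t) := by
  set N := nbrs C t with hN
  obtain ⟨z, hz, hzw⟩ := exists_mem_ne (Nat.lt_of_succ_le hX₂) w
  obtain ⟨hzX, htz⟩ := mem_inter.1 hz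
  rw [mem_nbrs] at htz
  have hz₃ := hX.1.three_le_degIn hs hzX
  have hz₅ := degIn_add_card_le (F := C) (X := X) (T := insert t (N \ X)) (z := z)
    (forall_mem_insert .. |>.2 ⟨htz.symm, fun y hy => hb.adj_of_maximal hs hX hzX htz (hd z hzw)
      (mem_nbrs.1 (mem_sdiff.1 hy).1) (mem_sdiff.1 hy).2⟩)
    (forall_mem_insert .. |>.2 ⟨hX.1.notMem, fun y hy => (mem_sdiff.1 hy).2⟩)
  rw [card_insert_of_notMem (by simp [hN, mem_nbrs])] at hz₅
  have := hd z hzw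
  have := card_inter_add_card_sdiff N X
  rw [inter_comm]
  omega

theorem not_blocked (hs : IsSparse C) (hd : ∀ i, i ≠ w → #(nbrs C i) ≤ 5)
    (ht : #(nbrs C t) = 4) : ¬ Blocked C t := fun hb => by
  classical
  obtain ⟨X, hX, hX₂⟩ := hb.exists_maximal hs ht
  have hX₃ := hb.three_le_card_inter hs hd ht hX hX₂
  obtain ⟨y, hyN, hyX⟩ := not_subset.1 (hX.1.not_nbrs_subset hs ht.ge)
  rw [mem_nbrs] at hyN
  have hyt : y ≠ t := hyN.ne'
  have hadj {z : W} (hz : z ∈ X ∩ nbrs C t) (hzw : z ≠ w) : C.Adj y z :=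
    (hb.adj_of_maximal hs hX (mem_inter.1 hz).1 (mem_nbrs.1 (mem_inter.1 hz).2) (hd z hzw)
      hyN hyX).symm
  obtain ⟨z, hz, hyz⟩ : ∃ z ∈ X ∩ nbrs C t, ¬ C.Adj y z := by
    by_contra! h
    have h₃ := card_le_degIn h inter_subset_left
    exact hyX (hX.2 (hX.1.insert hs hyt hyX (by omega)) (subset_insert _ _) (mem_insert_self _ _))
  obtain rfl : z = w := by_contra fun h => hyz (hadj hz h)
  obtain ⟨hzX, hzN⟩ := mem_inter.1 hz
  obtain ⟨Y, hY, hyY, -⟩ := hb y z hyN (mem_nbrs.1 hzN) (fun h => hyX (h ▸ hzX)) hyz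
  have hXY : ∀ b ∈ (X ∩ nbrs C t).erase z, b ∉ Y := fun b hb' hbY => by
    simp only [mem_erase, mem_inter] at hb'
    exact hyX (hX.2 (hX.1.union hY hs hb'.2.1 hbY (mem_nbrs.1 hb'.2.2) (hd b hb'.1))
      subset_union_left (mem_union_right _ hyY))
  have hy₃ := hY.three_le_degIn hs hyY
  have hy₅ := degIn_add_card_le (F := C) (X := Y) (T := insert t ((X ∩ nbrs C t).erase z)) (z := y)
    (forall_mem_insert .. |>.2 ⟨hyN.symm, fun b hb' =>
      hadj (mem_of_mem_erase hb') (ne_of_mem_erase hb')⟩)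
    (forall_mem_insert .. |>.2 ⟨hY.notMem, hXY⟩)
  rw [card_insert_of_notMem (by simp [mem_nbrs]), card_erase_of_mem hz] at hy₅
  have := hd y fun h => hyX (h ▸ hzX)
  omega

theorem supp_deleteIncidenceSet_sup_subset (hE : ∀ i j, E.Adj i j → C.Adj t i) :
    supp (C.deleteIncidenceSet t ⊔ E) ⊆ supp C := fun i hi => by
  obtain ⟨j, hj⟩ := mem_supp.1 hi
  rcases (sup_adj ..).1 hj with h | h
  · exact mem_supp.2 ⟨j, ((deleteIncidenceSet_adj ..).1 h).1⟩
  · exact mem_supp.2 ⟨t, (hE i j h).symm⟩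

theorem card_nbrs_deleteIncidenceSet_sup_le (hE : ∀ i j, E.Adj i j → C.Adj t i) {i : W}
    (hi : #(nbrs E i) ≤ 1) : #(nbrs (C.deleteIncidenceSet t ⊔ E) i) ≤ #(nbrs C i) := by
  classical
  by_cases hti : C.Adj t i
  · have hsub : nbrs (C.deleteIncidenceSet t ⊔ E) i ⊆ (nbrs C i).erase t ∪ nbrs E i := by
      intro j hj
      simp only [mem_nbrs, sup_adj, deleteIncidenceSet_adj, mem_union, mem_erase] at hj ⊢
      tauto
    have := (card_le_card hsub).trans (card_union_le _ _)
    rw [card_erase_of_mem (mem_nbrs.2 hti.symm)] at this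
    have := card_pos.2 ⟨t, mem_nbrs.2 hti.symm⟩
    omega
  · refine card_le_card fun j hj => mem_nbrs.2 ?_
    rcases (sup_adj ..).1 (mem_nbrs.1 hj) with h | h
    · exact ((deleteIncidenceSet_adj ..).1 h).1
    · exact absurd (hE i j h) hti

theorem card_nbrs_deleteIncidenceSet_sup_lt {i : W} (hti : C.Adj t i) (hi : ∀ j, ¬ E.Adj i j) :
    #(nbrs (C.deleteIncidenceSet t ⊔ E) i) < #(nbrs C i) := by
  refine card_lt_card ⟨fun j hj => ?_, fun h => ?_⟩
  · simp only [mem_nbrs, sup_adj, deleteIncidenceSet_adj] at hj ⊢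
    exact (hj.resolve_right (hi j)).1
  · have := h (mem_nbrs.2 hti.symm)
    simp only [mem_nbrs, sup_adj, deleteIncidenceSet_adj] at this
    exact this.elim (fun h => h.2.2 rfl) (hi t)

theorem IsCircuit.five_le_card_supp (hp : Generic p) (hC : IsCircuit p C) : 5 ≤ #(supp C) := by
  classical
  obtain ⟨a, b, hab⟩ := hC.exists_adj
  have ha : a ∈ supp C := mem_supp.2 ⟨b, hab⟩
  have hsub : insert a (nbrs C a) ⊆ supp C :=
    insert_subset ha fun y hy => mem_supp.2 ⟨a, (mem_nbrs.1 hy).symm⟩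
  have := card_le_card hsub
  rw [card_insert_of_notMem (by simp [mem_nbrs])] at this
  have := hC.four_le_card_nbrs hp ha
  omega

/- A circuit inside `F` would have all its vertices other than `w` of degree five in `F` already;
so it would miss `e`, and `t, w` would separate it from `e` in `C`. -/
theorem IsCircuit.stressFree_of_forall_circuit (hp : Generic p) (hC : IsCircuit p C) (htw : t ≠ w)
    (ht : #(nbrs C t) ≤ 5) (hCF : ∀ i j, i ≠ t → j ≠ t → C.Adj i j → F.Adj i j)
    (hsupp : supp F ⊆ supp C) (hd : ∀ i, i ≠ w → #(nbrs F i) ≤ 5)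
    (h₅ : ∀ C' ≤ F, IsCircuit p C' → ∀ i ∈ supp C', i ≠ w → 5 ≤ #(nbrs C' i)) {e : W}
    (he : e ∈ supp C) (het : e ≠ t) (hew : e ≠ w) (hde : #(nbrs F e) ≤ 4) : StressFree p F := by
  classical
  by_contra hF
  obtain ⟨C', hle, hC'⟩ := exists_isCircuit_le hF
  have heC' : e ∉ supp C' := fun h => by
    have := h₅ C' hle hC' e h hew
    have := card_le_card (nbrs_subset_nbrs hle e)
    omega
  have hmem {i : W} : i ∈ supp C' \ {t, w} ↔ i ∈ supp C' ∧ i ≠ t ∧ i ≠ w := by simp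
  have hcl : ∀ i ∈ supp C' \ {t, w}, ∀ j, C.Adj i j → j ∈ supp C' \ {t, w} ∨ j = t ∨ j = w := by
    intro i hi j hij
    obtain ⟨hiC', hit, hiw⟩ := hmem.1 hi
    by_cases hjt : j = t
    · exact .inr (.inl hjt)
    by_cases hjw : j = w
    · exact .inr (.inr hjw)
    have := adj_of_card_nbrs_le hle ((hd i hiw).trans (h₅ C' hle hC' i hiC' hiw))
      (hCF i j hit hjt hij)
    exact .inl (hmem.2 ⟨mem_supp.2 ⟨i, this.symm⟩, hjt, hjw⟩)
  obtain ⟨s, hs⟩ : (supp C' \ {t, w}).Nonempty := by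
    have := le_card_sdiff {t, w} (supp C')
    have := hC'.five_le_card_supp hp
    have := card_le_two (a := t) (b := w)
    exact card_pos.1 (by omega)
  exact hC.false_of_two_separation hp htw ht (by simp) (by simp) hcl hs
    (hsupp (supp_subset_supp hle (hmem.1 hs).1)) (fun h => heC' (hmem.1 h).1) he het hew

theorem card_nbrs_edge_le_one (a b i : W) : #(nbrs (edge a b) i) ≤ 1 :=
  card_le_one.2 fun x hx y hy => by
    simp only [mem_nbrs, edge_adj] at hx hy
    grind

theorem IsCircuit.five_le_card_nbrs (hp : Generic p) (hC : IsCircuit p C) (hs : IsSparse C)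
    (hd : ∀ i, i ≠ w → #(nbrs C i) ≤ 5) (ht : t ∈ supp C) (htw : t ≠ w) : 5 ≤ #(nbrs C t) := by
  classical
  induction hn : #(supp C) using Nat.strong_induction_on generalizing C t with
  | _ n ih =>
  by_contra! hlt
  have ht₄ : #(nbrs C t) = 4 := le_antisymm (by omega) (hC.four_le_card_nbrs hp ht)
  obtain ⟨a, b, hta, htb, hab, hn', hX⟩ : ∃ a b, C.Adj t a ∧ C.Adj t b ∧ a ≠ b ∧ ¬ C.Adj a b ∧
      ∀ X, IsBlocker C t X → a ∈ X → b ∉ X := by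
    simpa [Blocked] using not_blocked hs hd ht₄
  have hE {i j : W} : (edge a b).Adj i j → C.Adj t i := adj_of_edge_adj hta htb
  have hsparse : IsSparse (C.deleteIncidenceSet t ⊔ edge a b) :=
    hs.deleteIncidenceSet_sup_edge hta htb fun X htX h₄ ha hb => by
      have h₁₂ := hs X (by omega)
      obtain ⟨k, hk⟩ := even_dof C X
      by_contra hX'
      exact hX X ⟨⟨h₄, by omega⟩, htX⟩ ha hb
  have hdeg (i : W) (hi : i ≠ w) : #(nbrs (C.deleteIncidenceSet t ⊔ edge a b) i) ≤ 5 :=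
    (card_nbrs_deleteIncidenceSet_sup_le (fun _ _ => hE) (card_nbrs_edge_le_one a b i)).trans
      (hd i hi)
  have hsub := supp_deleteIncidenceSet_sup_subset fun _ _ => hE
  obtain ⟨e, hte, he⟩ : ∃ e ∈ nbrs C t, e ∉ ({a, b, w} : Finset W) :=
    exists_mem_notMem_of_card_lt_card (card_le_three.trans_lt (by omega))
  simp only [mem_insert, mem_singleton, not_or] at he
  rw [mem_nbrs] at hte
  refine hC.1 (stressFree_of_edge_split hp hta htb hab hn' ht₄.le ?_)
  refine hC.stressFree_of_forall_circuit hp htw (hd t htw) (fun i j hi hj hij => .inl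
    ((deleteIncidenceSet_adj ..).2 ⟨hij, hi, hj⟩)) hsub hdeg (fun C' hle hC' i hi hiw => ?_)
    (mem_supp.2 ⟨t, hte.symm⟩) hte.ne' he.2.2 ?_
  · refine ih _ (hn ▸ card_lt_card ?_) hC' (hsparse.mono hle) (fun i hi =>
      (card_le_card (nbrs_subset_nbrs hle i)).trans (hdeg i hi)) hi hiw rfl
    refine ⟨(supp_subset_supp hle).trans hsub, fun h => ?_⟩
    obtain ⟨j, hj⟩ := mem_supp.1 (h ht)
    exact not_adj_deleteIncidenceSet_sup (fun _ _ => hE) j (hle hj)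
  · have := card_nbrs_deleteIncidenceSet_sup_lt (E := edge a b) hte fun j hj => by
      simp only [edge_adj] at hj
      tauto
    have := hd e he.2.2
    omega

theorem IsCircuit.stressFree_of_isSparse (hp : Generic p) (hC : IsCircuit p C) (htw : t ≠ w)
    (ht : #(nbrs C t) ≤ 5) (hCF : ∀ i j, i ≠ t → j ≠ t → C.Adj i j → F.Adj i j)
    (hsupp : supp F ⊆ supp C) (hd : ∀ i, i ≠ w → #(nbrs F i) ≤ 5) (hs : IsSparse F) {e : W}
    (he : e ∈ supp C) (het : e ≠ t) (hew : e ≠ w) (hde : #(nbrs F e) ≤ 4) : StressFree p F :=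
  hC.stressFree_of_forall_circuit hp htw ht hCF hsupp hd
    (fun _ hle hC' _ hi hiw => hC'.five_le_card_nbrs hp (hs.mono hle)
      (fun i hi => (card_le_card (nbrs_subset_nbrs hle i)).trans (hd i hi)) hi hiw) he het hew hde

theorem IsCircuit.stressFree_deleteIncidenceSet_sup (hp : Generic p) (hC : IsCircuit p C)
    (hd : ∀ i, #(nbrs C i) ≤ 5) (htw : t ≠ w) (hE : ∀ i j, E.Adj i j → C.Adj t i)
    (hE₁ : ∀ i, i ≠ w → #(nbrs E i) ≤ 1) (hs : IsSparse (C.deleteIncidenceSet t ⊔ E)) {e : W}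
    (he : C.Adj t e) (hew : e ≠ w) (heE : ∀ j, ¬ E.Adj e j) :
    StressFree p (C.deleteIncidenceSet t ⊔ E) :=
  hC.stressFree_of_isSparse hp htw (hd t)
    (fun _ _ hi hj hij => .inl ((deleteIncidenceSet_adj ..).2 ⟨hij, hi, hj⟩))
    (supp_deleteIncidenceSet_sup_subset hE)
    (fun i hi => (card_nbrs_deleteIncidenceSet_sup_le hE (hE₁ i hi)).trans (hd i)) hs
    (mem_supp.2 ⟨t, he.symm⟩) he.ne' hew
    (Nat.le_of_lt_succ ((card_nbrs_deleteIncidenceSet_sup_lt he heE).trans_le (hd e)))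

end DegreeFive

section TightSets

open SimpleGraph

variable {W : Type*} {C : SimpleGraph W} {p : W → Fin 3 → ℝ} {x y z w : W} {T X : Finset W}

theorem exists_not_adj_of_dof_eq (h₅ : 5 ≤ #T) (hT : dof C T = 12) :
    ∃ x ∈ T, ∃ w ∈ T, x ≠ w ∧ ¬ C.Adj x w := by
  by_contra! h
  have hdof := dof_of_isClique (F := C) (X := T) fun x hx w hw hxw => h x hx w hw hxw
  have : (5 : ℤ) ≤ #T := by exact_mod_cast h₅
  nlinarith

theorem IsSparse.fourteen_le_dof_of_not_isTight (hs : IsSparse C) (hX : ¬ IsTight C X)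
    (h₄ : 4 ≤ #X) : 14 ≤ dof C X := by
  by_contra! hlt
  have := hs X (by omega)
  obtain ⟨k, hk⟩ := even_dof C X
  exact hX ⟨h₄, by omega⟩

theorem IsTight.of_not_adj (hs : IsSparse C) (h₃ : 3 ≤ #X) (hx : x ∈ X) (hw : w ∈ X)
    (hxw : x ≠ w) (hn : ¬ C.Adj x w) (hlt : dof C X < 14) : IsTight C X := by
  by_cases h₄ : #X ≤ 4
  · exact absurd (fourteen_le_dof_of_not_adj h₃ h₄ hx hw hxw hn) hlt.not_ge
  · by_contra hX
    exact absurd (hs.fourteen_le_dof_of_not_isTight hX (by omega)) hlt.not_ge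

theorem not_sdiff_edge_adj (hn : ¬ C.Adj x w) : ¬ (C \ edge x y).Adj x w := fun h =>
  hn ((sdiff_adj ..).1 h).1

theorem dof_sdiff_edge (hxy : C.Adj x y) (hx : x ∈ X) (hy : y ∈ X) :
    dof (C \ edge x y) X = dof C X + 2 := by
  have h := dof_sup_edge (F := C \ edge x y) hxy.ne
    (fun h => ((sdiff_adj ..).1 h).2 ((edge_adj ..).2 ⟨.inl ⟨rfl, rfl⟩, hxy.ne⟩)) hx hy
  rw [sdiff_sup_cancel ((edge_le_iff ..).2 (.inr hxy))] at h
  omega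

variable [Fintype W]

theorem card_nbrs_sdiff_edge_sup_edge_le (hxy : C.Adj x y) {i : W} (hiw : i ≠ w) :
    #(nbrs (C \ edge x y ⊔ edge x w) i) ≤ #(nbrs C i) := by
  classical
  by_cases hix : i = x
  · subst hix
    calc #(nbrs (C \ edge i y ⊔ edge i w) i) ≤ #(insert w ((nbrs C i).erase y)) :=
          card_le_card fun j hj => by
            simp only [mem_nbrs, sup_adj, sdiff_adj, edge_adj] at hj
            simp only [mem_insert, mem_erase, mem_nbrs]
            grind [hxy.ne]
      _ ≤ #((nbrs C i).erase y) + 1 := card_insert_le ..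
      _ = #(nbrs C i) := card_erase_add_one (mem_nbrs.2 hxy)
  · refine card_le_card fun j hj => ?_
    simp only [mem_nbrs, sup_adj, sdiff_adj, edge_adj] at hj ⊢
    grind

theorem card_nbrs_sdiff_edge_sup_edge_lt (hxy : C.Adj x y) (hyw : y ≠ w) :
    #(nbrs (C \ edge x y ⊔ edge x w) y) < #(nbrs C y) := by
  refine card_lt_card ((ssubset_iff_of_subset fun j hj => ?_).2 ⟨x, mem_nbrs.2 hxy.symm, ?_⟩)
  all_goals simp only [mem_nbrs, sup_adj, sdiff_adj, edge_adj] at *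
  all_goals grind [hxy.ne]

/- Otherwise `X` would be tight, its intersection with `T` too, and `y` would separate the latter
from `T`. -/
theorem IsSparse.fourteen_le_dof_of_minimal (hs : IsSparse C) (hdx : #(nbrs C x) ≤ 5)
    (hT : Minimal (fun S => IsTight C S ∧ x ∈ S ∧ w ∈ S) T) (hxw : x ≠ w) (hn : ¬ C.Adj x w)
    (hyT : y ∈ T) (hyX : y ∉ X) (hxX : x ∈ X) (hwX : w ∈ X) (h₃ : 3 ≤ #X) : 14 ≤ dof C X := by
  classical
  obtain ⟨hT₁₂, hxT, hwT⟩ := hT.prop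
  by_contra! hlt
  have hX : IsTight C X := .of_not_adj hs h₃ hxX hwX hxw hn hlt
  have hxI : x ∈ X ∩ T := mem_inter.2 ⟨hxX, hxT⟩
  have hwI : w ∈ X ∩ T := mem_inter.2 ⟨hwX, hwT⟩
  obtain ⟨q, hq⟩ : (X ∩ T ∩ nbrs C x).Nonempty := by
    have := hX.three_le_degIn hs hxX
    have := hT₁₂.three_le_degIn hs hxT
    have := degIn_union_add_inter C X T x
    have := degIn_le_card_nbrs C (X ∪ T) x
    have := degIn_eq_card_inter C (X ∩ T) x
    exact card_pos.1 (by omega)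
  obtain ⟨hqI, hxq⟩ := mem_inter.1 hq
  rw [mem_nbrs] at hxq
  have hI₃ : 3 ≤ #(X ∩ T) := two_lt_card.2
    ⟨x, hxI, w, hwI, q, hqI, hxw, hxq.ne, fun h => hn (h ▸ hxq)⟩
  have hI : IsTight C (X ∩ T) := .of_not_adj hs hI₃ hxI hwI hxw hn (by
    rw [(hs.dof_union_and_inter hX.dof_eq hT₁₂.dof_eq hI₃).2]
    norm_num)
  exact hyX (mem_inter.1 (hT.2 ⟨hI, hxI, hwI⟩ inter_subset_right hyT)).1

theorem IsSparse.sdiff_edge_sup_edge (hs : IsSparse C) (hdx : #(nbrs C x) ≤ 5)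
    (hT : Minimal (fun S => IsTight C S ∧ x ∈ S ∧ w ∈ S) T) (hxw : x ≠ w) (hn : ¬ C.Adj x w)
    (hyT : y ∈ T) (hxy : C.Adj x y) : IsSparse (C \ edge x y ⊔ edge x w) := fun X h₃ => by
  have hle := dof_anti (sdiff_le : C \ edge x y ≤ C) X
  by_cases h : x ∈ X ∧ w ∈ X
  · rw [dof_sup_edge hxw (not_sdiff_edge_adj hn) h.1 h.2]
    by_cases hyX : y ∈ X
    · linarith [dof_sdiff_edge hxy h.1 hyX, hs X h₃]
    · linarith [hs.fourteen_le_dof_of_minimal hdx hT hxw hn hyT hyX h.1 h.2 h₃]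
  · rw [dof_sup_edge_of_not_mem _ h]
    exact (hs X h₃).trans hle

theorem IsCircuit.exists_stress_of_isTight (hp : Generic p) (hC : IsCircuit p C) (hT : IsTight C T)
    (hz : z ∈ supp C) (hzT : z ∉ T) (hx : x ∈ T) (hw : w ∈ T) (hxw : x ≠ w) (hn : ¬ C.Adj x w) :
    ∃ ω, IsStress p (C ⊔ edge x w) ω ∧ ω x w ≠ 0 := by
  let H : SimpleGraph W := (C.induce T).spanningCoe
  have hH {i j : W} : H.Adj i j ↔ C.Adj i j ∧ i ∈ T ∧ j ∈ T := by simp [H]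
  have hHn : ¬ H.Adj x w := fun h => hn (hH.1 h).1
  obtain ⟨ω, hω, hne⟩ : ∃ ω, IsStress p (H ⊔ edge x w) ω ∧ ω ≠ 0 := by
    suffices ¬ StressFree p (H ⊔ edge x w) by simpa [StressFree] using this
    intro hfree
    have h₁₂ := hfree.isSparse hp T (by have := hT.four_le_card; omega)
    rw [dof_sup_edge hxw hHn hx hw, dof_congr (F' := C) fun i hi j hj => by simp [hH, hi, hj],
      hT.dof_eq] at h₁₂
    norm_num at h₁₂
  refine ⟨ω, hω.mono (sup_le_sup_right (spanningCoe_induce_le ..) _), fun h => hne ?_⟩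
  have hlt : H < C := by
    refine (spanningCoe_induce_le ..).lt_of_ne fun heq => ?_
    obtain ⟨j, hj⟩ := mem_supp.1 hz
    rw [← heq, hH] at hj
    exact hzT hj.2.1
  refine hC.stressFree_of_lt hlt ω ((hω.sdiff_edge h).mono ?_)
  rw [sup_sdiff_right_self]
  exact sdiff_le

theorem IsCircuit.not_stressFree_sdiff_edge_sup_edge (hp : Generic p) (hC : IsCircuit p C)
    (hT : IsTight C T) (hz : z ∈ supp C) (hzT : z ∉ T) (hx : x ∈ T) (hw : w ∈ T) (hxw : x ≠ w)
    (hn : ¬ C.Adj x w) (hxy : C.Adj x y) :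
    ¬ StressFree p (C \ edge x y ⊔ edge x w) := fun hfree => by
  obtain ⟨ω, hω, hωne⟩ := hC.exists_stress_ne_zero
  obtain ⟨ω', hω', hne⟩ := hC.exists_stress_of_isTight hp hT hz hzT hx hw hxw hn
  have hcomb := ((hω.mono le_sup_left).smul (ω' x y)).sub (hω'.smul (ω x y))
  have hle : (C ⊔ edge x w) \ edge x y ≤ C \ edge x y ⊔ edge x w := by
    rw [sup_sdiff]
    exact sup_le_sup_left sdiff_le _
  have hzero := congrFun₂ (hfree _ ((hcomb.sdiff_edge (by simp [mul_comm])).mono hle)) x w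
  simp [hω.eq_zero_of_not_adj x w hn, hωne x y hxy, hne] at hzero

theorem IsCircuit.supp_subset_of_dof_eq (hp : Generic p) (hC : IsCircuit p C) (hs : IsSparse C)
    (hd : ∀ i, #(nbrs C i) ≤ 5) (h₅ : 5 ≤ #T) (hT : dof C T = 12) : supp C ⊆ T := fun z hz => by
  classical
  by_contra hzT
  obtain ⟨x, hxT, w, hwT, hxw, hn⟩ := exists_not_adj_of_dof_eq h₅ hT
  obtain ⟨S, hST, hS⟩ := (Set.toFinite {S | IsTight C S ∧ x ∈ S ∧ w ∈ S}).exists_le_minimal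
    (a := T) ⟨⟨by omega, hT⟩, hxT, hwT⟩
  obtain ⟨hS₁₂, hxS, hwS⟩ := hS.prop
  obtain ⟨y, hy⟩ : (S ∩ nbrs C x).Nonempty := by
    have := hS₁₂.three_le_degIn hs hxS
    rw [degIn_eq_card_inter] at this
    exact card_pos.1 (by omega)
  obtain ⟨hyS, hxy⟩ := mem_inter.1 hy
  rw [mem_nbrs] at hxy
  have hyw : y ≠ w := fun h => hn (h ▸ hxy)
  have hw : w ∈ supp C := by
    have := hS₁₂.three_le_degIn hs hwS
    have := degIn_le_card_nbrs C S w
    obtain ⟨j, hj⟩ := card_pos.1 (show 0 < #(nbrs C w) by omega)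
    exact mem_supp.2 ⟨j, mem_nbrs.1 hj⟩
  refine hC.not_stressFree_sdiff_edge_sup_edge hp hS₁₂ hz (fun h => hzT (hST h)) hxS hwS hxw hn
    hxy ?_
  have hF {i j : W} : (C \ edge x y ⊔ edge x w).Adj i j ↔
      C.Adj i j ∧ ¬ (edge x y).Adj i j ∨ (edge x w).Adj i j := by rw [sup_adj, sdiff_adj]
  refine hC.stressFree_of_isSparse hp hxw (hd x) (fun i j hi hj hij => ?_) (fun i hi => ?_)
    (fun i hi => ?_) (hs.sdiff_edge_sup_edge (hd x) hS hxw hn hyS hxy) (mem_supp.2 ⟨x, hxy.symm⟩)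
    hxy.ne' hyw ?_
  · exact hF.2 (.inl ⟨hij, by simp [edge_adj, hi, hj]⟩)
  · obtain ⟨j, hj⟩ := mem_supp.1 hi
    rw [hF, edge_adj (s := x) (t := w)] at hj
    rcases hj with h | ⟨⟨rfl, rfl⟩ | ⟨rfl, rfl⟩, -⟩
    exacts [mem_supp.2 ⟨j, h.1⟩, mem_supp.2 ⟨y, hxy⟩, hw]
  · exact (card_nbrs_sdiff_edge_sup_edge_le hxy hi).trans (hd i)
  · exact Nat.le_of_lt_succ ((card_nbrs_sdiff_edge_sup_edge_lt hxy hyw).trans_le (hd y))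

end TightSets

section MinimalCounterexample

open SimpleGraph

variable {W : Type*} {C : SimpleGraph W} {p : W → Fin 3 → ℝ} {v a b c d : W}

theorem IsSparse.deleteIncidenceSet_sup_edge_sup_edge (hs : IsSparse C) (ha : C.Adj v a)
    (hb : C.Adj v b) (hc : C.Adj v c) (hd : C.Adj v d)
    (hab : ∀ X : Finset W, v ∉ X → 3 ≤ #X → a ∈ X → b ∈ X → 14 ≤ dof C X)
    (hcd : ∀ X : Finset W, v ∉ X → 3 ≤ #X → c ∈ X → d ∈ X → 14 ≤ dof C X)
    (h₁₆ : ∀ X : Finset W, v ∉ X → 4 ≤ #X → a ∈ X → b ∈ X → c ∈ X → d ∈ X → 16 ≤ dof C X) :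
    IsSparse (C.deleteIncidenceSet v ⊔ (edge a b ⊔ edge c d)) := by
  refine isSparse_of_isolated (not_adj_deleteIncidenceSet_sup fun i j h =>
    ((sup_adj ..).1 h).elim (adj_of_edge_adj ha hb) (adj_of_edge_adj hc hd)) fun X h₃ hvX => ?_
  rcases h₃.eq_or_lt with h₃' | h₄
  · exact twelve_le_dof_of_card_eq_three _ h₃'.symm
  have hle_ab := dof_sub_two_le_dof_sup_edge (C.deleteIncidenceSet v) a b X
  have hle_cd := dof_sub_two_le_dof_sup_edge (C.deleteIncidenceSet v ⊔ edge a b) c d X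
  rw [← sup_assoc]
  rw [dof_deleteIncidenceSet C hvX] at hle_ab
  by_cases hX : a ∈ X ∧ b ∈ X <;> by_cases hX' : c ∈ X ∧ d ∈ X
  · linarith [h₁₆ X hvX h₄ hX.1 hX.2 hX'.1 hX'.2]
  · rw [dof_sup_edge_of_not_mem _ hX']
    linarith [hab X hvX h₃ hX.1 hX.2]
  · rw [dof_sup_edge_of_not_mem _ hX, dof_deleteIncidenceSet C hvX] at hle_cd
    linarith [hcd X hvX h₃ hX'.1 hX'.2]
  · rw [dof_sup_edge_of_not_mem _ hX', dof_sup_edge_of_not_mem _ hX, dof_deleteIncidenceSet C hvX]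
    exact hs X h₃

variable [Fintype W]

/-- The situation to be refuted: a sparse circuit of maximum degree at most five in the rigidity
matroid of a generic configuration. -/
structure IsCounterexample (p : W → Fin 3 → ℝ) (C : SimpleGraph W) : Prop where
  generic : Generic p
  isCircuit : IsCircuit p C
  isSparse : IsSparse C
  card_nbrs_le (i : W) : #(nbrs C i) ≤ 5

namespace IsCounterexample

variable {X : Finset W}

theorem card_nbrs (h : IsCounterexample p C) (hv : v ∈ supp C) : #(nbrs C v) = 5 := by
  obtain ⟨j, hj⟩ := mem_supp.1 hv
  exact (h.card_nbrs_le v).antisymm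
    (h.isCircuit.five_le_card_nbrs h.generic h.isSparse (fun i _ => h.card_nbrs_le i) hv hj.ne)

theorem supp_subset_of_dof_eq (h : IsCounterexample p C) (h₅ : 5 ≤ #X) (hX : dof C X = 12) :
    supp C ⊆ X :=
  h.isCircuit.supp_subset_of_dof_eq h.generic h.isSparse h.card_nbrs_le h₅ hX

theorem fourteen_le_dof (h : IsCounterexample p C) (hv : v ∈ supp C) (hvX : v ∉ X) (h₃ : 3 ≤ #X)
    (ha : a ∈ X) (hb : b ∈ X) (hab : a ≠ b) (hn : ¬ C.Adj a b) : 14 ≤ dof C X := by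
  by_contra! hlt
  have hX := IsTight.of_not_adj h.isSparse h₃ ha hb hab hn hlt
  rcases hX.four_le_card.eq_or_lt with h₄ | h₅
  · exact absurd (fourteen_le_dof_of_not_adj h₃ h₄.ge ha hb hab hn) hlt.not_ge
  · exact hvX (h.supp_subset_of_dof_eq h₅ hX.dof_eq hv)

theorem sixteen_le_dof (h : IsCounterexample p C) (hv : v ∈ supp C) (hvX : v ∉ X)
    (h₄ : 4 ≤ degIn C X v) : 16 ≤ dof C X := by
  classical
  by_contra! hlt
  obtain ⟨k, hk⟩ := even_dof C X
  have hcard : (4 : ℤ) ≤ #X := h₄.trans (degIn_le_card C X v)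
  have hcard' : #(insert v X) = #X + 1 := card_insert_of_notMem hvX
  have hins := dof_insert C hvX
  have h₁₂ := h.isSparse (insert v X) (by omega)
  have hsupp := h.supp_subset_of_dof_eq (X := insert v X) (by omega) (by omega)
  have h₅ : #(nbrs C v) ≤ degIn C X v := card_le_degIn (fun y hy => mem_nbrs.1 hy) fun y hy =>
    mem_of_mem_insert_of_ne (hsupp (mem_supp.2 ⟨v, (mem_nbrs.1 hy).symm⟩)) (mem_nbrs.1 hy).ne'
  rw [h.card_nbrs hv] at h₅
  push_cast at h₅
  omega

theorem exists_adj_notMem (h : IsCounterexample p C) (hv : v ∈ supp C) (hX : #X ≤ 4) :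
    ∃ e, C.Adj v e ∧ e ∉ X := by
  obtain ⟨e, he, heX⟩ := exists_mem_notMem_of_card_lt_card (s := X) (t := nbrs C v)
    (by rw [h.card_nbrs hv]; omega)
  exact ⟨e, mem_nbrs.1 he, heX⟩

theorem stressFree_sup_edge (h : IsCounterexample p C) (hv : v ∈ supp C) (ha : C.Adj v a)
    (hb : C.Adj v b) (hab : a ≠ b) (hn : ¬ C.Adj a b) :
    StressFree p (C.deleteIncidenceSet v ⊔ edge a b) := by
  classical
  obtain ⟨e, he, heab⟩ := h.exists_adj_notMem hv (X := {a, b}) (card_le_two.trans (by norm_num))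
  simp only [mem_insert, mem_singleton, not_or] at heab
  exact h.isCircuit.stressFree_deleteIncidenceSet_sup h.generic h.card_nbrs_le ha.ne
    (fun _ _ => adj_of_edge_adj ha hb) (fun i _ => card_nbrs_edge_le_one a b i)
    (h.isSparse.deleteIncidenceSet_sup_edge ha hb fun X hvX h₄ haX hbX =>
      h.fourteen_le_dof hv hvX (by omega) haX hbX hab hn) he heab.1
    (fun j hj => by simp [edge_adj, heab] at hj)

theorem stressFree_sup_edge_sup_edge (h : IsCounterexample p C) (hv : v ∈ supp C)
    (ha : C.Adj v a) (hb : C.Adj v b) (hc : C.Adj v c) (hd : C.Adj v d) (hab : a ≠ b)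
    (hcd : c ≠ d) (hbc : b ≠ c) (hbd : b ≠ d) (hnab : ¬ C.Adj a b) (hncd : ¬ C.Adj c d)
    (h₁₆ : ∀ X : Finset W, v ∉ X → 4 ≤ #X → a ∈ X → b ∈ X → c ∈ X → d ∈ X → 16 ≤ dof C X) :
    StressFree p (C.deleteIncidenceSet v ⊔ (edge a b ⊔ edge c d)) := by
  classical
  obtain ⟨e, he, heabcd⟩ := h.exists_adj_notMem hv (X := {a, b, c, d}) card_le_four
  simp only [mem_insert, mem_singleton, not_or] at heabcd
  refine h.isCircuit.stressFree_deleteIncidenceSet_sup h.generic h.card_nbrs_le ha.ne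
    (fun i j hij => ((sup_adj ..).1 hij).elim (adj_of_edge_adj ha hb) (adj_of_edge_adj hc hd))
    (fun i hia => ?_)
    (h.isSparse.deleteIncidenceSet_sup_edge_sup_edge ha hb hc hd
      (fun X hvX h₃ haX hbX => h.fourteen_le_dof hv hvX h₃ haX hbX hab hnab)
      (fun X hvX h₃ hcX hdX => h.fourteen_le_dof hv hvX h₃ hcX hdX hcd hncd) h₁₆) he heabcd.1
    (fun j hj => by simp [edge_adj, heabcd] at hj)
  by_cases hib : i = b
  · refine (card_le_card fun j hj => ?_).trans (card_nbrs_edge_le_one a b i)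
    simp_all [mem_nbrs, edge_adj]
  · refine (card_le_card fun j hj => ?_).trans (card_nbrs_edge_le_one c d i)
    simp_all [mem_nbrs, edge_adj]

theorem stressFree_sup_edge_sup_edge_of_disjoint (h : IsCounterexample p C) (hv : v ∈ supp C)
    (ha : C.Adj v a) (hb : C.Adj v b) (hc : C.Adj v c) (hd : C.Adj v d)
    (hne : [a, b, c, d].Nodup) (hnab : ¬ C.Adj a b) (hncd : ¬ C.Adj c d) :
    StressFree p (C.deleteIncidenceSet v ⊔ (edge a b ⊔ edge c d)) := by
  classical
  simp only [List.nodup_cons, List.mem_cons, List.not_mem_nil, not_or, or_false] at hne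
  refine h.stressFree_sup_edge_sup_edge hv ha hb hc hd hne.1.1 hne.2.2.1 hne.2.1.1 hne.2.1.2 hnab
    hncd fun X hvX _ haX hbX hcX hdX => h.sixteen_le_dof hv hvX ?_
  have hcard : #{a, b, c, d} = 4 := by simp [hne]
  have := card_le_degIn (F := C) (X := X) (T := {a, b, c, d}) (z := v)
    (by simp [ha, hb, hc, hd]) (by simp [insert_subset_iff, haX, hbX, hcX, hdX])
  rwa [hcard] at this

end IsCounterexample

end MinimalCounterexample

section Motions

open SimpleGraph

variable {W : Type*}

/-- Half the rate of change of the squared distance of `p i` and `p j` when every point `p i` moves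
with velocity `q i`. -/
def strain (p q : W → Fin 3 → ℝ) (i j : W) : ℝ := (p i - p j) ⬝ᵥ (q i - q j)

/-- The velocities `q` are an infinitesimal motion of the framework `(F, p)`. -/
def IsMotion (p : W → Fin 3 → ℝ) (F : SimpleGraph W) (q : W → Fin 3 → ℝ) : Prop :=
  ∀ i j, F.Adj i j → strain p q i j = 0

variable {p q : W → Fin 3 → ℝ} {F F' : SimpleGraph W}

theorem strain_comm (p q : W → Fin 3 → ℝ) (i j : W) : strain p q i j = strain p q j i := by
  rw [strain, ← neg_sub, ← neg_sub (q j), neg_dotProduct_neg, strain]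

theorem strain_self (p q : W → Fin 3 → ℝ) (i : W) : strain p q i i = 0 := by simp [strain]

theorem IsMotion.mono (h : F ≤ F') (hq : IsMotion p F' q) : IsMotion p F q :=
  fun i j hij => hq i j (h hij)

variable [Fintype W]

theorem sum_mul_strain (p q : W → Fin 3 → ℝ) (c : W → W → ℝ) :
    ∑ i, ∑ j, c i j * strain p q i j = ∑ i, q i ⬝ᵥ load p (fun i j => c i j + c j i) i := by
  have hload (i : W) : q i ⬝ᵥ load p (fun i j => c i j + c j i) i =
      ∑ j, c i j * ((p i - p j) ⬝ᵥ q i) + ∑ j, c j i * ((p i - p j) ⬝ᵥ q i) := by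
    simp only [dotProduct, load, Pi.sub_apply, mul_sum, ← sum_add_distrib]
    rw [sum_comm]
    exact sum_congr rfl fun j _ => sum_congr rfl fun k _ => by ring
  simp only [hload, sum_add_distrib]
  rw [sum_comm (f := fun i j => c j i * ((p i - p j) ⬝ᵥ q i)), ← sum_add_distrib]
  refine sum_congr rfl fun i _ => ?_
  rw [← sum_add_distrib]
  refine sum_congr rfl fun j _ => ?_
  rw [strain, dotProduct_sub, ← neg_sub (p j), neg_dotProduct _ (q j)]
  ring

/-- The strain of the pair `i, j` as a linear functional of the velocities. -/
def strainForm (p : W → Fin 3 → ℝ) (i j : W) : (W → Fin 3 → ℝ) →ₗ[ℝ] ℝ where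
  toFun q := strain p q i j
  map_add' q r := by
    rw [strain, strain, strain, ← dotProduct_add]
    congr 1
    simp only [Pi.add_apply]
    abel
  map_smul' c q := by
    rw [strain, strain, RingHom.id_apply, ← dotProduct_smul, smul_sub, Pi.smul_apply, Pi.smul_apply]

-- The functional `q ↦ ∑ i, q i ⬝ᵥ f i` vanishes wherever the strains of all edges do, so it is a
-- linear combination of these strains.
theorem exists_load_eq {f : W → Fin 3 → ℝ} (h : ∀ q, IsMotion p F q → ∑ i, q i ⬝ᵥ f i = 0) :
    ∃ c : W → W → ℝ, (∀ i j, c i j = c j i) ∧ (∀ i j, ¬ F.Adj i j → c i j = 0) ∧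
      load p c = f := by
  classical
  let pairing : (W → Fin 3 → ℝ) →ₗ[ℝ] ℝ :=
    ∑ i, (dotProductBilin ℝ ℝ (f i)).comp (LinearMap.proj i)
  let form (e : W × W) : (W → Fin 3 → ℝ) →ₗ[ℝ] ℝ :=
    if F.Adj e.1 e.2 then strainForm p e.1 e.2 else 0
  have hpairing (q : W → Fin 3 → ℝ) : pairing q = ∑ i, q i ⬝ᵥ f i := by
    simp [pairing, dotProduct_comm]
  have hspan : pairing ∈ Submodule.span ℝ (Set.range form) := by
    refine mem_span_of_iInf_ker_le_ker fun q hq => ?_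
    rw [LinearMap.mem_ker, hpairing]
    refine h q fun i j hij => ?_
    have := (Submodule.mem_iInf _).1 hq (i, j)
    rwa [LinearMap.mem_ker, show form (i, j) = strainForm p i j from if_pos hij] at this
  obtain ⟨b, hb⟩ := (Submodule.mem_span_range_iff_exists_fun ℝ).1 hspan
  let c (i j : W) : ℝ := if F.Adj i j then b (i, j) else 0
  have hc (q : W → Fin 3 → ℝ) :
      ∑ i, q i ⬝ᵥ f i = ∑ i, q i ⬝ᵥ load p (fun i j => c i j + c j i) i := by
    rw [← sum_mul_strain, ← hpairing, ← hb, LinearMap.sum_apply, Fintype.sum_prod_type]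
    refine sum_congr rfl fun i _ => sum_congr rfl fun j _ => ?_
    by_cases hij : F.Adj i j <;> simp [form, c, hij, strainForm]
  refine ⟨fun i j => c i j + c j i, fun i j => add_comm _ _, fun i j hij => ?_, ?_⟩
  · simp [c, hij, F.adj_comm j i]
  · refine funext fun i => dotProduct_eq _ _ fun x => ?_
    simpa [Pi.single_apply, ite_apply, dotProduct_comm, apply_ite] using
      (hc (Pi.single i x)).symm

theorem IsStress.sum_mul_strain_eq_zero {ω : W → W → ℝ} (hω : IsStress p F ω)
    (q : W → Fin 3 → ℝ) : ∑ i, ∑ j, ω i j * strain p q i j = 0 := by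
  have hload : load p (fun i j => ω i j + ω j i) = 0 := by
    simp only [← hω.symm _ _]
    exact (load_add p ω ω).trans (by rw [hω.load_eq_zero, add_zero])
  simp [sum_mul_strain, hload]

theorem StressFree.exists_isMotion_sdiff_edge (hF : StressFree p F) {a b : W} (hab : F.Adj a b) :
    ∃ q, IsMotion p (F \ edge a b) q ∧ strain p q a b ≠ 0 := by
  classical
  by_contra! hcon
  have hload (q : W → Fin 3 → ℝ) :
      ∑ i, q i ⬝ᵥ load p (edgeWeight a b 1) i = strain p q a b := by
    have hsingle (i : W) (x : Fin 3 → ℝ) :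
        ∑ j, q j ⬝ᵥ (Pi.single i x : W → Fin 3 → ℝ) j = q i ⬝ᵥ x := by
      rw [Fintype.sum_eq_single i fun j hj => by rw [Pi.single_eq_of_ne hj, dotProduct_zero],
        Pi.single_eq_same]
    simp only [load_edgeWeight, one_smul, Pi.add_apply, dotProduct_add, sum_add_distrib, hsingle]
    rw [strain, dotProduct_comm, dotProduct_comm (q b), ← neg_sub (p a) (p b), neg_dotProduct,
      dotProduct_sub]
    ring
  obtain ⟨c, hsymm, hc, hcload⟩ := exists_load_eq (f := load p (edgeWeight a b 1))
    fun q hq => (hload q).trans (hcon q hq)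
  have hstress : IsStress p F (c - edgeWeight a b 1) := by
    refine ⟨fun i j => ?_, fun i j hij => ?_, ?_⟩
    · simp [hsymm i j, edgeWeight_comm a b 1 i j]
    · simp [hc i j fun h => hij h.1, edgeWeight_of_not_adj hab hij]
    · rw [load_sub, hcload, sub_self]
  have hzero := congrFun₂ (hF _ hstress) a b
  have hcab : c a b = 0 := hc a b fun h => h.2 ((adj_edge ..).2 ⟨rfl, hab.ne⟩)
  simp [hcab, edgeWeight_self] at hzero

theorem exists_isMotion_of_sup_edge {a b : W} (h : StressFree p (F ⊔ edge a b)) (hab : a ≠ b)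
    (hn : ¬ F.Adj a b) : ∃ q, IsMotion p F q ∧ strain p q a b ≠ 0 := by
  obtain ⟨q, hq, hne⟩ := h.exists_isMotion_sdiff_edge (a := a) (b := b)
    (Or.inr ((adj_edge ..).2 ⟨rfl, hab⟩))
  refine ⟨q, hq.mono fun i j hij => (sdiff_adj ..).2 ⟨Or.inl hij, fun h' => ?_⟩, hne⟩
  rcases ((edge_adj ..).1 h').1 with ⟨rfl, rfl⟩ | ⟨rfl, rfl⟩
  exacts [hn hij, hn hij.symm]

theorem exists_isMotion_of_sup_edge_sup_edge {a b c d : W}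
    (h : StressFree p (F ⊔ (edge a b ⊔ edge c d))) (hab : a ≠ b) (hcd : c ≠ d)
    (hn : ¬ F.Adj a b) (hn' : ¬ F.Adj c d) (hne : s(a, b) ≠ s(c, d)) :
    ∃ q q', IsMotion p F q ∧ IsMotion p F q' ∧
      strain p q a b * strain p q' c d ≠ strain p q' a b * strain p q c d := by
  have hsup {x y z w : W} (hn : ¬ F.Adj x y) (hne : s(z, w) ≠ s(x, y)) :
      ¬ (F ⊔ edge z w).Adj x y :=
    fun h => h.elim hn fun h => hne ((adj_edge ..).1 h).1
  obtain ⟨q, hq, hqab⟩ := exists_isMotion_of_sup_edge (F := F ⊔ edge c d)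
    (by rwa [sup_assoc, sup_comm (edge c d)]) hab (hsup hn hne.symm)
  obtain ⟨q', hq', hqcd⟩ := exists_isMotion_of_sup_edge (F := F ⊔ edge a b)
    (by rwa [sup_assoc]) hcd (hsup hn' hne)
  refine ⟨q, q', hq.mono le_sup_left, hq'.mono le_sup_left, ?_⟩
  rw [hq c d (Or.inr ((adj_edge ..).2 ⟨rfl, hcd⟩)), mul_zero]
  exact mul_ne_zero hqab hqcd

end Motions

section AffineDependences

variable {W : Type*} [Fintype W] {p : W → Fin 3 → ℝ} {N : Finset W} {α β ν : W → ℝ}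

/-- The weights `α`, supported on `N`, form an affine dependence of the points `p i`. -/
structure AffineDependence (p : W → Fin 3 → ℝ) (N : Finset W) (α : W → ℝ) : Prop where
  eq_zero_of_notMem : ∀ i ∉ N, α i = 0
  sum_eq_zero : ∑ i, α i = 0
  sum_smul_eq_zero : ∑ i, α i • p i = 0

namespace AffineDependence

theorem eq_zero_of_affineIndependent (hα : AffineDependence p N α)
    (hN : AffineIndependent ℝ fun i : N => p i) : α = 0 :=
  _root_.eq_zero_of_affineIndependent hN hα.eq_zero_of_notMem hα.sum_eq_zero fun k => by
    simpa using congrFun hα.sum_smul_eq_zero k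

theorem eq_zero (hα : AffineDependence p N α) (hp : Generic p) (hN : #N ≤ 4) : α = 0 :=
  hα.eq_zero_of_affineIndependent (hp.affineIndependent hN)

theorem sub_smul (hν : AffineDependence p N ν) (hα : AffineDependence p N α) (τ : ℝ) :
    AffineDependence p N (ν - τ • α) where
  eq_zero_of_notMem i hi := by simp [hν.eq_zero_of_notMem i hi, hα.eq_zero_of_notMem i hi]
  sum_eq_zero := by simp [hν.sum_eq_zero, hα.sum_eq_zero, ← mul_sum]
  sum_smul_eq_zero := by
    simp [_root_.sub_smul, hν.sum_smul_eq_zero, hα.sum_smul_eq_zero, mul_smul, ← smul_sum]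

theorem erase [DecidableEq W] (hα : AffineDependence p N α) {i : W} (h : α i = 0) :
    AffineDependence p (N.erase i) α := by
  refine ⟨fun j hj => ?_, hα.sum_eq_zero, hα.sum_smul_eq_zero⟩
  by_cases hji : j = i
  · rw [hji, h]
  · exact hα.eq_zero_of_notMem j fun hjN => hj (mem_erase.2 ⟨hji, hjN⟩)

theorem eq_zero_of_mem (hα : AffineDependence p N α) (hp : Generic p) (hN : #N ≤ 5) {i : W}
    (hi : i ∈ N) (h : α i = 0) : α = 0 := by
  classical exact (hα.erase h).eq_zero hp (by rw [card_erase_of_mem hi]; omega)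

theorem exists_eq_smul (hα : AffineDependence p N α) (hp : Generic p) (hN : #N = 5)
    (hne : ∀ i ∈ N, α i ≠ 0) (hν : AffineDependence p N ν) : ∃ τ : ℝ, ν = τ • α := by
  obtain ⟨i, hi⟩ : N.Nonempty := card_pos.1 (by omega)
  have hzero := (hν.sub_smul hα (ν i / α i)).eq_zero_of_mem hp hN.le hi
    (by simp [div_mul_cancel₀ _ (hne i hi)])
  exact ⟨ν i / α i, sub_eq_zero.1 hzero⟩

end AffineDependence

theorem Generic.exists_affineDependence (hp : Generic p) (hN : #N = 5) :
    ∃ α, AffineDependence p N α ∧ ∀ i ∈ N, α i ≠ 0 := by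
  classical
  obtain ⟨f, hsmul, hsum, x, hx, hfx⟩ :=
    Module.exists_nontrivial_relation_sum_zero_of_finrank_succ_lt_card (R := ℝ) (t := N.image p)
      (by simp [card_image_of_injective N hp.injective, hN])
  obtain ⟨i, hi, rfl⟩ := mem_image.1 hx
  rw [sum_image hp.injective.injOn] at hsmul hsum
  have hα : AffineDependence p N fun i => if i ∈ N then f (p i) else 0 :=
    ⟨fun i hi => if_neg hi, by simpa using hsum, by simpa [ite_smul] using hsmul⟩
  exact ⟨_, hα, fun j hj h => hfx (by
    simpa [hi] using congrFun (hα.eq_zero_of_mem hp hN.le hj h) i)⟩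

end AffineDependences

section Moments

open SimpleGraph

variable {W : Type*} [Fintype W] {p q : W → Fin 3 → ℝ} {N : Finset W} {α β : W → ℝ}
  {x : Fin 3 → ℝ}

/-- The power of the forces `α i • (p i - x)`, applied to points moving with velocities `q i`. -/
def moment (p : W → Fin 3 → ℝ) (α : W → ℝ) (x : Fin 3 → ℝ) (q : W → Fin 3 → ℝ) : ℝ :=
  ∑ i, α i * ((p i - x) ⬝ᵥ q i)

theorem moment_eq_sub (p : W → Fin 3 → ℝ) (α : W → ℝ) (x : Fin 3 → ℝ) (q : W → Fin 3 → ℝ) :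
    moment p α x q = ∑ i, α i * (p i ⬝ᵥ q i) - x ⬝ᵥ ∑ i, α i • q i := by
  simp [moment, sub_dotProduct, mul_sub, sum_sub_distrib, dotProduct_sum]

theorem moment_add_smul (p : W → Fin 3 → ℝ) (α β : W → ℝ) (s t : ℝ) (x : Fin 3 → ℝ)
    (q : W → Fin 3 → ℝ) :
    moment p (s • α + t • β) x q = s * moment p α x q + t * moment p β x q := by
  simp [moment, add_mul, sum_add_distrib, mul_sum, mul_assoc]

theorem sum_mul_moment (hβ : ∑ a, β a • (p a - x) = 0) (α : W → ℝ) (q : W → Fin 3 → ℝ) :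
    ∑ a, β a * moment p α (p a) q = (∑ a, β a) * moment p α x q := by
  have hx : ∑ a, β a • p a = (∑ a, β a) • x := by
    simpa [smul_sub, sum_sub_distrib, sub_eq_zero, sum_smul] using hβ
  simp only [moment_eq_sub, mul_sub, sum_sub_distrib, ← sum_mul]
  congr 1
  simp only [← smul_eq_mul, ← smul_dotProduct, ← sum_dotProduct, hx]

theorem sum_mul_mul_strain (hβ : ∑ a, β a • (p a - x) = 0) (q : W → Fin 3 → ℝ) :
    ∑ i, ∑ j, β i * β j * strain p q i j = 2 * (∑ i, β i) * moment p β x q := by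
  have hload (i : W) : load p (fun i j => β i * β j + β j * β i) i =
      (2 * (∑ i, β i)) • β i • (p i - x) := by
    have hx : ∑ j, (β i * β j + β j * β i) • (p i - p j) =
        ∑ j, (2 * β j) • β i • (p i - x) - (2 * β i) • ∑ j, β j • (p j - x) := by
      rw [smul_sum, ← sum_sub_distrib]
      exact sum_congr rfl fun j _ => by module
    rw [hβ, smul_zero, sub_zero, ← sum_smul, ← mul_sum] at hx
    rw [← hx]
    ext k
    simp [load]
  simp only [sum_mul_strain, hload, dotProduct_smul, smul_eq_mul, ← mul_sum, moment,
    dotProduct_comm]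

theorem AffineDependence.sum_mul_moment (hα : AffineDependence p N α) (q : W → Fin 3 → ℝ) :
    ∑ a, α a * moment p α (p a) q = 0 := by
  rw [_root_.sum_mul_moment (x := 0) (by simpa using hα.sum_smul_eq_zero), hα.sum_eq_zero,
    zero_mul]

end Moments

section Proportional

variable {M : Type*} {f g k : M → ℝ}

/-- The vectors `(f x, g x)` are pairwise linearly dependent, that is, one of `f` and `g` is a
multiple of the other. -/
def Proportional (f g : M → ℝ) : Prop := ∀ x y, f x * g y = f y * g x

namespace Proportional

theorem refl (f : M → ℝ) : Proportional f f := fun _ _ => mul_comm ..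

theorem symm (h : Proportional f g) : Proportional g f := fun x y => by linarith [h x y]

theorem trans (h : Proportional f g) (h' : Proportional g k) (hg : g ≠ 0) : Proportional f k := by
  obtain ⟨z, hz⟩ := Function.ne_iff.1 hg
  refine fun x y => mul_left_cancel₀ (mul_ne_zero hz hz) ?_
  linear_combination (g z * k y) * h x z + (f z * g x) * h' z y - (g z * k x) * h y z -
    (f z * g y) * h' z x

theorem eq_zero (h : Proportional f g) (h' : Proportional f k) (hn : ¬ Proportional g k) :
    f = 0 := by
  by_contra hf
  exact hn (h.symm.trans h' hf)

end Proportional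

/-- The identities satisfied by the moments `φ a` and the strains `A a b` of the neighbours of a
vertex, as functions of the infinitesimal motion. -/
structure IsStrainSystem {W : Type*} (N : Finset W) (φ : W → M → ℝ) (A : W → W → M → ℝ) :
    Prop where
  symm : ∀ a b, A a b = A b a
  proportional : ∀ a ∈ N, ∀ b ∈ N, Proportional (φ a) (A a b)
  polar : ∀ a ∈ N, ∀ b ∈ N, ∀ c ∈ N, ∀ x y,
    φ a x * A b c y + φ b x * A a c y + φ c x * A a b y =
      φ a y * A b c x + φ b y * A a c x + φ c y * A a b x

namespace IsStrainSystem

variable {W : Type*} {N : Finset W} {φ : W → M → ℝ} {A : W → W → M → ℝ} {a b c d : W}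

theorem proportional_of_eq_zero (h : IsStrainSystem N φ A) (ha : a ∈ N) (hc : c ∈ N) (hd : d ∈ N)
    (hφc : φ c = 0) (hφd : φ d = 0) : Proportional (A c d) (φ a) := fun x y => by
  have := h.polar a ha c hc d hd x y
  simp only [hφc, hφd, Pi.zero_apply, zero_mul, add_zero] at this
  linarith

theorem proportional_of_forall (h : IsStrainSystem N φ A) (ha : a ∈ N)
    (hprop : ∀ b ∈ N, Proportional (φ b) (φ a)) (hb : b ∈ N) (hc : c ∈ N) :
    Proportional (A b c) (φ a) := by
  by_cases hφb : φ b = 0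
  · by_cases hφc : φ c = 0
    · exact h.proportional_of_eq_zero ha hb hc hφb hφc
    · rw [h.symm]
      exact (h.proportional c hc b hb).symm.trans (hprop c hc) hφc
  · exact (h.proportional b hb c hc).symm.trans (hprop b hb) hφb

theorem eq_zero_of_not_proportional (h : IsStrainSystem N φ A) (ha : a ∈ N) (hb : b ∈ N)
    (hn : ¬ Proportional (φ a) (φ b)) : A a b = 0 :=
  (h.proportional a ha b hb).symm.eq_zero (h.symm a b ▸ (h.proportional b hb a ha).symm) hn

theorem eq_zero_of_ne_zero (h : IsStrainSystem N φ A) (ha : a ∈ N) (hb : b ∈ N)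
    (hn : ¬ Proportional (φ a) (φ b)) (hc : c ∈ N) (hd : d ∈ N) (hφc : φ c ≠ 0) (hφd : φ d ≠ 0) :
    A c d = 0 := by
  by_cases hcd : Proportional (φ c) (φ d)
  swap
  · exact h.eq_zero_of_not_proportional hc hd hcd
  obtain ⟨e, he, hce⟩ : ∃ e ∈ N, ¬ Proportional (φ c) (φ e) := by
    by_contra! hall
    exact hn ((hall a ha).symm.trans (hall b hb) hφc)
  have hde : ¬ Proportional (φ d) (φ e) := fun hde => hce (hcd.trans hde hφd)
  refine (h.proportional c hc d hd).symm.eq_zero (k := φ e) (fun x y => ?_) hce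
  have := h.polar e he c hc d hd x y
  simp only [h.symm e, h.eq_zero_of_not_proportional hc he hce,
    h.eq_zero_of_not_proportional hd he hde, Pi.zero_apply, mul_zero, add_zero] at this
  linarith

theorem eq_zero_of_triangle (h : IsStrainSystem N φ A) (ha : a ∈ N) (hb : b ∈ N) (hc : c ∈ N)
    (hn : ¬ Proportional (φ a) (φ b)) (hac : A a c = 0) : A b c = 0 := by
  refine (h.proportional b hb c hc).symm.eq_zero (k := φ a) (fun x y => ?_) fun h => hn h.symm
  have := h.polar a ha b hb c hc x y
  simp only [hac, h.eq_zero_of_not_proportional ha hb hn, Pi.zero_apply, mul_zero, add_zero] at this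
  linarith

end IsStrainSystem

end Proportional

section StarStresses

open SimpleGraph

variable {W : Type*} [Fintype W] {C F : SimpleGraph W} {p : W → Fin 3 → ℝ} {v : W}
  {α β : W → ℝ} {x : Fin 3 → ℝ}

theorem IsStress.eq_zero_of_update [DecidableEq W] {ω : W → W → ℝ}
    (hω : IsStress (Function.update p v x) F ω) (hF : StressFree p (F.deleteIncidenceSet v))
    (h : ω v = 0) : ω = 0 := by
  have hω' := hω.deleteIncidenceSet h
  refine hF ω ⟨hω'.symm, hω'.eq_zero_of_not_adj, ?_⟩
  rw [← hω'.load_eq_zero]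
  exact load_congr hω.symm h fun i hi => (Function.update_of_ne hi x p).symm

theorem IsStress.sum_smul_sub_eq_zero [DecidableEq W] {ω : W → W → ℝ}
    (hω : IsStress (Function.update p v x) F ω) : ∑ j, ω v j • (p j - x) = 0 := by
  have hterm (j : W) : ω v j • (p j - x) =
      -(ω v j • (Function.update p v x v - Function.update p v x j)) := by
    by_cases hj : j = v
    · simp [hj, hω.eq_zero_of_not_adj v v F.irrefl]
    · rw [Function.update_self, Function.update_of_ne hj, ← smul_neg, neg_sub]
  rw [sum_congr rfl fun j _ => hterm j, sum_neg_distrib, neg_eq_zero]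
  ext k
  simpa [load] using congrFun₂ hω.load_eq_zero v k

theorem IsStress.moment_eq_zero [DecidableEq W] {ω : W → W → ℝ} {q : W → Fin 3 → ℝ}
    (hω : IsStress (Function.update p v x) F ω) (hq : IsMotion p (F.deleteIncidenceSet v) q) :
    moment p (ω v) x q = 0 := by
  let q' := Function.update q v 0
  let f i j := ω i j * strain (Function.update p v x) q' i j
  have hvv : ω v v = 0 := hω.eq_zero_of_not_adj v v F.irrefl
  have hf (j : W) : f v j = ω v j * ((p j - x) ⬝ᵥ q j) := by
    by_cases hj : j = v
    · simp [f, hj, hvv]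
    · simp only [f, q', strain, Function.update_self, Function.update_of_ne hj]
      rw [zero_sub, ← neg_sub, neg_dotProduct_neg]
  have hf' {i j : W} (hi : i ≠ v) (hj : j ≠ v) : f i j = 0 := by
    by_cases hij : F.Adj i j
    · have := hq i j ((deleteIncidenceSet_adj ..).2 ⟨hij, hi, hj⟩)
      simp only [f, q', strain, Function.update_of_ne hi, Function.update_of_ne hj] at this ⊢
      rw [this, mul_zero]
    · simp only [f, hω.eq_zero_of_not_adj i j hij, zero_mul]
  have hrow (i : W) :
      ∑ j, f i j = (if i = v then moment p (ω v) x q else 0) + f v i := by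
    by_cases hi : i = v
    · simp [hi, hf, hvv, moment]
    · rw [Fintype.sum_eq_single v fun j hj => hf' hi hj, if_neg hi, zero_add]
      simp only [f, hω.symm i v, strain_comm _ _ i v]
  have htotal : ∑ i, ∑ j, f i j = moment p (ω v) x q + moment p (ω v) x q := by
    simp only [hrow, sum_add_distrib, sum_ite_eq', mem_univ, if_true, hf, moment]
  rw [show ∑ i, ∑ j, f i j = 0 from hω.sum_mul_strain_eq_zero q'] at htotal
  linarith

-- Moving `v` to `x` keeps the framework dependent, and the resulting stress cannot vanish at `v`.
theorem IsCircuit.exists_moment_eq_zero (hp : Generic p) (hC : IsCircuit p C) (hv : v ∈ supp C)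
    (x : Fin 3 → ℝ) : ∃ μ : W → ℝ, μ ≠ 0 ∧ (∀ j ∉ nbrs C v, μ j = 0) ∧
      ∑ j, μ j • (p j - x) = 0 ∧
      ∀ q, IsMotion p (C.deleteIncidenceSet v) q → moment p μ x q = 0 := by
  classical
  obtain ⟨j, hj⟩ := mem_supp.1 hv
  obtain ⟨ω, hω, hne⟩ : ∃ ω, IsStress (Function.update p v x) C ω ∧ ω ≠ 0 := by
    by_contra! hfree
    exact hC.prop (hp.stressFree hfree)
  exact ⟨ω v,
    fun h => hne (hω.eq_zero_of_update (hC.stressFree_of_lt (deleteIncidenceSet_lt hj)) h),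
    fun j hj => hω.eq_zero_of_not_adj v j fun h => hj (mem_nbrs.2 h),
    hω.sum_smul_sub_eq_zero, fun q hq => hω.moment_eq_zero hq⟩

end StarStresses

section NeighbourStrains

open SimpleGraph

variable {W : Type*} [Fintype W] {C : SimpleGraph W} {p : W → Fin 3 → ℝ} {v a b c : W}
  {α β : W → ℝ} {x : Fin 3 → ℝ}

/-- The space of infinitesimal motions of the framework `(F, p)`. -/
abbrev Motion (p : W → Fin 3 → ℝ) (F : SimpleGraph W) : Type _ := {q // IsMotion p F q}

namespace IsCounterexample

theorem exists_moment_relation (h : IsCounterexample p C) (hv : v ∈ supp C)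
    (hα : AffineDependence p (nbrs C v) α) (hne : ∀ i ∈ nbrs C v, α i ≠ 0)
    (hβ : ∀ i ∉ nbrs C v, β i = 0) (hsum : ∑ i, β i ≠ 0) (hx : ∑ i, β i • (p i - x) = 0) :
    ∃ s t : ℝ, (s ≠ 0 ∨ t ≠ 0) ∧ ∀ q, IsMotion p (C.deleteIncidenceSet v) q →
      s * moment p β x q + t * moment p α x q = 0 := by
  obtain ⟨μ, hμ, hμN, hμx, hμq⟩ := h.isCircuit.exists_moment_eq_zero h.generic hv x
  let s := (∑ i, μ i) / ∑ i, β i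
  have hs : ∑ i, μ i - s * ∑ i, β i = 0 := by rw [div_mul_cancel₀ _ hsum, sub_self]
  have hν : AffineDependence p (nbrs C v) (μ - s • β) := by
    refine ⟨fun i hi => by simp [hμN i hi, hβ i hi], by simpa [← mul_sum] using hs, ?_⟩
    have hterm (i : W) : (μ - s • β) i • p i =
        μ i • (p i - x) - s • β i • (p i - x) + (μ i - s * β i) • x := by
      rw [Pi.sub_apply, Pi.smul_apply, smul_eq_mul]
      module
    rw [sum_congr rfl fun i _ => hterm i, sum_add_distrib, sum_sub_distrib, ← smul_sum, hμx, hx,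
      ← sum_smul, sum_sub_distrib, ← mul_sum, hs]
    simp
  obtain ⟨τ, hτ⟩ := hα.exists_eq_smul h.generic (h.card_nbrs hv) hne hν
  have hμ_eq : μ = s • β + τ • α := by rw [← hτ, add_sub_cancel]
  refine ⟨s, τ, ?_, fun q hq => ?_⟩
  · by_contra! hzero
    exact hμ (by rw [hμ_eq, hzero.1, hzero.2, zero_smul, zero_smul, add_zero])
  · rw [← moment_add_smul, ← hμ_eq, hμq q hq]

theorem proportional_moment (h : IsCounterexample p C) (hv : v ∈ supp C)
    (hα : AffineDependence p (nbrs C v) α) (hne : ∀ i ∈ nbrs C v, α i ≠ 0)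
    (hβ : ∀ i ∉ nbrs C v, β i = 0) (hsum : ∑ i, β i ≠ 0) :
    Proportional (M := Motion p (C.deleteIncidenceSet v))
      (fun q => ∑ i, ∑ j, β i * β j * strain p q i j)
      (fun q => ∑ i, β i * moment p α (p i) q) := by
  obtain ⟨x, hx⟩ : ∃ x, ∑ i, β i • (p i - x) = 0 := by
    refine ⟨(∑ i, β i)⁻¹ • ∑ i, β i • p i, ?_⟩
    simp only [smul_sub, sum_sub_distrib, ← sum_smul]
    rw [smul_smul, mul_inv_cancel₀ hsum, one_smul, sub_self]
  obtain ⟨s, t, hst, hrel⟩ := h.exists_moment_relation hv hα hne hβ hsum hx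
  intro q r
  have hq := hrel q q.2
  have hr := hrel r r.2
  simp only [sum_mul_mul_strain hx, sum_mul_moment hx]
  have key : moment p β x q * moment p α x r = moment p β x r * moment p α x q := by
    rcases hst with hs | ht
    · refine mul_left_cancel₀ hs ?_
      linear_combination moment p α x r * hq - moment p α x q * hr
    · refine mul_left_cancel₀ ht ?_
      linear_combination moment p β x q * hr - moment p β x r * hq
  linear_combination 2 * (∑ i, β i) ^ 2 * key

theorem strain_mul_moment (h : IsCounterexample p C) (hv : v ∈ supp C)
    (hα : AffineDependence p (nbrs C v) α) (hne : ∀ i ∈ nbrs C v, α i ≠ 0)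
    (ha : a ∈ nbrs C v) (hb : b ∈ nbrs C v) (hc : c ∈ nbrs C v) {s t u : ℝ} (hsum : s + t + u ≠ 0)
    (q r : Motion p (C.deleteIncidenceSet v)) :
    (s * t * strain p q a b + s * u * strain p q a c + t * u * strain p q b c) *
      (s * moment p α (p a) r + t * moment p α (p b) r + u * moment p α (p c) r) =
    (s * t * strain p r a b + s * u * strain p r a c + t * u * strain p r b c) *
      (s * moment p α (p a) q + t * moment p α (p b) q + u * moment p α (p c) q) := by
  classical
  let β : W → ℝ := Pi.single a s + Pi.single b t + Pi.single c u
  have hβ_sum (f : W → ℝ) : ∑ i, β i * f i = s * f a + t * f b + u * f c := by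
    simp [β, add_mul, sum_add_distrib, Pi.single_apply, ite_mul]
  have hβ_strain (q : W → Fin 3 → ℝ) : ∑ i, ∑ j, β i * β j * strain p q i j =
      2 * (s * t * strain p q a b + s * u * strain p q a c + t * u * strain p q b c) := by
    simp only [mul_assoc, ← mul_sum, hβ_sum, strain_self, strain_comm p q b a,
      strain_comm p q c a, strain_comm p q c b]
    ring
  have hβ (i : W) (hi : i ∉ nbrs C v) : β i = 0 := by
    have hia : i ≠ a := fun hia => hi (hia ▸ ha)
    have hib : i ≠ b := fun hib => hi (hib ▸ hb)
    have hic : i ≠ c := fun hic => hi (hic ▸ hc)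
    simp [β, hia, hib, hic]
  have hβ_ne : ∑ i, β i ≠ 0 := by
    have htotal := hβ_sum 1
    simp only [Pi.one_apply, mul_one] at htotal
    rwa [htotal]
  have key := h.proportional_moment hv hα hne hβ hβ_ne q r
  simp only [hβ_sum, hβ_strain] at key
  linarith

-- Comparing coefficients of the polynomial identity `strain_mul_moment` in `s`, `t` and `u`.
theorem isStrainSystem (h : IsCounterexample p C) (hv : v ∈ supp C)
    (hα : AffineDependence p (nbrs C v) α) (hne : ∀ i ∈ nbrs C v, α i ≠ 0) :
    IsStrainSystem (M := Motion p (C.deleteIncidenceSet v)) (nbrs C v)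
      (fun a q => moment p α (p a) q) (fun a b q => strain p q a b) := by
  have hprop (a : W) (ha : a ∈ nbrs C v) (b : W) (hb : b ∈ nbrs C v)
      (q r : Motion p (C.deleteIncidenceSet v)) :
      moment p α (p a) q * strain p r a b = moment p α (p a) r * strain p q a b := by
    have h₁ := h.strain_mul_moment hv hα hne ha hb ha (s := 1) (t := 1) (u := 0) (by norm_num) q r
    have h₂ := h.strain_mul_moment hv hα hne ha hb ha (s := 1) (t := 2) (u := 0) (by norm_num) q r
    linarith
  refine ⟨fun a b => funext fun q => strain_comm p q a b, hprop, fun a ha b hb c hc q r => ?_⟩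
  have key := h.strain_mul_moment hv hα hne ha hb hc (s := 1) (t := 1) (u := 1) (by norm_num) q r
  have hba := hprop b hb a ha q r
  have hca := hprop c hc a ha q r
  have hcb := hprop c hc b hb q r
  simp only [strain_comm p _ b a, strain_comm p _ c a, strain_comm p _ c b] at hba hca hcb
  linarith [hprop a ha b hb q r, hprop a ha c hc q r, hprop b hb c hc q r]

end IsCounterexample

end NeighbourStrains

section Neighbourhoods

open SimpleGraph

variable {W : Type*} [Fintype W] {C : SimpleGraph W} {p : W → Fin 3 → ℝ} {v a b c d g x : W}
  {S T X Y : Finset W}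

namespace IsCounterexample

theorem card_le_three_of_isClique (h : IsCounterexample p C) (hv : v ∈ supp C) (hS : S ⊆ nbrs C v)
    (hclique : C.IsClique S) : #S ≤ 3 := by
  by_contra! hlt
  obtain ⟨T, hTS, hT⟩ := exists_subset_card_eq (n := 4) (by omega : 4 ≤ #S)
  have hTv : ∀ y ∈ T, C.Adj v y := fun y hy => mem_nbrs.1 (hS (hTS hy))
  have hdof := dof_of_isClique (hclique.subset (coe_subset.2 hTS))
  have hdeg := card_le_degIn hTv subset_rfl
  have := h.sixteen_le_dof hv (fun hvT => (hTv v hvT).ne rfl) (by omega : 4 ≤ degIn C T v)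
  rw [hT] at hdof
  norm_num at hdof
  omega

theorem degIn_le_one_of_isNClique (h : IsCounterexample p C) (hv : v ∈ supp C) (hT : T ⊆ nbrs C v)
    (hclique : C.IsNClique 3 T) (hx : x ∈ nbrs C v) (hxT : x ∉ T) : degIn C T x ≤ 1 := by
  classical
  have hTv : ∀ y ∈ insert x T, C.Adj v y := forall_mem_insert .. |>.2
    ⟨mem_nbrs.1 hx, fun y hy => mem_nbrs.1 (hT hy)⟩
  have hdof := dof_of_isClique hclique.isClique
  have hins := dof_insert C hxT
  have hdeg := card_le_degIn hTv subset_rfl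
  rw [card_insert_of_notMem hxT, hclique.card_eq] at hdeg
  have := h.sixteen_le_dof hv (fun hvT => (hTv v hvT).ne rfl) hdeg
  rw [hclique.card_eq] at hdof
  norm_num at hdof
  omega

theorem exists_disjoint_not_adj (h : IsCounterexample p C) (hv : v ∈ supp C) :
    ∃ a b c d, C.Adj v a ∧ C.Adj v b ∧ C.Adj v c ∧ C.Adj v d ∧ [a, b, c, d].Nodup ∧
      ¬ C.Adj a b ∧ ¬ C.Adj c d := by
  classical
  obtain ⟨a, ha, b, hb, hab, hnab⟩ : ∃ a ∈ nbrs C v, ∃ b ∈ nbrs C v, a ≠ b ∧ ¬ C.Adj a b := by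
    by_contra! hclique
    have := h.card_le_three_of_isClique hv subset_rfl hclique
    rw [h.card_nbrs hv] at this
    omega
  let T := (nbrs C v).erase a |>.erase b
  have hT₃ : #T = 3 := by
    rw [card_erase_of_mem (mem_erase.2 ⟨hab.symm, hb⟩), card_erase_of_mem ha, h.card_nbrs hv]
  have hmem {y : W} (hy : y ∈ T) : y ≠ b ∧ y ≠ a ∧ C.Adj v y := by simpa [T, mem_nbrs] using hy
  by_cases hclique : C.IsClique T
  · have hfew {x : W} (hx : x ∈ nbrs C v) (hxT : x ∉ T) : 1 < #(T \ nbrs C x) := by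
      have hdeg := h.degIn_le_one_of_isNClique hv (fun y hy => mem_nbrs.2 (hmem hy).2.2)
        ⟨hclique, hT₃⟩ hx hxT
      rw [degIn_eq_card_inter] at hdeg
      have := card_sdiff_add_card_inter T (nbrs C x)
      omega
    obtain ⟨c, hc⟩ := card_pos.1 (zero_lt_one.trans (hfew ha (by simp [T])))
    obtain ⟨d, hd, hdc⟩ := exists_mem_ne (hfew hb (by simp [T])) c
    simp only [mem_sdiff, mem_nbrs] at hc hd
    refine ⟨a, c, b, d, mem_nbrs.1 ha, (hmem hc.1).2.2, mem_nbrs.1 hb, (hmem hd.1).2.2, ?_, hc.2,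
      hd.2⟩
    simp [hab, hdc.symm, (hmem hc.1).1, (hmem hc.1).2.1.symm, (hmem hd.1).1.symm,
      (hmem hd.1).2.1.symm]
  · obtain ⟨c, hc, d, hd, hcd, hncd⟩ : ∃ c ∈ T, ∃ d ∈ T, c ≠ d ∧ ¬ C.Adj c d := by
      by_contra! hall
      exact hclique hall
    refine ⟨a, b, c, d, mem_nbrs.1 ha, mem_nbrs.1 hb, (hmem hc).2.2, (hmem hd).2.2, ?_, hnab, hncd⟩
    simp [hab, hcd, (hmem hc).1.symm, (hmem hc).2.1.symm, (hmem hd).1.symm, (hmem hd).2.1.symm]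

theorem card_eq_four_of_isBlocker (h : IsCounterexample p C) (hv : v ∈ supp C)
    (hY : IsBlocker C v Y) : #Y = 4 := by
  by_contra hne
  have := hY.four_le_card
  exact hY.notMem (h.supp_subset_of_dof_eq (by omega) hY.dof_eq hv)

theorem isBlocker_unique (h : IsCounterexample p C) (hX : IsBlocker C v X) (hY : IsBlocker C v Y)
    (hd : C.Adj v d) (hdX : d ∈ X) (hdY : d ∈ Y) : X = Y := by
  classical
  have hv : v ∈ supp C := mem_supp.2 ⟨d, hd⟩
  have hXY := hX.union hY h.isSparse hdX hdY hd (h.card_nbrs_le d)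
  have hcard := h.card_eq_four_of_isBlocker hv hXY
  rw [eq_of_subset_of_card_le subset_union_left
      (hcard.trans (h.card_eq_four_of_isBlocker hv hX).symm).le,
    ← eq_of_subset_of_card_le subset_union_right
      (hcard.trans (h.card_eq_four_of_isBlocker hv hY).symm).le]

theorem disjoint_erase_of_dof_lt [DecidableEq W] (h : IsCounterexample p C) (hv : v ∈ supp C)
    (hT : T ⊆ nbrs C v) (ha : a ∈ T) (hd : d ∈ nbrs C v \ T) (hg : g ∈ nbrs C v \ T)
    (hdg : d ≠ g) (hvX : v ∉ X) (haX : a ∈ X) (hdX : d ∈ X) (hgX : g ∈ X) (hX : dof C X < 16) :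
    Disjoint X (T.erase a) := by
  refine disjoint_right.2 fun b hb hbX => hX.not_ge (h.sixteen_le_dof hv hvX ?_)
  obtain ⟨hba, hbT⟩ := mem_erase.1 hb
  simp only [mem_sdiff, mem_nbrs] at hd hg
  have hne : #{a, b, d, g} = 4 := by grind
  have := card_le_degIn (F := C) (X := X) (T := {a, b, d, g}) (z := v)
    (by simp [mem_nbrs.1 (hT ha), mem_nbrs.1 (hT hbT), hd.1, hg.1])
    (by simp [insert_subset_iff, haX, hbX, hdX, hgX])
  rwa [hne] at this

theorem exists_isBlocker_of_dof_lt [DecidableEq W] (h : IsCounterexample p C) (hv : v ∈ supp C)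
    (hT : T ⊆ nbrs C v) (hclique : C.IsNClique 3 T) (ha : a ∈ T) (hd : d ∈ nbrs C v \ T)
    (hg : g ∈ nbrs C v \ T) (hdg : d ≠ g) (hnad : ¬ C.Adj a d) (hnag : ¬ C.Adj a g) (hvX : v ∉ X)
    (h₄ : 4 ≤ #X) (haX : a ∈ X) (hdX : d ∈ X) (hgX : g ∈ X) (hX : dof C X < 16) :
    ∃ Y, IsBlocker C v Y ∧ d ∈ Y ∧ g ∈ Y ∧ Disjoint Y T ∧ degIn C Y a = 2 := by
  have hdisj := h.disjoint_erase_of_dof_lt hv hT ha hd hg hdg hvX haX hdX hgX hX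
  have hvT : v ∉ T.erase a := fun hvT => (mem_nbrs.1 (hT (mem_of_mem_erase hvT))).ne rfl
  have hdeg := degIn_add_card_le (F := C) (X := X) (T := insert v (T.erase a)) (z := a)
    (forall_mem_insert .. |>.2 ⟨(mem_nbrs.1 (hT ha)).symm, fun y hy =>
      hclique.isClique ha (mem_of_mem_erase hy) (ne_of_mem_erase hy).symm⟩)
    (forall_mem_insert .. |>.2 ⟨hvX, fun y hy => disjoint_right.1 hdisj hy⟩)
  rw [card_insert_of_notMem hvT, card_erase_of_mem ha, hclique.card_eq] at hdeg
  have hdeg₅ := h.card_nbrs_le a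
  have hcard : #(X.erase a) = #X - 1 := card_erase_of_mem haX
  have hdof := dof_erase C haX
  have hsparse := h.isSparse (X.erase a) (by omega)
  obtain ⟨k, hk⟩ := even_dof C (X.erase a)
  have hdeg_erase : degIn C (X.erase a) a = degIn C X a := by
    rw [← degIn_insert_of_not_adj (X := X.erase a) C.irrefl, insert_erase haX]
  have hdeg₂ : degIn C (X.erase a) a = 2 := by omega
  have hd_mem : d ∈ X.erase a := mem_erase.2 ⟨fun hda => (mem_sdiff.1 hd).2 (hda ▸ ha), hdX⟩
  have hg_mem : g ∈ X.erase a := mem_erase.2 ⟨fun hga => (mem_sdiff.1 hg).2 (hga ▸ ha), hgX⟩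
  have hlarge : #{d, g} + #(X.erase a ∩ nbrs C a) ≤ #(X.erase a) := by
    rw [← card_union_of_disjoint (by simp [Finset.disjoint_left, mem_nbrs, hnad, hnag])]
    exact card_le_card (union_subset (by simp [insert_subset_iff, hd_mem, hg_mem])
      inter_subset_left)
  rw [card_pair hdg] at hlarge
  have hdeg_inter := degIn_eq_card_inter C (X.erase a) a
  refine ⟨X.erase a, ⟨⟨by omega, by omega⟩, fun h => hvX (mem_of_mem_erase h)⟩, hd_mem, hg_mem, ?_,
    hdeg₂⟩
  rw [← insert_erase ha, disjoint_insert_right]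
  exact ⟨notMem_erase a X, hdisj.mono_left (erase_subset a X)⟩

theorem exists_isBlocker_of_not_stressFree [DecidableEq W] (h : IsCounterexample p C)
    (hv : v ∈ supp C) (hT : T ⊆ nbrs C v) (hclique : C.IsNClique 3 T) (ha : a ∈ T)
    (hd : d ∈ nbrs C v \ T) (hg : g ∈ nbrs C v \ T) (hdg : d ≠ g) (hnad : ¬ C.Adj a d)
    (hnag : ¬ C.Adj a g)
    (hstress : ¬ StressFree p (C.deleteIncidenceSet v ⊔ (edge a d ⊔ edge a g))) :
    ∃ Y, IsBlocker C v Y ∧ d ∈ Y ∧ g ∈ Y ∧ Disjoint Y T ∧ degIn C Y a = 2 := by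
  have had : a ≠ d := fun had => (mem_sdiff.1 hd).2 (had ▸ ha)
  have hag : a ≠ g := fun hag => (mem_sdiff.1 hg).2 (hag ▸ ha)
  have hva := mem_nbrs.1 (hT ha)
  have hvd := mem_nbrs.1 (mem_sdiff.1 hd).1
  have hvg := mem_nbrs.1 (mem_sdiff.1 hg).1
  obtain ⟨X, hvX, h₄, haX, hdX, hgX, hX⟩ :
      ∃ X, v ∉ X ∧ 4 ≤ #X ∧ a ∈ X ∧ d ∈ X ∧ g ∈ X ∧ dof C X < 16 := by
    by_contra! hno
    exact hstress (h.stressFree_sup_edge_sup_edge hv hva hvd hva hvg had hag had.symm hdg hnad hnag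
      fun X hvX h₄ haX hdX _ hgX => hno X hvX h₄ haX hdX hgX)
  exact h.exists_isBlocker_of_dof_lt hv hT hclique ha hd hg hdg hnad hnag hvX h₄ haX hdX hgX hX

theorem stressFree_or_stressFree_of_isNClique [DecidableEq W] (h : IsCounterexample p C)
    (hv : v ∈ supp C) (hT : T ⊆ nbrs C v) (hclique : C.IsNClique 3 T) (ha : a ∈ T) (hb : b ∈ T)
    (hab : a ≠ b) (hd : d ∈ nbrs C v \ T) (hg : g ∈ nbrs C v \ T) (hdg : d ≠ g)
    (hnad : ¬ C.Adj a d) (hnag : ¬ C.Adj a g) (hnbd : ¬ C.Adj b d) (hnbg : ¬ C.Adj b g) :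
    StressFree p (C.deleteIncidenceSet v ⊔ (edge a d ⊔ edge a g)) ∨
      StressFree p (C.deleteIncidenceSet v ⊔ (edge b d ⊔ edge b g)) := by
  by_contra! hcon
  obtain ⟨Y, hY, hdY, hgY, hYT, hYa⟩ :=
    h.exists_isBlocker_of_not_stressFree hv hT hclique ha hd hg hdg hnad hnag hcon.1
  obtain ⟨Y', hY', hdY', -, -, hYb⟩ :=
    h.exists_isBlocker_of_not_stressFree hv hT hclique hb hd hg hdg hnbd hnbg hcon.2
  have hva := mem_nbrs.1 (hT ha)
  have hvb := mem_nbrs.1 (hT hb)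
  simp only [mem_sdiff, mem_nbrs] at hd hg
  obtain rfl := h.isBlocker_unique hY hY' hd.1 hdY hdY'
  have haY : a ∉ Y := disjoint_right.1 hYT ha
  have hbY : b ∉ insert a Y := by simp [hab.symm, disjoint_right.1 hYT hb]
  have hdof_a := dof_insert C haY
  have hdof_b := dof_insert C hbY
  rw [degIn_insert_of_adj haY (hclique.isClique hb ha hab.symm)] at hdof_b
  have hcard : #{a, b, d, g} = 4 := by grind
  have hdeg := card_le_degIn (F := C) (X := insert b (insert a Y)) (T := {a, b, d, g}) (z := v)
    (by simp [hva, hvb, hd.1, hg.1]) (by simp [insert_subset_iff, hdY, hgY])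
  rw [hcard] at hdeg
  have := h.sixteen_le_dof hv (by simp [hva.ne, hvb.ne, hY.notMem]) hdeg
  have := hY.dof_eq
  omega

end IsCounterexample

end Neighbourhoods

section VanishingMoments

open SimpleGraph

variable {W : Type*} [Fintype W] {C F : SimpleGraph W} {p : W → Fin 3 → ℝ} {v a b c d x : W}

theorem StressFree.not_proportional_strain (h : StressFree p (F ⊔ (edge a b ⊔ edge c d)))
    (hab : a ≠ b) (hcd : c ≠ d) (hn : ¬ F.Adj a b) (hn' : ¬ F.Adj c d) (hne : s(a, b) ≠ s(c, d)) :
    ¬ Proportional (fun q : Motion p F => strain p q a b) (fun q => strain p q c d) := by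
  obtain ⟨q, q', hq, hq', hstrain⟩ := exists_isMotion_of_sup_edge_sup_edge h hab hcd hn hn' hne
  exact fun hprop => hstrain (hprop ⟨q, hq⟩ ⟨q', hq'⟩)

namespace IsCounterexample

variable {φ : W → Motion p (C.deleteIncidenceSet v) → ℝ} {α : W → ℝ}

theorem adj_iff_strain_eq_zero (h : IsCounterexample p C) (ha : a ∈ nbrs C v) (hb : b ∈ nbrs C v)
    (hab : a ≠ b) :
    C.Adj a b ↔ (fun q : Motion p (C.deleteIncidenceSet v) => strain p q a b) = 0 := by
  rw [mem_nbrs] at ha hb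
  refine ⟨fun hadj => funext fun q => q.2 a b ((deleteIncidenceSet_adj ..).2
    ⟨hadj, ha.ne', hb.ne'⟩), fun hzero => ?_⟩
  by_contra hn
  obtain ⟨q, hq, hne⟩ := exists_isMotion_of_sup_edge
    (h.stressFree_sup_edge (mem_supp.2 ⟨a, ha⟩) ha hb hab hn) hab
    fun hadj => hn (deleteIncidenceSet_le _ _ hadj)
  exact hne (congrFun hzero ⟨q, hq⟩)

theorem exists_not_proportional (h : IsCounterexample p C) (hv : v ∈ supp C)
    (hφ : IsStrainSystem (nbrs C v) φ fun a b q => strain p q a b) (ha : a ∈ nbrs C v)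
    (hφa : φ a ≠ 0) : ∃ b ∈ nbrs C v, ¬ Proportional (φ a) (φ b) := by
  by_contra! hall
  obtain ⟨x, y, z, w, hx, hy, hz, hw, hne, hnxy, hnzw⟩ := h.exists_disjoint_not_adj hv
  have hfree := h.stressFree_sup_edge_sup_edge_of_disjoint hv hx hy hz hw hne hnxy hnzw
  simp only [List.nodup_cons, List.mem_cons, List.not_mem_nil, not_or, or_false] at hne
  have hstrain {b c : W} (hb : C.Adj v b) (hc : C.Adj v c) :
      Proportional (fun q : Motion p (C.deleteIncidenceSet v) => strain p q b c) (φ a) :=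
    hφ.proportional_of_forall ha (fun b hb => (hall b hb).symm) (mem_nbrs.2 hb) (mem_nbrs.2 hc)
  refine hfree.not_proportional_strain hne.1.1 hne.2.2.1
    (fun hadj => hnxy (deleteIncidenceSet_le _ _ hadj))
    (fun hadj => hnzw (deleteIncidenceSet_le _ _ hadj)) (fun heq => ?_)
    ((hstrain hx hy).trans (hstrain hz hw).symm hφa)
  rcases Sym2.eq_iff.1 heq with ⟨hxz, -⟩ | ⟨hxw, -⟩
  exacts [hne.1.2.1 hxz, hne.1.2.2 hxw]

theorem not_stressFree_of_ne_zero (hφ : IsStrainSystem (nbrs C v) φ fun a b q => strain p q a b)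
    (ha : a ∈ nbrs C v) (hφa : φ a ≠ 0) (hc : c ∈ nbrs C v) (hd : d ∈ nbrs C v) (hac : a ≠ c)
    (had : a ≠ d) (hcd : c ≠ d) (hnac : ¬ C.Adj a c) (hnad : ¬ C.Adj a d) :
    ¬ StressFree p (C.deleteIncidenceSet v ⊔ (edge a c ⊔ edge a d)) := fun hfree =>
  hfree.not_proportional_strain hac had (fun hadj => hnac (deleteIncidenceSet_le _ _ hadj))
    (fun hadj => hnad (deleteIncidenceSet_le _ _ hadj)) (fun heq => hcd (Sym2.congr_right.1 heq))
    ((hφ.proportional a ha c hc).symm.trans (hφ.proportional a ha d hd) hφa)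

theorem two_lt_card_of_not_proportional {B : Finset W} (ha : α a ≠ 0)
    (hαφ : ∀ q, ∑ i, α i * φ i q = 0) (hB : ∀ i ∉ B, ∀ q, α i * φ i q = 0) (haB : a ∈ B)
    (hbB : b ∈ B) (hab : ¬ Proportional (φ a) (φ b)) : 2 < #B := by
  classical
  have hne : a ≠ b := by
    rintro rfl
    exact hab (.refl _)
  by_contra! hle
  have hB_eq : {a, b} = B := eq_of_subset_of_card_le (by simp [insert_subset_iff, haB, hbB])
    (by rwa [card_pair hne])
  have hpair (q : Motion p (C.deleteIncidenceSet v)) : α a * φ a q + α b * φ b q = 0 := by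
    rw [← hαφ q, ← sum_pair hne (f := fun i => α i * φ i q), hB_eq]
    exact sum_subset (subset_univ _) fun i _ hi => hB i hi q
  refine hab fun q r => mul_left_cancel₀ ha ?_
  linear_combination φ b r * hpair q - φ b q * hpair r

theorem isNClique_of_not_proportional [DecidablePred fun i => φ i ≠ 0]
    (h : IsCounterexample p C) (hv : v ∈ supp C)
    (hφ : IsStrainSystem (nbrs C v) φ fun a b q => strain p q a b)
    (hα : ∀ i ∉ nbrs C v, α i = 0) (hαφ : ∀ q, ∑ i, α i * φ i q = 0)
    (ha : a ∈ nbrs C v) (hb : b ∈ nbrs C v) (hne : α a ≠ 0) (hab : ¬ Proportional (φ a) (φ b)) :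
    C.IsNClique 3 {i ∈ nbrs C v | φ i ≠ 0} := by
  have hφa : φ a ≠ 0 := fun hφa => hab fun _ _ => by simp [hφa]
  have hφb : φ b ≠ 0 := fun hφb => hab fun _ _ => by simp [hφb]
  have hclique : C.IsClique ↑{i ∈ nbrs C v | φ i ≠ 0} := fun x hx y hy hxy => by
    simp only [mem_coe, mem_filter] at hx hy
    exact (h.adj_iff_strain_eq_zero hx.1 hy.1 hxy).2
      (hφ.eq_zero_of_ne_zero ha hb hab hx.1 hy.1 hx.2 hy.2)
  refine ⟨hclique, (h.card_le_three_of_isClique hv (filter_subset _ _) hclique).antisymm ?_⟩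
  refine two_lt_card_of_not_proportional hne hαφ (fun i hi q => ?_) (mem_filter.2 ⟨ha, hφa⟩)
    (mem_filter.2 ⟨hb, hφb⟩) hab
  by_cases hiN : i ∈ nbrs C v
  · have hφi : φ i = 0 := by simpa [hiN] using hi
    simp [hφi]
  · simp [hα i hiN]

theorem not_adj_of_notMem {B : Finset W} (h : IsCounterexample p C) (hv : v ∈ supp C)
    (hφ : IsStrainSystem (nbrs C v) φ fun a b q => strain p q a b) (hBN : B ⊆ nbrs C v)
    (hB : C.IsNClique 3 B) (haB : a ∈ B) (hbB : b ∈ B) (hab : ¬ Proportional (φ a) (φ b))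
    (hx : x ∈ nbrs C v) (hxB : x ∉ B) : ¬ C.Adj a x := fun hax => by
  classical
  have hne : a ≠ b := by
    rintro rfl
    exact hab (.refl _)
  have hbx : C.Adj b x := (h.adj_iff_strain_eq_zero (hBN hbB) hx fun hbx => hxB (hbx ▸ hbB)).2
    (hφ.eq_zero_of_triangle (hBN haB) (hBN hbB) hx hab
      ((h.adj_iff_strain_eq_zero (hBN haB) hx hax.ne).1 hax))
  have hdeg := card_le_degIn (F := C) (X := B) (T := {a, b}) (z := x)
    (by simp [hax.symm, hbx.symm]) (by simp [insert_subset_iff, haB, hbB])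
  rw [card_pair hne] at hdeg
  have := h.degIn_le_one_of_isNClique hv hBN hB hx hxB
  omega

theorem eq_zero_of_isStrainSystem (h : IsCounterexample p C) (hv : v ∈ supp C)
    (hφ : IsStrainSystem (nbrs C v) φ fun a b q => strain p q a b)
    (hα : ∀ i ∉ nbrs C v, α i = 0) (hne : ∀ i ∈ nbrs C v, α i ≠ 0)
    (hαφ : ∀ q, ∑ i, α i * φ i q = 0) (ha : a ∈ nbrs C v) : φ a = 0 := by
  classical
  by_contra hφa
  obtain ⟨b, hb, hab⟩ := h.exists_not_proportional hv hφ ha hφa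
  have hφb : φ b ≠ 0 := fun hφb => hab fun _ _ => by simp [hφb]
  let B := {i ∈ nbrs C v | φ i ≠ 0}
  have hBN : B ⊆ nbrs C v := filter_subset _ _
  have hB : C.IsNClique 3 B := h.isNClique_of_not_proportional hv hφ hα hαφ ha hb (hne a ha) hab
  have haB : a ∈ B := mem_filter.2 ⟨ha, hφa⟩
  have hbB : b ∈ B := mem_filter.2 ⟨hb, hφb⟩
  have hcard : #(nbrs C v \ B) = 2 := by rw [card_sdiff_of_subset hBN, h.card_nbrs hv, hB.card_eq]
  obtain ⟨c, d, hcd, hNB⟩ := card_eq_two.1 hcard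
  have hc : c ∈ nbrs C v \ B := by simp [hNB]
  have hd : d ∈ nbrs C v \ B := by simp [hNB]
  have hne_of {y z : W} (hy : y ∈ B) (hz : z ∈ nbrs C v \ B) : y ≠ z := fun hyz =>
    (mem_sdiff.1 hz).2 (hyz ▸ hy)
  have hna {z : W} (hz : z ∈ nbrs C v \ B) : ¬ C.Adj a z :=
    h.not_adj_of_notMem hv hφ hBN hB haB hbB hab (mem_sdiff.1 hz).1 (mem_sdiff.1 hz).2
  have hnb {z : W} (hz : z ∈ nbrs C v \ B) : ¬ C.Adj b z :=
    h.not_adj_of_notMem hv hφ hBN hB hbB haB (fun hba => hab hba.symm) (mem_sdiff.1 hz).1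
      (mem_sdiff.1 hz).2
  have hba : a ≠ b := by
    rintro rfl
    exact hab (.refl _)
  have hcN := (mem_sdiff.1 hc).1
  have hdN := (mem_sdiff.1 hd).1
  rcases h.stressFree_or_stressFree_of_isNClique hv hBN hB haB hbB hba hc hd hcd (hna hc) (hna hd)
    (hnb hc) (hnb hd) with hfree | hfree
  · exact not_stressFree_of_ne_zero hφ ha hφa hcN hdN (hne_of haB hc) (hne_of haB hd) hcd (hna hc)
      (hna hd) hfree
  · exact not_stressFree_of_ne_zero hφ hb hφb hcN hdN (hne_of hbB hc) (hne_of hbB hd) hcd (hnb hc)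
      (hnb hd) hfree

theorem moment_eq_zero (h : IsCounterexample p C) (hα : AffineDependence p (nbrs C v) α)
    (hne : ∀ i ∈ nbrs C v, α i ≠ 0) (ha : a ∈ nbrs C v) {q : W → Fin 3 → ℝ}
    (hq : IsMotion p (C.deleteIncidenceSet v) q) : moment p α (p a) q = 0 :=
  have hv : v ∈ supp C := mem_supp.2 ⟨a, mem_nbrs.1 ha⟩
  congrFun (h.eq_zero_of_isStrainSystem hv (h.isStrainSystem hv hα hne) hα.eq_zero_of_notMem hne
    (fun q => hα.sum_mul_moment q) ha) ⟨q, hq⟩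

end IsCounterexample

end VanishingMoments

section RowSums

open SimpleGraph

variable {W : Type*} [Fintype W] {C : SimpleGraph W} {p : W → Fin 3 → ℝ} {v : W} {α : W → ℝ}
  {ω : W → W → ℝ}

theorem exists_isStress_row_eq (hα : ∀ j ∉ nbrs C v, α j = 0)
    (hαv : ∑ j, α j • (p j - p v) = 0)
    (hmoment : ∀ q, IsMotion p (C.deleteIncidenceSet v) q → moment p α (p v) q = 0) :
    ∃ ω, IsStress p C ω ∧ ω v = α := by
  classical
  obtain ⟨c, hsymm, hc, hload⟩ := exists_load_eq (f := fun i => α i • (p i - p v)) fun q hq => by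
    simpa [moment, dotProduct_comm] using hmoment q hq
  have hαvv : α v = 0 := hα v (by simp [mem_nbrs])
  let star i j := (if i = v then α j else 0) + if j = v then α i else 0
  have hstar (i j) (hij : ¬ C.Adj i j) : star i j = 0 := by
    simp only [star]
    split_ifs with hi hj hj <;> subst_vars
    · simp [hαvv]
    · simpa using hα j fun h => hij (mem_nbrs.1 h)
    · simpa using hα i fun h => hij (mem_nbrs.1 h).symm
    · simp
  have hload_star : load p star = fun i => α i • (p i - p v) := by
    ext i k
    have hk : ∑ j, α j * (p v k - p j k) = 0 := by
      simpa [← sum_neg_distrib, ← mul_neg] using congrArg (-·) (congrFun hαv k)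
    by_cases hi : i = v
    · simp [load, star, hi, add_mul, sum_add_distrib, hk]
    · simp [load, star, hi]
  refine ⟨star - c, ⟨fun i j => ?_, fun i j hij => ?_, ?_⟩, ?_⟩
  · simp only [Pi.sub_apply, star, hsymm i j, add_comm]
  · simp [hstar i j hij, hc i j fun h => hij (deleteIncidenceSet_le _ _ h)]
  · rw [load_sub, hload_star, hload, sub_self]
  · ext j
    have hcv : c v j = 0 := hc v j fun h => ((deleteIncidenceSet_adj ..).1 h).2.1 rfl
    simp [star, hcv, hαvv]

theorem IsStress.sum_smul_row_eq_zero (hω : IsStress p C ω) (v : W) :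
    ∑ j, ω v j • (p j - p v) = 0 := by
  ext k
  simpa [load, ← sum_neg_distrib, ← mul_neg] using congrArg (-·) (congrFun₂ hω.load_eq_zero v k)

theorem IsCircuit.mul_eq_mul_of_row_eq {ω' : W → W → ℝ} {u : W} (hC : IsCircuit p C)
    (hω : IsStress p C ω) (hω' : IsStress p C ω') (huv : C.Adj v u) (j : W) :
    ω' v u * ω v j = ω v u * ω' v j := by
  have hzero := hC.stress_eq_zero ((hω.smul (ω' v u)).sub (hω'.smul (ω v u))) huv
    (by simp [mul_comm])
  simpa [sub_eq_zero] using congrFun₂ hzero v j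

theorem IsCounterexample.sum_eq_zero_of_isStress (h : IsCounterexample p C)
    (hω : IsStress p C ω) (v : W) : ∑ j, ω v j = 0 := by
  by_cases hv : v ∈ supp C
  swap
  · exact sum_eq_zero fun j _ => hω.eq_zero_of_not_adj v j fun hj => hv (mem_supp.2 ⟨j, hj⟩)
  by_contra hσ
  obtain ⟨α, hα, hne⟩ := h.generic.exists_affineDependence (h.card_nbrs hv)
  have hαv : ∑ j, α j • (p j - p v) = 0 := by
    simp [smul_sub, sum_sub_distrib, hα.sum_smul_eq_zero, ← sum_smul, hα.sum_eq_zero]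
  obtain ⟨ω', hω', hrow⟩ := exists_isStress_row_eq hα.eq_zero_of_notMem hαv fun q hq => by
    have hmul := sum_mul_moment (hω.sum_smul_row_eq_zero v) α q
    rw [sum_eq_zero fun a _ => ?_] at hmul
    · exact (mul_eq_zero.1 hmul.symm).resolve_left hσ
    · by_cases ha : a ∈ nbrs C v
      · rw [h.moment_eq_zero hα hne ha hq, mul_zero]
      · rw [hω.eq_zero_of_not_adj v a fun hva => ha (mem_nbrs.2 hva), zero_mul]
  obtain ⟨u, hu⟩ := mem_supp.1 hv
  have hsum : α u * ∑ j, ω v j = 0 := by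
    have hmul := h.isCircuit.mul_eq_mul_of_row_eq hω hω' hu
    simp only [hrow] at hmul
    rw [mul_sum, sum_congr rfl fun j _ => hmul j, ← mul_sum, hα.sum_eq_zero, mul_zero]
  exact hσ ((mul_eq_zero.1 hsum).resolve_left (hne u (mem_nbrs.2 hu)))

end RowSums

section Twins

open SimpleGraph

variable {W : Type*} [Fintype W] {C : SimpleGraph W} {p : W → Fin 3 → ℝ} {v w u y : W}

open Classical in
/-- The vertices other than `v` adjacent to all neighbours of `v`. -/
noncomputable def twins (C : SimpleGraph W) (v : W) : Finset W := {y | y ≠ v ∧ nbrs C v ⊆ nbrs C y}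

open Classical in
/-- The vertices other than `v` adjacent to all neighbours of `v`, except possibly to `u`. -/
noncomputable def nearTwins (C : SimpleGraph W) (v u : W) : Finset W :=
  {y | y ≠ v ∧ (nbrs C v).erase u ⊆ nbrs C y}

theorem mem_twins : y ∈ twins C v ↔ y ≠ v ∧ nbrs C v ⊆ nbrs C y := by simp [twins]

theorem mem_nearTwins [DecidableEq W] :
    y ∈ nearTwins C v u ↔ y ≠ v ∧ (nbrs C v).erase u ⊆ nbrs C y := by
  simp only [nearTwins, mem_filter_univ]
  congr!

theorem mem_twins_of_mem_nearTwins {u' : W} (huu' : u ≠ u') (hy : y ∈ nearTwins C v u)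
    (hy' : y ∈ nearTwins C v u') : y ∈ twins C v := by
  classical
  rw [mem_nearTwins] at hy hy'
  refine mem_twins.2 ⟨hy.1, fun j hj => ?_⟩
  by_cases hju : j = u
  · exact hy'.2 (mem_erase.2 ⟨hju ▸ huu', hj⟩)
  · exact hy.2 (mem_erase.2 ⟨hju, hj⟩)

theorem degIn_nbrs_of_mem_twins (hy : y ∈ twins C v) : degIn C (nbrs C v) y = #(nbrs C v) := by
  classical rw [degIn_eq_card_inter, inter_eq_left.2 (mem_twins.1 hy).2]

theorem card_nbrs_sub_one_le_degIn (hu : u ∈ nbrs C v) (hy : y ∈ nearTwins C v u) :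
    (#(nbrs C v) : ℤ) - 1 ≤ degIn C (nbrs C v) y := by
  classical
  rw [← cast_card_erase_of_mem hu]
  exact card_le_degIn (fun j hj => mem_nbrs.1 ((mem_nearTwins.1 hy).2 hj)) (erase_subset ..)

theorem sum_degIn_univ (F : SimpleGraph W) (X : Finset W) :
    ∑ y, degIn F X y = ∑ x ∈ X, (#(nbrs F x) : ℤ) := by
  classical
  have := sum_card_bipartiteAbove_eq_sum_card_bipartiteBelow F.Adj (s := univ) (t := X)
  simp only [degIn, nbrs]
  exact_mod_cast this.trans (sum_congr rfl fun x _ => by simp [bipartiteBelow, F.adj_comm])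

namespace IsCounterexample

theorem nbrs_eq_of_mem_twins (h : IsCounterexample p C) (hv : v ∈ supp C) (hy : y ∈ twins C v) :
    nbrs C y = nbrs C v :=
  (eq_of_subset_of_card_le (mem_twins.1 hy).2 (by rw [h.card_nbrs hv]; exact h.card_nbrs_le y)).symm

theorem nbrs_eq_of_forall_two_le (h : IsCounterexample p C)
    (htwins : ∀ z ∈ supp C, 2 ≤ #(twins C z)) (hw : C.Adj v w) (hu : C.Adj v u) :
    nbrs C u = nbrs C w := by
  classical
  by_contra hne
  have hsub {z y} (hz : C.Adj v z) (hy : y ∈ insert z (twins C z)) :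
      y ∈ nbrs C v ∧ nbrs C y = nbrs C z := by
    rcases mem_insert.1 hy with rfl | hy
    · exact ⟨mem_nbrs.2 hz, rfl⟩
    · have hv : v ∈ nbrs C y := (mem_twins.1 hy).2 (mem_nbrs.2 hz.symm)
      exact ⟨mem_nbrs.2 (mem_nbrs.1 hv).symm, h.nbrs_eq_of_mem_twins (mem_supp.2 ⟨v, hz.symm⟩) hy⟩
  have hcard {z} (hz : C.Adj v z) : 3 ≤ #(insert z (twins C z)) := by
    rw [card_insert_of_notMem fun hmem => (mem_twins.1 hmem).1 rfl]
    exact Nat.succ_le_succ (htwins z (mem_supp.2 ⟨v, hz.symm⟩))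
  have hdisj : Disjoint (insert u (twins C u)) (insert w (twins C w)) :=
    Finset.disjoint_left.2 fun y hyu hyw => hne ((hsub hu hyu).2.symm.trans (hsub hw hyw).2)
  have hle := card_le_card (union_subset (fun y hy => (hsub hu hy).1) fun y hy => (hsub hw hy).1)
  rw [card_union_of_disjoint hdisj, h.card_nbrs (mem_supp.2 ⟨w, hw⟩)] at hle
  linarith [hcard hu, hcard hw]

theorem exists_card_twins_le_one (h : IsCounterexample p C) :
    ∃ v ∈ supp C, #(twins C v) ≤ 1 := by
  classical
  by_contra! htwins
  obtain ⟨v, w, hvw⟩ := h.isCircuit.exists_adj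
  have hv : #(nbrs C v) = 5 := h.card_nbrs (mem_supp.2 ⟨w, hvw⟩)
  have hw : #(nbrs C w) = 5 := h.card_nbrs (mem_supp.2 ⟨v, hvw.symm⟩)
  have hnv {i : W} (hi : i ∈ nbrs C v) : nbrs C i = nbrs C w :=
    h.nbrs_eq_of_forall_two_le htwins hvw (mem_nbrs.1 hi)
  have hnw {i : W} (hi : i ∈ nbrs C w) : nbrs C i = nbrs C v :=
    h.nbrs_eq_of_forall_two_le htwins hvw.symm (mem_nbrs.1 hi)
  have hdisj : Disjoint (nbrs C v) (nbrs C w) := Finset.disjoint_left.2 fun i hiv hiw =>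
    C.irrefl (mem_nbrs.1 (hnv hiv ▸ hiw : i ∈ nbrs C i))
  have hcard : #(nbrs C v ∪ nbrs C w) = 10 := by rw [card_union_of_disjoint hdisj, hv, hw]
  have hdeg : ∀ i ∈ nbrs C v ∪ nbrs C w, degIn C (nbrs C v ∪ nbrs C w) i = 5 := fun i hi => by
    rw [degIn_eq_card_inter]
    rcases mem_union.1 hi with hi | hi
    · rw [hnv hi, inter_eq_right.2 subset_union_right, hw, Nat.cast_ofNat]
    · rw [hnw hi, inter_eq_right.2 subset_union_left, hv, Nat.cast_ofNat]
  have hdof := h.isSparse (nbrs C v ∪ nbrs C w) (by omega)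
  rw [dof, ← sum_degIn, sum_congr rfl hdeg, sum_const, hcard] at hdof
  norm_num at hdof

theorem sum_degIn_nbrs_le (h : IsCounterexample p C) (hv : v ∈ supp C) {D : Finset W}
    (hvD : v ∉ D) : ∑ y ∈ D, degIn C (nbrs C v) y ≤ 20 := by
  classical
  have hsum : ∑ y ∈ insert v D, degIn C (nbrs C v) y ≤ ∑ y, degIn C (nbrs C v) y :=
    sum_le_univ_sum_of_nonneg fun y => degIn_nonneg _ _ _
  have hnbrs : ∀ x ∈ nbrs C v, (#(nbrs C x) : ℤ) = 5 := fun x hx => by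
    rw [h.card_nbrs (mem_supp.2 ⟨v, (mem_nbrs.1 hx).symm⟩), Nat.cast_ofNat]
  rw [sum_insert hvD, sum_degIn_univ, sum_congr rfl hnbrs, sum_const, degIn_eq_card_inter,
    inter_self, h.card_nbrs hv] at hsum
  norm_num at hsum
  linarith

theorem sum_card_nearTwins_le [DecidableEq W] (h : IsCounterexample p C) (hv : v ∈ supp C) :
    4 * ∑ u ∈ nbrs C v, #(nearTwins C v u \ twins C v) + 5 * #(twins C v) ≤ 20 := by
  have hdisj : (nbrs C v : Set W).PairwiseDisjoint fun u => nearTwins C v u \ twins C v :=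
    fun u _ u' _ huu' => Finset.disjoint_left.2 fun y hy hy' => (mem_sdiff.1 hy).2
      (mem_twins_of_mem_nearTwins huu' (mem_sdiff.1 hy).1 (mem_sdiff.1 hy').1)
  let D := (nbrs C v).biUnion fun u => nearTwins C v u \ twins C v
  have hD : Disjoint D (twins C v) :=
    (disjoint_biUnion_left ..).2 fun u _ => sdiff_disjoint
  have hvD : v ∉ D ∪ twins C v := by
    simp [D, mem_nearTwins, mem_twins]
  have hsum := h.sum_degIn_nbrs_le hv hvD
  have htwins : ∀ y ∈ twins C v, degIn C (nbrs C v) y = 5 := fun y hy => by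
    rw [degIn_nbrs_of_mem_twins hy, h.card_nbrs hv, Nat.cast_ofNat]
  have hlow : #D • (4 : ℤ) ≤ ∑ y ∈ D, degIn C (nbrs C v) y := card_nsmul_le_sum _ _ _ fun y hy => by
    obtain ⟨u, hu, hyu⟩ := mem_biUnion.1 hy
    have := card_nbrs_sub_one_le_degIn hu (mem_sdiff.1 hyu).1
    rwa [h.card_nbrs hv] at this
  rw [sum_union hD, sum_congr rfl htwins, sum_const] at hsum
  rw [← card_biUnion hdisj]
  simp only [nsmul_eq_mul] at hlow hsum
  zify
  linarith

theorem exists_notMem_nearTwins (h : IsCounterexample p C) :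
    ∃ v, ∃ u ∈ nbrs C v, u ∉ nearTwins C v u ∧ #(nearTwins C v u) ≤ 1 := by
  classical
  obtain ⟨v, hv, hone⟩ := h.exists_card_twins_le_one
  refine ⟨v, ?_⟩
  have hN := h.card_nbrs hv
  have hle := h.sum_card_nearTwins_le hv
  by_cases hall : ∃ u ∈ nbrs C v, nearTwins C v u \ twins C v = ∅
  · obtain ⟨u, hu, hempty⟩ := hall
    have hsub : nearTwins C v u ⊆ twins C v := sdiff_eq_empty_iff_subset.1 hempty
    exact ⟨u, hu, fun hmem => C.irrefl (mem_nbrs.1 ((mem_twins.1 (hsub hmem)).2 hu)),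
      (card_le_card hsub).trans hone⟩
  push Not at hall
  have hpos : ∀ u ∈ nbrs C v, 1 ≤ #(nearTwins C v u \ twins C v) := fun u hu =>
    card_pos.2 (hall u hu)
  have hsum := card_nsmul_le_sum _ _ _ hpos
  rw [hN, smul_eq_mul] at hsum
  have htwins : twins C v = ∅ := card_eq_zero.1 (by omega)
  simp only [htwins, sdiff_empty, card_empty] at hle hpos
  obtain ⟨u, hu, hmem⟩ : ∃ u ∈ nbrs C v, u ∉ nearTwins C v u := by
    by_contra! hclique
    have := h.card_le_three_of_isClique hv subset_rfl fun a ha b hb hab =>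
      mem_nbrs.1 ((mem_nearTwins.1 (hclique a ha)).2 (mem_erase.2 ⟨hab.symm, hb⟩))
    omega
  refine ⟨u, hu, hmem, ?_⟩
  have hrest := card_nsmul_le_sum _ _ _ fun u' (hu' : u' ∈ (nbrs C v).erase u) =>
    hpos u' (mem_of_mem_erase hu')
  rw [card_erase_of_mem hu, hN] at hrest
  rw [← add_sum_erase _ _ hu] at hle
  simp only [smul_eq_mul] at hrest
  omega

theorem exists_nearTwins_subset (h : IsCounterexample p C) :
    ∃ v, ∃ u ∈ nbrs C v, ∃ x, x ≠ v ∧ x ≠ u ∧ u ∉ nearTwins C v u ∧ nearTwins C v u ⊆ {x} := by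
  classical
  obtain ⟨v, u, hu, hmem, hcard⟩ := h.exists_notMem_nearTwins
  refine ⟨v, u, hu, ?_⟩
  rcases (nearTwins C v u).eq_empty_or_nonempty with hempty | ⟨x, hx⟩
  · have hN := h.card_nbrs (mem_supp.2 ⟨u, mem_nbrs.1 hu⟩)
    obtain ⟨x, hx, hxu⟩ := exists_mem_ne (by omega : 1 < #(nbrs C v)) u
    exact ⟨x, (mem_nbrs.1 hx).ne', hxu, hmem, by simp [hempty]⟩
  · exact ⟨x, (mem_nearTwins.1 hx).1, ne_of_mem_of_not_mem hx hmem, hmem, fun y hy =>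
      mem_singleton.2 (card_le_one.1 hcard y hy x hx)⟩

end IsCounterexample

end Twins

section Centroids

open MvPolynomial

variable {W : Type*} [DecidableEq W] {p : W → Fin 3 → ℝ} {l u : W} {S T : Finset W} {μ : W → ℝ}

/-- The configuration obtained from `p` by moving the vertex `l` to the centroid of the vertices
in `T`. -/
noncomputable def moveToCentroid (p : W → Fin 3 → ℝ) (l : W) (T : Finset W) : W → Fin 3 → ℝ :=
  Function.update p l ((#T : ℝ)⁻¹ • ∑ j ∈ T, p j)

theorem moveToCentroid_of_ne {i : W} (hi : i ≠ l) : moveToCentroid p l T i = p i :=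
  Function.update_of_ne hi ..

theorem exists_moveToCentroid_eq (hTS : ¬ insert l T ⊆ S) (hS : l ∈ S)
    (b : W → Fin 3 → ℝ) : ∃ x : W → Fin 3 → ℝ, ∀ i ∈ S, moveToCentroid x l T i = b i := by
  obtain ⟨m, hmT, hmS⟩ : ∃ m ∈ T, m ∉ S := by
    simpa [insert_subset_iff, hS, not_subset] using hTS
  have hT : (#T : ℝ) ≠ 0 := Nat.cast_ne_zero.2 (card_ne_zero_of_mem hmT)
  refine ⟨Function.update b m ((#T : ℝ) • b l - ∑ j ∈ T.erase m, b j), fun i hi => ?_⟩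
  by_cases hil : i = l
  · rw [hil, moveToCentroid, Function.update_self, ← add_sum_erase _ _ hmT, Function.update_self,
      sum_congr rfl fun j hj => Function.update_of_ne (ne_of_mem_erase hj) .., sub_add_cancel,
      inv_smul_smul₀ hT]
  · rw [moveToCentroid_of_ne hil, Function.update_of_ne (ne_of_mem_of_not_mem hi hmS)]

theorem Generic.affineIndependent_moveToCentroid (hp : Generic p) (hS : #S ≤ 4)
    (hTS : ¬ insert l T ⊆ S) : AffineIndependent ℝ fun i : S => moveToCentroid p l T i := by
  by_cases hlS : l ∈ S
  swap
  · have hcongr : (fun i : S => moveToCentroid p l T i) = fun i : S => p i :=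
      funext fun i => moveToCentroid_of_ne (ne_of_mem_of_not_mem i.2 hlS)
    exact hcongr ▸ hp.affineIndependent hS
  let P (i : W) (k : Fin 3) : MvPolynomial (W × Fin 3) ℚ :=
    if i = l then C (#T : ℚ)⁻¹ * ∑ j ∈ T, X (j, k) else X (i, k)
  have haeval (x : W → Fin 3 → ℝ) (i : W) (k : Fin 3) :
      aeval (fun y : W × Fin 3 => x y.1 y.2) (P i k) = moveToCentroid x l T i k := by
    by_cases hi : i = l
    · simp [P, hi, moveToCentroid]
    · simp [P, hi, moveToCentroid_of_ne]
  obtain ⟨x, hx⟩ := exists_moveToCentroid_eq hTS hlS p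
  have hind : AffineIndependent ℝ fun (i : S) k =>
      aeval (fun y : W × Fin 3 => x y.1 y.2) (P i k) := by
    simpa only [haeval, hx _ (coe_mem _)] using hp.affineIndependent hS
  simpa only [haeval] using affineIndependent_of_algebraicIndependent (fun (i : S) => P i) hp hind

variable [Fintype W]

theorem AffineDependence.of_moveToCentroid (hl : l ∉ T) (hT : T.Nonempty) (hTS : T ⊆ S)
    (hμ : AffineDependence (moveToCentroid p l T) (insert l S) μ) :
    AffineDependence p S
      (μ - Pi.single l (μ l) + fun i => if i ∈ T then (#T : ℝ)⁻¹ * μ l else 0) where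
  eq_zero_of_notMem i hi := by
    by_cases hil : i = l
    · simp [hil, hl]
    · have hiT : i ∉ T := fun h => hi (hTS h)
      simp [hμ.eq_zero_of_notMem i (by simp [hil, hi]), hil, hiT]
  sum_eq_zero := by
    simp [sum_add_distrib, hμ.sum_eq_zero, hT.ne_empty]
  sum_smul_eq_zero := by
    have hterm (i : W) : moveToCentroid p l T i =
        p i + if i = l then (#T : ℝ)⁻¹ • ∑ j ∈ T, p j - p l else 0 := by
      by_cases hi : i = l
      · simp [hi, moveToCentroid]
      · simp [hi, moveToCentroid_of_ne]
    have hsum := hμ.sum_smul_eq_zero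
    simp only [hterm, smul_add, smul_ite, smul_zero, sum_add_distrib, sum_ite_eq', mem_univ,
      if_true] at hsum
    simp only [Pi.add_apply, Pi.sub_apply, add_smul, _root_.sub_smul, sum_add_distrib,
      sum_sub_distrib, Pi.single_apply, ite_smul, zero_smul, sum_ite_eq', mem_univ, if_true,
      sum_ite_mem, univ_inter, ← smul_sum, mul_smul]
    rw [← hsum]
    module

end Centroids

section Contradiction

open SimpleGraph

variable {W : Type*} [Fintype W] {C : SimpleGraph W} {p : W → Fin 3 → ℝ} {u v x : W}
  {ω : W → W → ℝ}

theorem IsStress.affineDependence (hω : IsStress p C ω) {i : W} (hsum : ∑ j, ω i j = 0) :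
    AffineDependence p (nbrs C i) (ω i) where
  eq_zero_of_notMem j hj := hω.eq_zero_of_not_adj i j fun hij => hj (mem_nbrs.2 hij)
  sum_eq_zero := hsum
  sum_smul_eq_zero := by
    have := hω.sum_smul_row_eq_zero i
    simpa [smul_sub, sum_sub_distrib, ← sum_smul, hsum] using this

theorem IsStress.eq_zero_of_rows (hω : IsStress p C ω) (hsum : ∑ j, ω v j = 0)
    (hrow : ∀ z, z ≠ v → z ≠ x → ω z = 0) : ω = 0 := by
  have hv : ω v = 0 := by
    have hne (j : W) (hj : j ≠ x) : ω v j = 0 := by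
      by_cases hjv : j = v
      · exact hjv ▸ hω.eq_zero_of_not_adj v v C.irrefl
      · rw [hω.symm, hrow j hjv hj, Pi.zero_apply]
    ext j
    by_cases hj : j = x
    · rwa [Fintype.sum_eq_single x hne, ← hj] at hsum
    · exact hne j hj
  have hrow' (z : W) (hz : z ≠ x) : ω z = 0 := by
    by_cases hzv : z = v
    · rw [hzv, hv]
    · exact hrow z hzv hz
  ext i j
  by_cases hi : i = x
  · by_cases hj : j = x
    · exact hi ▸ hj ▸ hω.eq_zero_of_not_adj x x C.irrefl
    · rw [hω.symm, hrow' j hj, Pi.zero_apply, Pi.zero_apply, Pi.zero_apply]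
  · rw [hrow' i hi, Pi.zero_apply, Pi.zero_apply, Pi.zero_apply]

namespace IsCounterexample

theorem row_eq_zero_of_forall_adj (h : IsCounterexample p C) {q : W → Fin 3 → ℝ}
    (hω : IsStress q C ω) (hxv : x ≠ v) (hu : u ∈ supp C) (huv : u ≠ v) (hux : u ≠ x)
    (hωu : ω u = 0)
    (hstep : ∀ z b, C.Adj z b → ω z = 0 → b ≠ v → b ≠ x → ω b = 0) (z : W) (hzv : z ≠ v)
    (hzx : z ≠ x) : ω z = 0 := by
  classical
  by_contra hz
  have hzsupp : z ∈ supp C := by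
    by_contra hz'
    exact hz (funext fun j => hω.eq_zero_of_not_adj z j fun hj => hz' (mem_supp.2 ⟨j, hj⟩))
  let S : Finset W := {i | ω i = 0 ∧ i ≠ v ∧ i ≠ x}
  refine h.isCircuit.false_of_two_separation h.generic hxv (h.card_nbrs_le x) (S := S) (s := u)
    (by simp [S]) (by simp [S]) (fun i hi j hij => ?_) (by simp [S, hωu, huv, hux]) hu
    (by simp [S, hz]) hzsupp hzx hzv
  by_cases hjx : j = x
  · exact .inr (.inl hjx)
  by_cases hjv : j = v
  · exact .inr (.inr hjv)
  exact .inl (by simp [S, hstep i j hij (mem_filter.1 hi).2.1 hjv hjx, hjv, hjx])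

/- The dependence between `l` and `T` accounts for the whole row of `v`, so its entry at the fifth
neighbour `u` vanishes. A row elsewhere then vanishes with any of its entries, since four of the
moved points are affinely dependent only if they are `l` and `T`. -/
theorem stress_moveToCentroid_eq_zero [DecidableEq W] (h : IsCounterexample p C) {l : W}
    {T : Finset W} (hu : u ∈ nbrs C v) (hl : l ∉ T) (hT : insert l T = (nbrs C v).erase u)
    (hxv : x ≠ v) (hxu : x ≠ u) (hun : u ∉ nearTwins C v u) (hnear : nearTwins C v u ⊆ {x})
    (hω : IsStress (moveToCentroid p l T) C ω) (hsum : ∀ i, ∑ j, ω i j = 0) : ω = 0 := by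
  have hvu : C.Adj v u := mem_nbrs.1 hu
  have hN : insert l (insert u T) = nbrs C v := by rw [insert_comm, hT, insert_erase hu]
  have huT : u ≠ l ∧ u ∉ T := by
    have : u ∉ insert l T := hT ▸ notMem_erase u _
    simpa only [mem_insert, not_or] using this
  have hTcard : #T = 3 := by
    have := congrArg card hT
    rw [card_insert_of_notMem hl, card_erase_of_mem hu, h.card_nbrs (mem_supp.2 ⟨u, hvu⟩)] at this
    omega
  have hstep {z b : W} (hzb : C.Adj z b) (hω₀ : ω z b = 0) (hb : b ≠ v)
      (hbn : b ∉ nearTwins C v u) : ω b = 0 := by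
    have hdep := (hω.affineDependence (hsum b)).erase (i := z) (by rw [hω.symm, hω₀])
    refine hdep.eq_zero_of_affineIndependent (h.generic.affineIndependent_moveToCentroid ?_ ?_)
    · rw [card_erase_of_mem (mem_nbrs.2 hzb.symm), h.card_nbrs (mem_supp.2 ⟨z, hzb.symm⟩)]
    · exact fun hsub => hbn (mem_nearTwins.2 ⟨hb, hT ▸ hsub.trans (erase_subset ..)⟩)
  have hωvu : ω v u = 0 := by
    have hdep := AffineDependence.of_moveToCentroid hl (card_pos.1 (by omega)) (subset_insert u T)
      (hN.symm ▸ hω.affineDependence (hsum v))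
    have hzero := hdep.eq_zero h.generic ((card_insert_le ..).trans (by omega))
    simpa [huT] using congrFun hzero u
  have hωu : ω u = 0 := hstep hvu hωvu hvu.ne' hun
  exact hω.eq_zero_of_rows (hsum v) <| h.row_eq_zero_of_forall_adj hω hxv
    (mem_supp.2 ⟨v, hvu.symm⟩) hvu.ne' hxu.symm hωu fun z b hzb hz hbv hbx =>
      hstep hzb (by simp [hz]) hbv fun hb => hbx (mem_singleton.1 (hnear hb))

theorem false (h : IsCounterexample p C) : False := by
  classical
  obtain ⟨v, u, hu, x, hxv, hxu, hun, hnear⟩ := h.exists_nearTwins_subset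
  obtain ⟨l, hl, hlu⟩ := exists_mem_ne (s := nbrs C v)
    (by rw [h.card_nbrs (mem_supp.2 ⟨u, mem_nbrs.1 hu⟩)]; norm_num) u
  exact h.isCircuit.prop fun ω hω => h.generic.eq_zero_of_isStress_of_sum_eq_zero
    (fun ω' hω' => h.stress_moveToCentroid_eq_zero hu (notMem_erase l _)
      (insert_erase (mem_erase.2 ⟨hlu, hl⟩)) hxv hxu hun hnear hω')
    hω fun i => h.sum_eq_zero_of_isStress hω i

end IsCounterexample

end Contradiction

section Independence

open SimpleGraph

variable {W : Type*} {G : SimpleGraph W} [DecidableRel G.Adj] {p : W → Fin 3 → ℝ}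

theorem sparse3_iff_isSparse : Sparse3 G ↔ IsSparse G := by
  refine forall_congr' fun X => imp_congr_right fun _ => ?_
  obtain ⟨k, hk⟩ := even_dof G X
  have harcs : #(arcsIn G X) = #{e ∈ X ×ˢ X | G.Adj e.1 e.2} := by
    congr 1
    ext e
    simp [mem_arcsIn]
  rw [dof, harcs] at hk ⊢
  rw [edgesWithin]
  omega

variable [DecidableEq W]

theorem sparse3_of_linearIndependent_rigidityRow [Finite W] (hp : Generic p)
    (hG : LinearIndependent ℝ fun e : G.edgeSet => rigidityRow p e.1) : Sparse3 G := by
  have := Fintype.ofFinite W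
  exact sparse3_iff_isSparse.2 ((stressFree_iff_linearIndependent.2 hG).isSparse hp)

theorem Sparse3.linearIndependent_rigidityRow [Fintype W] (hs : Sparse3 G)
    (hdeg : ∀ v, G.degree v ≤ 5) (hp : Generic p) :
    LinearIndependent ℝ fun e : G.edgeSet => rigidityRow p e.1 := by
  rw [← stressFree_iff_linearIndependent]
  by_contra hG
  obtain ⟨C, hCG, hC⟩ := exists_isCircuit_le hG
  refine IsCounterexample.false (p := p) (C := C)
    ⟨hp, hC, (sparse3_iff_isSparse.1 hs).mono hCG, fun i => ?_⟩
  have hnbrs : nbrs G i = G.neighborFinset i := by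
    ext j
    simp [mem_nbrs]
  exact (card_le_card (nbrs_subset_nbrs hCG i)).trans (by simpa [hnbrs] using hdeg i)

end Independence

theorem stmt19_general (G : SimpleGraph V) [DecidableRel G.Adj]
    (hdeg : ∀ v, G.degree v ≤ 5) :
    ((∀ p : V → Fin 3 → ℝ,
        AlgebraicIndependent ℚ (fun x : V × Fin 3 => p x.1 x.2) →
        LinearIndependent ℝ (fun e : G.edgeSet => rigidityRow p e.1)) ↔ Sparse3 G)
    ∧ (∀ p : V → Fin 3 → ℝ,
        AlgebraicIndependent ℚ (fun x : V × Fin 3 => p x.1 x.2) →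
        Sparse3 G →
        Module.finrank ℝ
          (Submodule.span ℝ (Set.range fun e : G.edgeSet => rigidityRow p e.1))
          = G.edgeFinset.card) := by
  refine ⟨⟨fun hind => ?_, fun hs p hp => hs.linearIndependent_rigidityRow hdeg hp⟩,
    fun p hp hs => ?_⟩
  · obtain ⟨p, hp⟩ := exists_generic V
    exact sparse3_of_linearIndependent_rigidityRow hp (hind p hp)
  · rw [finrank_span_eq_card (hs.linearIndependent_rigidityRow hdeg hp), SimpleGraph.edgeFinset,
      Set.toFinset_card]

theorem stmt19 (G : SimpleGraph V) [DecidableRel G.Adj]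
    (hreg : ∀ v, G.degree v = 5) :
    ((∀ p : V → Fin 3 → ℝ,
        AlgebraicIndependent ℚ (fun x : V × Fin 3 => p x.1 x.2) →
        LinearIndependent ℝ (fun e : G.edgeSet => rigidityRow p e.1)) ↔ Sparse3 G)
    ∧ (∀ p : V → Fin 3 → ℝ,
        AlgebraicIndependent ℚ (fun x : V × Fin 3 => p x.1 x.2) →
        Sparse3 G →
        Module.finrank ℝ
          (Submodule.span ℝ (Set.range fun e : G.edgeSet => rigidityRow p e.1))
          = G.edgeFinset.card) :=
  stmt19_general G fun v => (hreg v).le
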